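/- arXiv:1208.2210 — 4 statements merged into one kernel-verified Lean document; each statement's English description precedes it below -/
import Mathlib

section
/- The function G(q) = (∑_{n=0}^∞ PD(3n) q^n) · (q; q^6)_∞^5 (q^3; q^6)_∞^2 (q^5; q^6)_∞^5, defined for complex q with |q| < 1, is an even function of q; that is, G(q) = G(−q) for all |q| < 1. (Equivalently, the generating function of PD(3n) equals 1/((q; q^6)_∞^5 (q^3; q^6)_∞^2 (q^5; q^6)_∞^5) times a power series in q^2.) -/
open Finset

/-- The number of partitions of `n` with designated summands. -/
def PD (n : ℕ) : ℕ :=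
  ∑ p : Nat.Partition n, ∏ k ∈ p.parts.toFinset, p.parts.count k

/-- The q-shifted factorial `(a; q)_∞ = ∏_{n=0}^∞ (1 - a qⁿ)`. -/
noncomputable def qPoch (a q : ℂ) : ℂ := ∏' n : ℕ, (1 - a * q ^ n)

/-- `G(q) = (∑_{n≥0} PD(3n) qⁿ) · (q; q⁶)_∞⁵ (q³; q⁶)_∞² (q⁵; q⁶)_∞⁵`. -/
noncomputable def G (q : ℂ) : ℂ :=
  (∑' n : ℕ, (PD (3 * n) : ℂ) * q ^ n) *
    (qPoch q (q ^ 6) ^ 5 * qPoch (q ^ 3) (q ^ 6) ^ 2 * qPoch (q ^ 5) (q ^ 6) ^ 5)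

namespace GEven

lemma summ_qPoch (a : ℂ) {q : ℂ} (hq : ‖q‖ < 1) : Summable fun n : ℕ => ‖-(a * q ^ n)‖ := by
  simpa using (summable_geometric_of_lt_one (norm_nonneg _) hq).mul_left ‖a‖

lemma mult_qPoch (a : ℂ) {q : ℂ} (hq : ‖q‖ < 1) : Multipliable fun n : ℕ => (1 - a * q ^ n) := by
  simpa [sub_eq_add_neg] using multipliable_one_add_of_summable (summ_qPoch a hq)

lemma tendsto_qPoch (a : ℂ) {q : ℂ} (hq : ‖q‖ < 1) :
    Filter.Tendsto (fun N : ℕ => ∏ n ∈ range N, (1 - a * q ^ n)) Filter.atTop (nhds (qPoch a q)) :=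
  (mult_qPoch a hq).hasProd.tendsto_prod_nat

lemma pow_lt {q : ℂ} (hq : ‖q‖ < 1) {k : ℕ} (hk : k ≠ 0) : ‖q ^ k‖ < 1 := by
  rw [norm_pow]; exact pow_lt_one₀ (norm_nonneg _) hq hk

lemma qPoch_ne_zero {a q : ℂ} (hq : ‖q‖ < 1) (ha : ‖a‖ < 1) : qPoch a q ≠ 0 := by
  have h : ∏' n : ℕ, (1 + -(a * q ^ n)) ≠ 0 := by
    refine tprod_one_add_ne_zero_of_summable (f := fun n : ℕ => -(a * q ^ n)) ?_ (summ_qPoch a hq)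
    intro n h
    have h1 : a * q ^ n = 1 := by linear_combination -h
    have h2 : ‖a * q ^ n‖ = 1 := by rw [h1]; simp
    rw [norm_mul, norm_pow] at h2
    have : ‖q‖ ^ n ≤ 1 := pow_le_one₀ (norm_nonneg _) hq.le
    nlinarith [norm_nonneg a, norm_nonneg q]
  simpa [qPoch, sub_eq_add_neg] using h

lemma qPoch_split (d : ℕ) (hd : d ≠ 0) (a : ℂ) {q : ℂ} (hq : ‖q‖ < 1) :
    qPoch a q = ∏ j ∈ range d, qPoch (a * q ^ j) (q ^ d) := by
  have h1 := (tendsto_qPoch a hq).comp (Filter.tendsto_id.nsmul_atTop (pos_iff_ne_zero.2 hd))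
  have h2 := tendsto_finsetProd (range d)
    (fun j _ => tendsto_qPoch (a * q ^ j) (pow_lt hq hd))
  refine tendsto_nhds_unique h1 (h2.congr ?_)
  intro N
  simp only [Function.comp, id, smul_eq_mul]
  rw [prod_comm]
  induction N with
  | zero => simp
  | succ N ih =>
    rw [prod_range_succ, ih, Nat.mul_succ, prod_range_add]
    congr 1
    refine prod_congr rfl fun j _ => ?_
    ring

lemma qPoch_split2 (a : ℂ) {q : ℂ} (hq : ‖q‖ < 1) :
    qPoch a q = qPoch a (q ^ 2) * qPoch (a * q) (q ^ 2) := by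
  rw [qPoch_split 2 (by norm_num) a hq]; simp [prod_range_succ]

lemma qPoch_split3 (a : ℂ) {q : ℂ} (hq : ‖q‖ < 1) :
    qPoch a q = qPoch a (q ^ 3) * qPoch (a * q) (q ^ 3) * qPoch (a * q ^ 2) (q ^ 3) := by
  rw [qPoch_split 3 (by norm_num) a hq]; simp [prod_range_succ]

lemma qPoch_neg (a : ℂ) {q : ℂ} (hq : ‖q‖ < 1) :
    qPoch a q * qPoch (-a) q = qPoch (a ^ 2) (q ^ 2) := by
  refine tendsto_nhds_unique ((tendsto_qPoch a hq).mul (tendsto_qPoch (-a) hq))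
    ((tendsto_qPoch (a ^ 2) (pow_lt hq two_ne_zero)).congr fun N => ?_)
  rw [← prod_mul_distrib]
  refine prod_congr rfl fun j _ => ?_
  ring

lemma qPoch_omega {w : ℂ} (hw : w ^ 2 + w + 1 = 0) (a : ℂ) {q : ℂ} (hq : ‖q‖ < 1) :
    qPoch a q * qPoch (w * a) q * qPoch (w ^ 2 * a) q = qPoch (a ^ 3) (q ^ 3) := by
  refine tendsto_nhds_unique (((tendsto_qPoch a hq).mul (tendsto_qPoch (w * a) hq)).mul
      (tendsto_qPoch (w ^ 2 * a) hq))
    ((tendsto_qPoch (a ^ 3) (pow_lt hq three_ne_zero)).congr fun N => ?_)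
  rw [← prod_mul_distrib, ← prod_mul_distrib]
  refine prod_congr rfl fun j _ => ?_
  have h : 1 - a ^ 3 * (q ^ 3) ^ j = 1 - (a * q ^ j) ^ 3 := by ring
  rw [h]
  have h3 : w ^ 3 = 1 := by linear_combination (w - 1) * hw
  rw [show w * a * q ^ j = w * (a * q ^ j) by ring, show w ^ 2 * a * q ^ j = w ^ 2 * (a * q ^ j) by ring]
  generalize a * q ^ j = x
  linear_combination (x - x ^ 2 * w) * hw + x ^ 3 * h3

/-- The Euler product. -/
noncomputable def E (q : ℂ) : ℂ := qPoch q q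

lemma E_ne_zero {q : ℂ} (hq : ‖q‖ < 1) : E q ≠ 0 := qPoch_ne_zero hq hq

lemma odd_E {q : ℂ} (hq : ‖q‖ < 1) : qPoch q (q ^ 2) * E (q ^ 2) = E q := by
  rw [E, E, qPoch_split2 q hq]; ring_nf

lemma third_E {q : ℂ} (hq : ‖q‖ < 1) :
    qPoch q (q ^ 3) * qPoch (q ^ 2) (q ^ 3) * E (q ^ 3) = E q := by
  rw [E, E, qPoch_split3 q hq]; ring_nf

lemma neg_E {q : ℂ} (hq : ‖q‖ < 1) : qPoch (-q) q * E q = E (q ^ 2) := by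
  rw [E, E, mul_comm, qPoch_neg q hq]

lemma E_neg {q : ℂ} (hq : ‖q‖ < 1) : E (-q) * E q * E (q ^ 4) = E (q ^ 2) ^ 3 := by
  have h1 := odd_E hq
  have h2 := odd_E (q := -q) (by simpa using hq)
  have h3 := odd_E (q := q ^ 2) (pow_lt hq two_ne_zero)
  have h4 := qPoch_neg q (q := q ^ 2) (pow_lt hq two_ne_zero)
  rw [neg_sq] at h2
  rw [← pow_mul] at h3 h4
  rw [← h2, ← h1]
  norm_num at h3 h4
  linear_combination E (q ^ 2) ^ 2 * h3 + E (q ^ 2) ^ 2 * E (q ^ 4) * h4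

lemma E_omega {w : ℂ} (hw : w ^ 2 + w + 1 = 0) {q : ℂ} (hq : ‖q‖ < 1) :
    E q * E (w * q) * E (w ^ 2 * q) * E (q ^ 9) = E (q ^ 3) ^ 4 := by
  have h3 : w ^ 3 = 1 := by linear_combination (w - 1) * hw
  have hwn : ‖w‖ = 1 := by
    have : ‖w‖ ^ 3 = 1 := by rw [← norm_pow, h3]; simp
    exact (pow_eq_one_iff_of_nonneg (norm_nonneg _) three_ne_zero).1 this
  have hq3 := pow_lt hq three_ne_zero
  have e1 := third_E hq
  have e2 := third_E (q := w * q) (by simpa [hwn] using hq)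
  have e3 := third_E (q := w ^ 2 * q) (by simpa [hwn] using hq)
  have e4 := third_E hq3
  have o1 := qPoch_omega hw q hq3
  have o2 := qPoch_omega hw (q ^ 2) hq3
  rw [show (w * q) ^ 3 = q ^ 3 by rw [mul_pow, h3, one_mul],
    show (w * q) ^ 2 = w ^ 2 * q ^ 2 by ring] at e2
  rw [show (w ^ 2 * q) ^ 3 = q ^ 3 by linear_combination (w ^ 3 + 1) * q ^ 3 * h3,
    show (w ^ 2 * q) ^ 2 = w * q ^ 2 by linear_combination w * q ^ 2 * h3] at e3
  rw [← e1, ← e2, ← e3]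
  simp only [← pow_mul] at e4 o1 o2
  norm_num at e4 o1 o2
  rw [← o1, ← o2] at e4
  linear_combination E (q ^ 3) ^ 3 * e4

/-- Gaussian binomial coefficients. -/
noncomputable def gb (p : ℂ) : ℕ → ℕ → ℂ
  | _, 0 => 1
  | 0, _ + 1 => 0
  | N + 1, j + 1 => gb p N j + p ^ (j + 1) * gb p N (j + 1)

lemma gb_zero (p : ℂ) (N : ℕ) : gb p N 0 = 1 := by cases N <;> simp [gb]

lemma gb_gt (p : ℂ) (N : ℕ) : ∀ j, N < j → gb p N j = 0 := by
  induction N with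
  | zero => intro j hj; cases j with
    | zero => omega
    | succ j => simp [gb]
  | succ N ih => intro j hj; cases j with
    | zero => omega
    | succ j => simp [gb, ih j (by omega), ih (j + 1) (by omega)]

lemma qbinom (p : ℂ) (N : ℕ) : ∀ x : ℂ, ∏ k ∈ range N, (1 + x * p ^ k) =
    ∑ j ∈ range (N + 1), gb p N j * p ^ (j.choose 2) * x ^ j := by
  induction N with
  | zero => intro x; simp [gb]
  | succ N ih =>
    intro x
    rw [prod_range_succ']
    have h1 : ∏ k ∈ range N, (1 + x * p ^ (k + 1)) = ∏ k ∈ range N, (1 + (x * p) * p ^ k) :=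
      prod_congr rfl fun k _ => by ring
    rw [h1, ih, sum_range_succ' _ (N + 1)]
    have h2 : ∑ k ∈ range (N + 1), gb p (N + 1) (k + 1) * p ^ ((k + 1).choose 2) * x ^ (k + 1)
      = x * ∑ j ∈ range (N + 1), gb p N j * p ^ (j.choose 2) * (x * p) ^ j
        + ∑ j ∈ range (N + 1), gb p N (j + 1) * p ^ ((j + 1).choose 2) * (x * p) ^ (j + 1) := by
      rw [mul_sum, ← sum_add_distrib]
      refine sum_congr rfl fun j _ => ?_
      have : (j + 1).choose 2 = j + j.choose 2 := by simp [Nat.choose_succ_succ' j 1]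
      rw [this, gb]
      ring
    have h3 := sum_range_succ' (fun j => gb p N j * p ^ (j.choose 2) * (x * p) ^ j) (N + 1)
    rw [sum_range_succ, gb_gt p N (N + 1) (by omega)] at h3
    simp only [gb_zero, Nat.choose_zero_succ, pow_zero, mul_one, zero_mul, add_zero] at h3
    rw [h2]
    simp only [gb_zero, Nat.choose_zero_succ, pow_zero, mul_one]
    linear_combination h3

lemma gb_formula (p : ℂ) : ∀ n a b : ℕ, a + b = n →
    gb p n a * (∏ i ∈ range a, (1 - p * p ^ i)) * (∏ i ∈ range b, (1 - p * p ^ i)) =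
    ∏ i ∈ range n, (1 - p * p ^ i) := by
  intro n
  induction n with
  | zero => intro a b h; obtain ⟨rfl, rfl⟩ : a = 0 ∧ b = 0 := by omega
            simp [gb]
  | succ n ih =>
    intro a b h
    cases a with
    | zero => obtain rfl : b = n + 1 := by omega
              simp [gb]
    | succ a =>
      have e1 := ih a b (by omega)
      rw [gb, prod_range_succ _ a, prod_range_succ _ n]
      cases b with
      | zero =>
        obtain rfl : a = n := by omega
        rw [gb_gt p a (a + 1) (by omega)]
        linear_combination (1 - p * p ^ a) * e1
      | succ b =>
        have e2 := ih (a + 1) b (by omega)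
        rw [prod_range_succ _ a] at e2
        rw [prod_range_succ _ b] at e1 ⊢
        obtain rfl : n = a + b + 1 := by omega
        linear_combination (1 - p ^ (a + 1)) * e1 + p ^ (a + 1) * (1 - p ^ (b + 1)) * e2

lemma choose_two_int (k : ℕ) : 2 * ((k.choose 2 : ℕ) : ℤ) = k * (k - 1) := by
  induction k with
  | zero => simp
  | succ k ih =>
    have : (k + 1).choose 2 = k + k.choose 2 := by simp [Nat.choose_succ_succ' k 1]
    rw [this]; push_cast; linarith

lemma finite_jtp_aux {q z : ℂ} (hq : q ≠ 0) (n : ℕ) :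
    ∏ k ∈ range n, (z * q ^ (-1 - 2 * (k : ℤ))) = z ^ n * q ^ (-(n : ℤ) ^ 2) := by
  induction n with
  | zero => simp
  | succ n ih =>
    rw [prod_range_succ, ih]
    have : (-((n + 1 : ℕ) : ℤ) ^ 2) = -(n : ℤ) ^ 2 + (-1 - 2 * (n : ℤ)) := by push_cast; ring
    rw [this, zpow_add₀ hq]; ring

lemma finite_jtp {q z : ℂ} (hq : q ≠ 0) (hz : z ≠ 0) (n : ℕ) :
    (∏ k ∈ range n, (1 - (-(z * q)) * (q ^ 2) ^ k)) * (∏ k ∈ range n, (1 - (-(q / z)) * (q ^ 2) ^ k))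
    = ∑ k ∈ range (2 * n + 1), gb (q ^ 2) (2 * n) k *
        (q ^ (((k : ℤ) - n) ^ 2) * z ^ ((k : ℤ) - n)) := by
  have h := qbinom (q ^ 2) (2 * n) (z * q ^ (1 - 2 * (n : ℤ)))
  have hc : z ^ n * q ^ (-(n : ℤ) ^ 2) ≠ 0 := mul_ne_zero (pow_ne_zero _ hz) (zpow_ne_zero _ hq)
  apply mul_left_cancel₀ hc
  rw [two_mul, prod_range_add, ← two_mul] at h
  have h1 : ∏ k ∈ range n, (1 + z * q ^ (1 - 2 * (n : ℤ)) * (q ^ 2) ^ k) =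
      z ^ n * q ^ (-(n : ℤ) ^ 2) * (∏ k ∈ range n, (1 - (-(q / z)) * (q ^ 2) ^ k)) := by
    rw [← finite_jtp_aux hq, ← prod_mul_distrib, ← prod_range_reflect]
    refine prod_congr rfl fun k hk => ?_
    have hk' : k < n := mem_range.1 hk
    have e1 : q ^ (1 - 2 * (n : ℤ)) * (q ^ 2) ^ (n - 1 - k) = q ^ (-1 - 2 * (k : ℤ)) := by
      rw [← pow_mul, ← zpow_natCast, ← zpow_add₀ hq]
      congr 1
      zify [show k ≤ n - 1 by omega, show 1 ≤ n by omega]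
      ring
    have e2 : q ^ (-1 - 2 * (k : ℤ)) * (q * (q ^ 2) ^ k) = 1 := by
      rw [← pow_mul, ← pow_succ', ← zpow_natCast, ← zpow_add₀ hq]
      have : (-1 - 2 * (k : ℤ) + ((2 * k + 1 : ℕ) : ℤ)) = 0 := by push_cast; ring
      rw [this, zpow_zero]
    rw [mul_assoc, e1]
    have : z * q ^ (-1 - 2 * (k : ℤ)) * (1 - (-(q / z)) * (q ^ 2) ^ k)
      = z * q ^ (-1 - 2 * (k : ℤ)) + (z * z⁻¹) * (q ^ (-1 - 2 * (k : ℤ)) * (q * (q ^ 2) ^ k)) := by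
      ring
    rw [this, e2, mul_inv_cancel₀ hz]; ring
  have h2 : ∏ k ∈ range n, (1 + z * q ^ (1 - 2 * (n : ℤ)) * (q ^ 2) ^ (n + k)) =
      ∏ k ∈ range n, (1 - (-(z * q)) * (q ^ 2) ^ k) := by
    refine prod_congr rfl fun k hk => ?_
    have e1 : q ^ (1 - 2 * (n : ℤ)) * (q ^ 2) ^ (n + k) = q * (q ^ 2) ^ k := by
      rw [← pow_mul, ← pow_mul, ← pow_succ', ← zpow_natCast, ← zpow_natCast, ← zpow_add₀ hq]
      congr 1
      push_cast
      ring
    rw [mul_assoc, e1]; ring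
  rw [h1, h2] at h
  rw [mul_comm (∏ k ∈ range n, (1 - (-(z * q)) * (q ^ 2) ^ k)), ← mul_assoc, h, mul_sum]
  refine sum_congr rfl fun k hk => ?_
  have e1 : (q ^ 2) ^ (k.choose 2) = q ^ ((k : ℤ) * (k - 1)) := by
    rw [← pow_mul, ← zpow_natCast, ← choose_two_int]; push_cast; rfl
  have e2 : (q ^ (1 - 2 * (n : ℤ))) ^ k = q ^ ((1 - 2 * (n : ℤ)) * k) := by
    rw [zpow_mul, zpow_natCast]
  have e3 : z ^ ((k : ℤ) - n) = z ^ k / z ^ n := by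
    rw [zpow_sub₀ hz, zpow_natCast, zpow_natCast]
  have e4 : q ^ ((k : ℤ) * (k - 1)) * q ^ ((1 - 2 * (n : ℤ)) * k)
      = q ^ (-(n : ℤ) ^ 2) * q ^ (((k : ℤ) - n) ^ 2) := by
    rw [← zpow_add₀ hq, ← zpow_add₀ hq]; congr 1; ring
  rw [e1, mul_pow, e2, e3]
  have : z ^ n ≠ 0 := pow_ne_zero _ hz
  field_simp
  linear_combination gb (q ^ 2) (2 * n) k * e4

lemma summable_theta_nat {r s : ℝ} (hr0 : 0 ≤ r) (hr : r < 1) (hs : 0 ≤ s) :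
    Summable fun n : ℕ => r ^ (n ^ 2) * s ^ n := by
  have h1 : Filter.Tendsto (fun n : ℕ => r ^ n * s) Filter.atTop (nhds 0) := by
    simpa using (tendsto_pow_atTop_nhds_zero_of_lt_one hr0 hr).mul_const s
  have h2 : ∀ᶠ n : ℕ in Filter.atTop, r ^ n * s < 1 / 2 := h1.eventually_lt_const (by norm_num)
  refine Summable.of_norm_bounded_eventually_nat (g := fun n : ℕ => (1 / 2 : ℝ) ^ n)
    (summable_geometric_of_lt_one (by norm_num) (by norm_num)) ?_
  filter_upwards [h2] with n hn
  have : r ^ (n ^ 2) * s ^ n = (r ^ n * s) ^ n := by rw [mul_pow, ← pow_mul, sq]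
  rw [this, Real.norm_of_nonneg (by positivity)]
  exact pow_le_pow_left₀ (by positivity) hn.le n

lemma summable_theta_norm {q : ℂ} (hq : ‖q‖ < 1) (z : ℂ) :
    Summable fun n : ℤ => ‖q ^ (n ^ 2) * z ^ n‖ := by
  refine Summable.of_nat_of_neg ?_ ?_
  · refine (summable_theta_nat (norm_nonneg q) hq (norm_nonneg z)).congr fun n => ?_
    rw [norm_mul, zpow_natCast, norm_pow, norm_zpow]
    congr 1
  · refine (summable_theta_nat (norm_nonneg q) hq (inv_nonneg.2 (norm_nonneg z))).congr fun n => ?_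
    rw [norm_mul, zpow_neg, zpow_natCast, norm_inv, norm_pow, norm_zpow, neg_sq, inv_pow]
    congr 1

lemma summable_theta {q : ℂ} (hq : ‖q‖ < 1) (z : ℂ) :
    Summable fun n : ℤ => q ^ (n ^ 2) * z ^ n := (summable_theta_norm hq z).of_norm

/-- The Jacobi triple product. -/
theorem jtp {q z : ℂ} (hq0 : q ≠ 0) (hq : ‖q‖ < 1) (hz : z ≠ 0) :
    ∑' n : ℤ, q ^ (n ^ 2) * z ^ n =
      qPoch (-(z * q)) (q ^ 2) * qPoch (-(q / z)) (q ^ 2) * E (q ^ 2) := by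
  set p := q ^ 2 with hp
  have hp1 : ‖p‖ < 1 := pow_lt hq two_ne_zero
  set u : ℕ → ℂ := fun n => ∏ i ∈ range n, (1 - p * p ^ i) with hu
  have hlim : Filter.Tendsto u Filter.atTop (nhds (E p)) := tendsto_qPoch p hp1
  have hE : E p ≠ 0 := E_ne_zero hp1
  have hu0 : ∀ n, u n ≠ 0 := by
    intro n
    refine prod_ne_zero_iff.2 fun i _ h => ?_
    have h1 : p ^ (i + 1) = 1 := by rw [pow_succ']; linear_combination -h
    have h2 := pow_lt hp1 (Nat.succ_ne_zero i)
    rw [Nat.succ_eq_add_one, h1] at h2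
    simp at h2
  have hinv : Filter.Tendsto (fun n => (u n)⁻¹) Filter.atTop (nhds (E p)⁻¹) := hlim.inv₀ hE
  obtain ⟨M, hM⟩ := (Metric.isBounded_range_of_tendsto u hlim).exists_norm_le
  obtain ⟨K, hK⟩ := (Metric.isBounded_range_of_tendsto _ hinv).exists_norm_le
  have hM' : ∀ n, ‖u n‖ ≤ M := fun n => hM _ ⟨n, rfl⟩
  have hK' : ∀ n, ‖(u n)⁻¹‖ ≤ K := fun n => hK _ ⟨n, rfl⟩
  have hM0 : 0 ≤ M := (norm_nonneg _).trans (hM' 0)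
  have hK0 : 0 ≤ K := (norm_nonneg _).trans (hK' 0)
  have hgb : ∀ a b : ℕ, gb p (a + b) a = u (a + b) * (u a)⁻¹ * (u b)⁻¹ := by
    intro a b
    have := gb_formula p (a + b) a b rfl
    change _ * u a * u b = u (a + b) at this
    rw [← this]
    field_simp [hu0 a, hu0 b]
  let f : ℕ → ℤ → ℂ := fun n j => if -(n : ℤ) ≤ j ∧ j ≤ n then
    gb p (2 * n) (j + n).toNat * (q ^ (j ^ 2) * z ^ j) else 0
  have hf : ∀ n, ∑' j, f n j = (∏ k ∈ range n, (1 - (-(z * q)) * p ^ k)) *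
      (∏ k ∈ range n, (1 - (-(q / z)) * p ^ k)) := by
    intro n
    rw [hp, finite_jtp hq0 hz]
    let e : ℕ ↪ ℤ := ⟨fun k => (k : ℤ) - n, fun a b h => by simpa using h⟩
    rw [tsum_eq_sum (s := (range (2 * n + 1)).map e), sum_map]
    · refine sum_congr rfl fun k hk => ?_
      have hk' : k < 2 * n + 1 := mem_range.1 hk
      have : e k = (k : ℤ) - n := rfl
      simp only [f, this]
      rw [if_pos (by omega)]
      simp [hp]
    · intro j hj
      simp only [f]
      rw [if_neg]
      intro hj2
      apply hj
      rw [mem_map]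
      refine ⟨(j + n).toNat, mem_range.2 (by omega), ?_⟩
      change ((j + n).toNat : ℤ) - n = j
      omega
  have hgb2 : ∀ (n : ℕ) (j : ℤ), -(n : ℤ) ≤ j ∧ j ≤ n →
      gb p (2 * n) (j + n).toNat = u (2 * n) * (u (j + n).toNat)⁻¹ * (u (n - j).toNat)⁻¹ := by
    intro n j h
    have := hgb (j + n).toNat (n - j).toNat
    rwa [show (j + n).toNat + (n - j).toNat = 2 * n by omega] at this
  have key : Filter.Tendsto (fun n => ∑' j, f n j) Filter.atTop
      (nhds (∑' j : ℤ, (E p)⁻¹ * (q ^ (j ^ 2) * z ^ j))) := by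
    refine tendsto_tsum_of_dominated_convergence
      (bound := fun j : ℤ => M * K * K * ‖q ^ (j ^ 2) * z ^ j‖)
      ((summable_theta_norm hq z).mul_left _) ?_ ?_
    · intro j
      have t1 : Filter.Tendsto (fun n : ℕ => 2 * n) Filter.atTop Filter.atTop :=
        Filter.tendsto_atTop_mono (fun n => by change n ≤ 2 * n; omega) Filter.tendsto_id
      have t2 : Filter.Tendsto (fun n : ℕ => (j + n).toNat) Filter.atTop Filter.atTop := by
        refine Filter.tendsto_atTop.2 fun b => ?_
        filter_upwards [Filter.eventually_ge_atTop (b + j.natAbs)] with n hn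
        omega
      have t3 : Filter.Tendsto (fun n : ℕ => ((n : ℤ) - j).toNat) Filter.atTop Filter.atTop := by
        refine Filter.tendsto_atTop.2 fun b => ?_
        filter_upwards [Filter.eventually_ge_atTop (b + j.natAbs)] with n hn
        omega
      have t4 := (((hlim.comp t1).mul (hinv.comp t2)).mul (hinv.comp t3)).mul_const
        (q ^ (j ^ 2) * z ^ j)
      rw [mul_inv_cancel₀ hE, one_mul] at t4
      refine t4.congr' ?_
      filter_upwards [Filter.eventually_ge_atTop j.natAbs] with n hn
      have hj : -(n : ℤ) ≤ j ∧ j ≤ n := by omega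
      simp only [f, Function.comp]
      rw [if_pos hj, hgb2 n j hj]
    · refine Filter.Eventually.of_forall fun n j => ?_
      by_cases hj : -(n : ℤ) ≤ j ∧ j ≤ n
      · simp only [f]
        rw [if_pos hj, hgb2 n j hj, norm_mul, norm_mul, norm_mul]
        gcongr
        · exact hM' _
        · exact hK' _
        · exact hK' _
      · simp only [f]
        rw [if_neg hj, norm_zero]
        positivity
  have h2 := (tendsto_qPoch (-(z * q)) hp1).mul (tendsto_qPoch (-(q / z)) hp1)
  have h3 := tendsto_nhds_unique key (h2.congr fun n => (hf n).symm)
  rw [tsum_mul_left] at h3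
  rw [← h3]
  field_simp

lemma qPoch_shift (a : ℂ) {q : ℂ} (hq : ‖q‖ < 1) : qPoch a q = (1 - a) * qPoch (a * q) q := by
  have h1 := (tendsto_qPoch a hq).comp (Filter.tendsto_add_atTop_nat 1)
  refine tendsto_nhds_unique h1 (((tendsto_qPoch (a * q) hq).const_mul (1 - a)).congr fun N => ?_)
  simp only [Function.comp]
  rw [prod_range_succ', mul_comm]
  congr 1
  · exact prod_congr rfl fun j _ => by ring
  · simp

/-- Theta series. -/
noncomputable def theta (q z : ℂ) : ℂ := ∑' n : ℤ, q ^ (n ^ 2) * z ^ n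

lemma theta_phi {q : ℂ} (hq0 : q ≠ 0) (hq : ‖q‖ < 1) :
    theta q (-1) = E q ^ 2 / E (q ^ 2) := by
  have hE := E_ne_zero (pow_lt hq two_ne_zero)
  rw [theta, jtp hq0 hq (by norm_num), ← odd_E hq]
  simp only [neg_mul, one_mul, neg_neg, div_neg, div_one]
  field_simp

lemma theta_psi {s : ℂ} (hs0 : s ≠ 0) (hs : ‖s‖ < 1) :
    theta s s = 2 * E (s ^ 4) ^ 2 / E (s ^ 2) := by
  have h2 := pow_lt hs two_ne_zero
  have hE := E_ne_zero h2
  have h := neg_E h2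
  rw [theta, jtp hs0 hs hs0, div_self hs0, qPoch_shift (-1) h2, ← sq,
    show s ^ 4 = (s ^ 2) ^ 2 by ring, ← h, neg_one_mul]
  field_simp
  ring

lemma theta_A {s : ℂ} (hs0 : s ≠ 0) (hs : ‖s‖ < 1) :
    theta (s ^ 3) s = E (s ^ 4) * E (s ^ 6) ^ 2 / (E (s ^ 2) * E (s ^ 12)) := by
  have h2 := pow_lt hs two_ne_zero
  have h6 : ‖s ^ 6‖ < 1 := pow_lt hs (by norm_num)
  have a1 := neg_E h2
  have a2 := neg_E h6
  have a3 := qPoch_split3 (-s ^ 2) h2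
  have e2 := E_ne_zero h2
  have e6 := E_ne_zero h6
  have e12 := E_ne_zero (pow_lt hs (show 12 ≠ 0 by norm_num))
  rw [theta, jtp (pow_ne_zero _ hs0) (pow_lt hs three_ne_zero) hs0,
    show s ^ 3 / s = s ^ 2 by field_simp, show s * s ^ 3 = s ^ 4 by ring]
  simp only [neg_mul, ← pow_mul, ← pow_add] at a1 a2 a3 ⊢
  norm_num at a1 a2 a3 ⊢
  rw [← a1, a3, ← a2]
  rw [← a2] at e12
  have := left_ne_zero_of_mul e12
  field_simp

lemma theta_omega {r : ℂ} (hr0 : r ≠ 0) (hr : ‖r‖ < 1) :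
    theta (r ^ 3) (-r ^ 2) = E r * E (r ^ 6) ^ 2 / (E (r ^ 2) * E (r ^ 3)) := by
  have h2 := pow_lt hr two_ne_zero
  have h3 := pow_lt hr three_ne_zero
  have h6 : ‖r ^ 6‖ < 1 := pow_lt hr (by norm_num)
  have a1 := odd_E hr
  have a2 := odd_E h3
  have a3 := qPoch_split3 r h2
  have e2 := E_ne_zero h2
  have e3 := E_ne_zero h3
  have e6 := E_ne_zero h6
  rw [theta, jtp (pow_ne_zero _ hr0) h3 (neg_ne_zero.2 (pow_ne_zero _ hr0)),
    show -(r ^ 3 / -r ^ 2) = r by field_simp, show -(-r ^ 2 * r ^ 3) = r ^ 5 by ring]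
  rw [show r * r ^ 2 = r ^ 3 by ring, show r * (r ^ 2) ^ 2 = r ^ 5 by ring] at a3
  simp only [← pow_mul] at a1 a2 a3 ⊢
  norm_num at a1 a2 a3 ⊢
  rw [← a1, a3, ← a2]
  rw [← a2] at e3
  have := left_ne_zero_of_mul e3
  field_simp

lemma tsum3 {f : ℤ → ℂ} (hf : Summable f) :
    ∑' n, f n = ∑' m, f (3 * m) + ∑' m, f (3 * m + 1) + ∑' m, f (3 * m - 1) := by
  have e := (Int.divModEquiv 3).symm
  have h1 : Summable fun x : Fin 3 × ℤ => f (3 * x.2 + (x.1 : ℕ)) := by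
    have := ((Equiv.prodComm _ _).trans (Int.divModEquiv 3).symm).summable_iff.2 hf
    refine this.congr fun x => ?_
    simp [Int.divModEquiv]
    ring_nf
  have h2 : ∑' n, f n = ∑' x : Fin 3 × ℤ, f (3 * x.2 + (x.1 : ℕ)) := by
    rw [← ((Equiv.prodComm _ _).trans (Int.divModEquiv 3).symm).tsum_eq]
    refine tsum_congr fun x => ?_
    simp [Int.divModEquiv]
    ring_nf
  rw [h2, h1.tsum_prod, tsum_fintype, Fin.sum_univ_three]
  have h3 : ∑' m, f (3 * m - 1) = ∑' m, f (3 * m + 2) := by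
    rw [← (Equiv.addRight (1 : ℤ)).tsum_eq]
    refine tsum_congr fun x => ?_
    simp
    ring_nf
  rw [h3]
  simp

lemma pz (q : ℂ) (k : ℕ) (m : ℤ) : (q ^ k) ^ m = q ^ ((k : ℤ) * m) := by
  rw [zpow_mul, zpow_natCast]

lemma theta_inv (q z : ℂ) : theta q z⁻¹ = theta q z := by
  rw [theta, theta, ← (Equiv.neg ℤ).tsum_eq]
  refine tsum_congr fun n => ?_
  simp

lemma theta_psi3 {s : ℂ} (hs0 : s ≠ 0) (hs : ‖s‖ < 1) :
    theta s s = 2 * theta (s ^ 9) (s ^ 3) + s ^ 2 * theta (s ^ 9) (s ^ 9) := by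
  have h := tsum3 (summable_theta hs s)
  have h1 : theta (s ^ 9) (s ^ 3) = ∑' m : ℤ, s ^ ((3 * m) ^ 2) * s ^ (3 * m) := by
    refine tsum_congr fun m => ?_
    rw [pz, pz, ← zpow_add₀ hs0, ← zpow_add₀ hs0]; congr 1; push_cast; ring
  have h2 : theta (s ^ 9) (s ^ 3) = ∑' m : ℤ, s ^ ((3 * m - 1) ^ 2) * s ^ (3 * m - 1) := by
    rw [← theta_inv]
    refine tsum_congr fun m => ?_
    rw [inv_zpow', pz, pz, ← zpow_add₀ hs0, ← zpow_add₀ hs0]; congr 1; push_cast; ring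
  have h3 : s ^ 2 * theta (s ^ 9) (s ^ 9) =
      ∑' m : ℤ, s ^ ((3 * m + 1) ^ 2) * s ^ (3 * m + 1) := by
    rw [theta, ← tsum_mul_left]
    refine tsum_congr fun m => ?_
    rw [pz, pz, ← zpow_natCast, ← zpow_add₀ hs0, ← zpow_add₀ hs0, ← zpow_add₀ hs0]
    congr 1; push_cast; ring
  rw [theta, h, ← h1, ← h2, ← h3]; ring

lemma neg_zpow' (x : ℂ) (m : ℤ) : (-x) ^ m = (-1) ^ m * x ^ m := by
  rw [← neg_one_mul, mul_zpow]

lemma neg_one_three (m : ℤ) : (-1 : ℂ) ^ (3 * m) = (-1) ^ m := by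
  rw [zpow_mul]; norm_num

lemma neg_one_neg (m : ℤ) : (-1 : ℂ) ^ (-m) = (-1) ^ m := by
  rw [zpow_neg, ← inv_zpow]; norm_num

lemma theta_phi3 {q : ℂ} (hq0 : q ≠ 0) (hq : ‖q‖ < 1) :
    theta q (-1) = theta (q ^ 9) (-1) - 2 * q * theta (q ^ 9) (-q ^ 6) := by
  have hm : (-1 : ℂ) ≠ 0 := by norm_num
  have h := tsum3 (summable_theta hq (-1))
  have h1 : theta (q ^ 9) (-1) = ∑' m : ℤ, q ^ ((3 * m) ^ 2) * (-1) ^ (3 * m) := by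
    refine tsum_congr fun m => ?_
    rw [pz, neg_one_three]; congr 2; push_cast; ring
  have h2 : -(q * theta (q ^ 9) (-q ^ 6)) =
      ∑' m : ℤ, q ^ ((3 * m - 1) ^ 2) * (-1) ^ (3 * m - 1) := by
    rw [← theta_inv, theta, ← tsum_mul_left, ← tsum_neg]
    refine tsum_congr fun m => ?_
    rw [inv_zpow', neg_zpow', neg_one_neg, pz, pz, zpow_sub₀ hm, neg_one_three,
      show (3 * m - 1) ^ 2 = 1 + (9 * m ^ 2 + 6 * (-m)) by ring, zpow_add₀ hq0, zpow_add₀ hq0]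
    simp
    ring
  have h3 : -(q * theta (q ^ 9) (-q ^ 6)) =
      ∑' m : ℤ, q ^ ((3 * m + 1) ^ 2) * (-1) ^ (3 * m + 1) := by
    rw [theta, ← tsum_mul_left, ← tsum_neg]
    refine tsum_congr fun m => ?_
    rw [neg_zpow', pz, pz, zpow_add₀ hm, neg_one_three,
      show (3 * m + 1) ^ 2 = 1 + (9 * m ^ 2 + 6 * m) by ring, zpow_add₀ hq0, zpow_add₀ hq0]
    simp
    ring
  rw [theta, h, ← h1, ← h2, ← h3]; ring

lemma neg_one_sq_zpow (n : ℤ) : (-1 : ℂ) ^ (n ^ 2) = (-1) ^ n := by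
  rcases Int.even_or_odd n with h | h
  · rw [h.neg_one_zpow, (h.pow_of_ne_zero two_ne_zero).neg_one_zpow]
  · rw [h.neg_one_zpow, (h.pow).neg_one_zpow]

lemma theta_neg (q z : ℂ) : theta (-q) z = theta q (-z) := by
  refine tsum_congr fun n => ?_
  rw [neg_zpow', neg_zpow' z, neg_one_sq_zpow]; ring

lemma theta_two_aux {q : ℂ} (hq0 : q ≠ 0) :
    ∑' x : ℤ × ℤ, q ^ (3 * x.1 ^ 2 + 2 * x.1 + 3 * x.2 ^ 2) * ((-1) ^ x.2 - (-1) ^ x.1) =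
    ∑' x : ℤ × ℤ, 2 * q * ((q ^ (6 * x.1 ^ 2) * ((-1) ^ x.1 * q ^ (4 * x.1))) *
      (q ^ (6 * x.2 ^ 2) * ((-1) ^ x.2 * q ^ (4 * x.2)))) := by
  let g : ℤ × ℤ → ℤ × ℤ := fun x => (-x.1 - x.2 - 1, x.1 - x.2)
  have hg : Function.Injective g := by
    rintro ⟨a, b⟩ ⟨c, d⟩ h
    simp only [g, Prod.mk.injEq] at h ⊢
    omega
  rw [← hg.tsum_eq]
  · refine tsum_congr fun x => ?_
    obtain ⟨a, b⟩ := x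
    simp only [g]
    rw [show 3 * (-a - b - 1) ^ 2 + 2 * (-a - b - 1) + 3 * (a - b) ^ 2 =
        1 + (6 * a ^ 2 + 4 * a) + (6 * b ^ 2 + 4 * b) by ring, zpow_add₀ hq0, zpow_add₀ hq0,
      zpow_add₀ hq0, zpow_add₀ hq0, zpow_one]
    have hm : (-1 : ℂ) ≠ 0 := by norm_num
    have t1 : (-1 : ℂ) ^ (a - b) = (-1) ^ a * (-1) ^ b := by
      rw [sub_eq_add_neg, zpow_add₀ hm, neg_one_neg]
    have t2 : (-1 : ℂ) ^ (-a - b - 1) = -((-1) ^ a * (-1) ^ b) := by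
      rw [show -a - b - 1 = -a + -b + -1 by ring, zpow_add₀ hm, zpow_add₀ hm,
        neg_one_neg, neg_one_neg, neg_one_neg]; simp
    rw [t1, t2]
    ring
  · rintro ⟨m, n⟩ h
    rw [Function.mem_support] at h
    have hodd : (m + n) % 2 = 1 := by
      by_contra hc
      apply h
      rcases Int.even_or_odd n with hn | hn
      · have hm : Even m := by rw [Int.even_iff] at hn ⊢; omega
        simp only
        rw [hm.neg_one_zpow, hn.neg_one_zpow, sub_self, mul_zero]
      · have hm : Odd m := by rw [Int.odd_iff] at hn ⊢; omega
        simp only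
        rw [hm.neg_one_zpow, hn.neg_one_zpow, sub_self, mul_zero]
    refine ⟨((n - m - 1) / 2, (-m - n - 1) / 2), ?_⟩
    simp only [g, Prod.mk.injEq]
    omega

lemma theta_mul {p : ℂ} (hp : ‖p‖ < 1) (z w : ℂ) :
    theta p z * theta p w = ∑' x : ℤ × ℤ, p ^ (x.1 ^ 2) * z ^ x.1 * (p ^ (x.2 ^ 2) * w ^ x.2) :=
  tsum_mul_tsum_of_summable_norm (f := fun n : ℤ => p ^ (n ^ 2) * z ^ n)
    (g := fun n : ℤ => p ^ (n ^ 2) * w ^ n) (summable_theta_norm hp z) (summable_theta_norm hp w)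

lemma summable_theta_mul {p : ℂ} (hp : ‖p‖ < 1) (z w : ℂ) :
    Summable fun x : ℤ × ℤ => p ^ (x.1 ^ 2) * z ^ x.1 * (p ^ (x.2 ^ 2) * w ^ x.2) :=
  summable_mul_of_summable_norm (f := fun n : ℤ => p ^ (n ^ 2) * z ^ n)
    (g := fun n : ℤ => p ^ (n ^ 2) * w ^ n) (summable_theta_norm hp z) (summable_theta_norm hp w)

lemma theta_two_key {q : ℂ} (hq0 : q ≠ 0) (m n : ℤ) :
    (q ^ 3) ^ (m ^ 2) * (q ^ 2) ^ m * ((q ^ 3) ^ (n ^ 2) * (-1) ^ n) -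
      (q ^ 3) ^ (m ^ 2) * (-q ^ 2) ^ m * ((q ^ 3) ^ (n ^ 2) * 1 ^ n) =
      q ^ (3 * m ^ 2 + 2 * m + 3 * n ^ 2) * ((-1) ^ n - (-1) ^ m) := by
  rw [neg_zpow' (q ^ 2), pz, pz, pz, zpow_add₀ hq0, zpow_add₀ hq0, one_zpow]
  push_cast
  ring

lemma theta_two {q : ℂ} (hq0 : q ≠ 0) (hq : ‖q‖ < 1) :
    theta (q ^ 3) (q ^ 2) * theta (q ^ 3) (-1) - theta (q ^ 3) (-q ^ 2) * theta (q ^ 3) 1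
      = 2 * q * theta (q ^ 6) (-q ^ 4) ^ 2 := by
  have h3 := pow_lt hq three_ne_zero
  have h6 : ‖q ^ 6‖ < 1 := pow_lt hq (by norm_num)
  rw [sq (theta (q ^ 6) (-q ^ 4)), theta_mul h3, theta_mul h3, theta_mul h6,
    ← Summable.tsum_sub (summable_theta_mul h3 _ _) (summable_theta_mul h3 _ _), ← tsum_mul_left]
  refine (tsum_congr fun x : ℤ × ℤ => theta_two_key hq0 x.1 x.2).trans
    ((theta_two_aux hq0).trans (tsum_congr fun x => ?_))
  rw [neg_zpow' (q ^ 4), neg_zpow' (q ^ 4), pz, pz, pz, pz]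
  push_cast
  ring

/-- 2-dissection of `E(q^3)^3 / E(q)`. -/
lemma two_dissection {q : ℂ} (hq0 : q ≠ 0) (hq : ‖q‖ < 1) :
    E (q ^ 3) ^ 3 / E q - E (-q ^ 3) ^ 3 / E (-q) = 2 * q * E (q ^ 12) ^ 3 / E (q ^ 4) := by
  have P : ∀ k : ℕ, k ≠ 0 → E (q ^ k) ≠ 0 := fun k hk => E_ne_zero (pow_lt hq hk)
  have h := theta_two hq0 hq
  have e1 := E_ne_zero hq
  have e2 := P 2 (by norm_num)
  have e3 := P 3 (by norm_num)
  have e4 := P 4 (by norm_num)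
  have e6 := P 6 (by norm_num)
  have e12 := P 12 (by norm_num)
  have hn : ‖-q‖ < 1 := by simpa using hq
  have q2 : ‖q ^ 2‖ < 1 := pow_lt hq two_ne_zero
  have q3 : ‖q ^ 3‖ < 1 := pow_lt hq three_ne_zero
  have q3n : ‖-q ^ 3‖ < 1 := by simpa using q3
  have n1 := E_ne_zero hn
  have n3 := E_ne_zero q3n
  have a1 := theta_omega (neg_ne_zero.2 hq0) hn
  have a2 := theta_omega hq0 hq
  have a3 := theta_omega (pow_ne_zero 2 hq0) q2
  have a4 := theta_phi (pow_ne_zero 3 hq0) q3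
  have a5 := theta_phi (neg_ne_zero.2 (pow_ne_zero 3 hq0)) q3n
  rw [show (-q) ^ 3 = -q ^ 3 by ring, neg_sq, theta_neg, neg_neg,
    show (-q) ^ 6 = q ^ 6 by ring] at a1
  rw [theta_neg, neg_neg, neg_sq] at a5
  simp only [← pow_mul] at a3 a4 a5
  norm_num at a3 a4 a5
  rw [a1, a2, a3, a4, a5] at h
  have b1 := E_neg hq
  have b2 := E_neg q3
  simp only [← pow_mul] at b2
  norm_num at b2
  have c1 : E (-q) = E (q ^ 2) ^ 3 / (E q * E (q ^ 4)) := by field_simp; linear_combination b1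
  have c2 : E (-q ^ 3) = E (q ^ 6) ^ 3 / (E (q ^ 3) * E (q ^ 12)) := by
    field_simp; linear_combination b2
  rw [c1, c2] at h ⊢
  field_simp at h ⊢
  linear_combination h

section genfun
open PowerSeries
open scoped PowerSeries.WithPiTopology

/-- One factor of the generating function of `PD`. -/
noncomputable def fac (i : ℕ) : PowerSeries ℕ :=
  1 + ∑' j : ℕ, (j + 1) • (X : PowerSeries ℕ) ^ ((i + 1) * (j + 1))

/-- Partial product. -/
noncomputable def part (N : ℕ) : PowerSeries ℕ := ∏ i ∈ range N, fac i

lemma coeff_genFun_PD (n : ℕ) :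
    coeff n (Nat.Partition.genFun (fun _ c => c : ℕ → ℕ → ℕ)) = PD n := by
  rw [Nat.Partition.coeff_genFun, PD]
  refine sum_congr rfl fun p _ => ?_
  simp [Finsupp.prod]

lemma coeff_fac (i n : ℕ) : coeff n (fac i) =
    if n = 0 then 1 else if (i + 1) ∣ n then n / (i + 1) else 0 := by
  rw [fac, map_add]
  have hs : Summable fun j : ℕ => (j + 1) • (X : PowerSeries ℕ) ^ ((i + 1) * (j + 1)) :=
    Nat.Partition.summable_genFun_term (fun _ c => c : ℕ → ℕ → ℕ) i
  rw [hs.map_tsum _ (WithPiTopology.continuous_coeff _ _)]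
  have h0 : ∀ j : ℕ, coeff n ((j + 1) • (X : PowerSeries ℕ) ^ ((i + 1) * (j + 1))) =
      if n = (i + 1) * (j + 1) then j + 1 else 0 := by
    intro j
    rw [map_nsmul, coeff_X_pow]
    split_ifs <;> simp
  simp only [h0]
  by_cases hn : n = 0
  · subst hn
    simp
  · rw [if_neg hn, coeff_one, if_neg hn, zero_add]
    split_ifs with hd
    · obtain ⟨k, rfl⟩ := hd
      have hk : k ≠ 0 := by rintro rfl; simp at hn
      rw [tsum_eq_single (k - 1)]
      · rw [Nat.sub_add_cancel (Nat.pos_of_ne_zero hk), if_pos rfl,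
          Nat.mul_div_cancel_left _ (Nat.succ_pos i)]
      · intro j hj
        rw [if_neg]
        intro h
        have := Nat.eq_of_mul_eq_mul_left (Nat.succ_pos i) h
        omega
    · refine (tsum_congr fun j => ?_).trans tsum_zero
      rw [if_neg]
      intro h
      exact hd ⟨_, h⟩

lemma part_eventually (n : ℕ) : ∀ᶠ N in Filter.atTop, coeff n (part N) = PD n := by
  have h := (Nat.Partition.hasProd_genFun (fun _ c => c : ℕ → ℕ → ℕ)).tendsto_prod_nat
  rw [WithPiTopology.tendsto_iff_coeff_tendsto] at h
  have h1 := h n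
  rw [coeff_genFun_PD, nhds_discrete, Filter.tendsto_pure] at h1
  exact h1

lemma part_mono (n : ℕ) : Monotone fun N => coeff n (part N) := by
  refine monotone_nat_of_le_succ fun N => ?_
  rw [part, part, prod_range_succ, fac, mul_add, mul_one, map_add]
  exact Nat.le_add_right _ _

lemma part_le (n N : ℕ) : coeff n (part N) ≤ PD n := by
  obtain ⟨M, hM⟩ := (part_eventually n).exists_forall_of_atTop
  rw [← hM (max M N) (le_max_left _ _)]
  exact part_mono n (le_max_right _ _)

/-- Absolute convergence of a power series at a point with a given value. -/
def Ev (p : PowerSeries ℕ) (q v : ℂ) : Prop :=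
  (Summable fun n : ℕ => ‖((coeff n p : ℕ) : ℂ) * q ^ n‖) ∧ ∑' n : ℕ, ((coeff n p : ℕ) : ℂ) * q ^ n = v

lemma Ev.mul {p r : PowerSeries ℕ} {q v w : ℂ} (h1 : Ev p q v) (h2 : Ev r q w) :
    Ev (p * r) q (v * w) := by
  have key : ∀ n : ℕ, ((coeff n (p * r) : ℕ) : ℂ) * q ^ n =
      ∑ kl ∈ antidiagonal n, (((coeff kl.1 p : ℕ) : ℂ) * q ^ kl.1) * (((coeff kl.2 r : ℕ) : ℂ) * q ^ kl.2) := by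
    intro n
    rw [coeff_mul]
    push_cast
    rw [sum_mul]
    refine sum_congr rfl fun x hx => ?_
    rw [← mem_antidiagonal.1 hx, pow_add]
    ring
  obtain ⟨a1, b1⟩ := h1
  obtain ⟨a2, b2⟩ := h2
  have S := summable_norm_sum_mul_antidiagonal_of_summable_norm a1 a2
  have T := tsum_mul_tsum_eq_tsum_sum_antidiagonal_of_summable_norm a1 a2
  rw [b1, b2] at T
  constructor
  · exact S.congr fun n => congrArg norm (key n).symm
  · exact (tsum_congr key).trans T.symm

lemma Ev_one (q : ℂ) : Ev 1 q 1 := by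
  constructor
  · refine summable_of_ne_finset_zero (s := {0}) fun n hn => ?_
    have : n ≠ 0 := by simpa using hn
    simp [coeff_one, this]
  · rw [tsum_eq_single 0]
    · simp
    · intro n hn
      simp [coeff_one, hn]

lemma Ev_fac (i : ℕ) {q : ℂ} (hq : ‖q‖ < 1) :
    Ev (fac i) q (1 + q ^ (i + 1) / (1 - q ^ (i + 1)) ^ 2) := by
  have hx : ‖q ^ (i + 1)‖ < 1 := pow_lt hq (Nat.succ_ne_zero i)
  set x := q ^ (i + 1) with hxd
  have hinj : Function.Injective fun j : ℕ => (i + 1) * j :=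
    fun a b h => Nat.eq_of_mul_eq_mul_left (Nat.succ_pos i) h
  have hz : ∀ n ∉ Set.range (fun j : ℕ => (i + 1) * j), ((coeff n (fac i) : ℕ) : ℂ) * q ^ n = 0 := by
    intro n hn
    rw [coeff_fac]
    have h1 : n ≠ 0 := by rintro rfl; exact hn ⟨0, by simp⟩
    have h2 : ¬ (i + 1) ∣ n := fun ⟨k, hk⟩ => hn ⟨k, hk.symm⟩
    simp [h1, h2]
  have hc : ∀ j : ℕ, ((coeff ((i + 1) * j) (fac i) : ℕ) : ℂ) * q ^ ((i + 1) * j) =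
      (if j = 0 then 1 else 0) + (j : ℂ) * x ^ j := by
    intro j
    rw [coeff_fac, pow_mul, ← hxd]
    by_cases hj : j = 0
    · simp [hj]
    · rw [if_neg (by simp [hj]), if_pos (dvd_mul_right _ _), if_neg hj,
        Nat.mul_div_cancel_left _ (Nat.succ_pos i), zero_add]
  have hs1 : HasSum (fun j : ℕ => (if j = 0 then (1 : ℂ) else 0) + (j : ℂ) * x ^ j)
      (1 + x / (1 - x) ^ 2) := by
    refine HasSum.add ?_ (hasSum_coe_mul_geometric_of_norm_lt_one hx)
    exact hasSum_ite_eq 0 (1 : ℂ)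
  have hs2 : HasSum (fun n : ℕ => ((coeff n (fac i) : ℕ) : ℂ) * q ^ n) (1 + x / (1 - x) ^ 2) := by
    rw [← hinj.hasSum_iff hz]
    simpa only [Function.comp_def, hc] using hs1
  exact ⟨hs2.summable.norm, hs2.tsum_eq⟩

lemma Ev_part (N : ℕ) {q : ℂ} (hq : ‖q‖ < 1) :
    Ev (part N) q (∏ i ∈ range N, (1 + q ^ (i + 1) / (1 - q ^ (i + 1)) ^ 2)) := by
  induction N with
  | zero => simpa [part] using Ev_one q
  | succ N ih =>
    rw [part, prod_range_succ, prod_range_succ]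
    exact ih.mul (Ev_fac N hq)

lemma tendsto_H {q : ℂ} (hq : ‖q‖ < 1) :
    Filter.Tendsto (fun N => ∏ i ∈ range N, (1 + q ^ (i + 1) / (1 - q ^ (i + 1)) ^ 2)) Filter.atTop
      (nhds (E (q ^ 6) / (E q * E (q ^ 2) * E (q ^ 3)))) := by
  have q2 := pow_lt hq two_ne_zero
  have q3 := pow_lt hq three_ne_zero
  have q6 : ‖q ^ 6‖ < 1 := pow_lt hq (by norm_num)
  have hne := mul_ne_zero (mul_ne_zero (E_ne_zero hq) (E_ne_zero q2)) (E_ne_zero q3)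
  have h := (tendsto_qPoch (q ^ 6) q6).div (((tendsto_qPoch q hq).mul (tendsto_qPoch (q ^ 2) q2)).mul
    (tendsto_qPoch (q ^ 3) q3)) hne
  refine h.congr fun N => ?_
  simp only [Pi.div_apply, Pi.mul_apply]
  rw [← prod_mul_distrib, ← prod_mul_distrib, ← prod_div_distrib]
  refine prod_congr rfl fun i _ => ?_
  have n1 : ∀ k : ℕ, k ≠ 0 → 1 - (q ^ (i + 1)) ^ k ≠ 0 := by
    intro k hk h
    have h1 := pow_lt (pow_lt hq (Nat.succ_ne_zero i)) hk
    rw [Nat.succ_eq_add_one, ← sub_eq_zero.1 h] at h1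
    simp at h1
  have r : ∀ k : ℕ, q ^ k * (q ^ k) ^ i = (q ^ (i + 1)) ^ k := by intro k; ring
  rw [r, r, r, show q * q ^ i = q ^ (i + 1) by ring]
  have a1 := n1 1 one_ne_zero
  have a2 := n1 2 two_ne_zero
  have a3 := n1 3 three_ne_zero
  rw [pow_one] at a1
  generalize q ^ (i + 1) = x at *
  field_simp
  ring

lemma summable_PD_real {r : ℝ} (hr0 : 0 ≤ r) (hr : r < 1) :
    Summable fun n : ℕ => (PD n : ℝ) * r ^ n := by
  have hq : ‖(r : ℂ)‖ < 1 := by simpa [abs_of_nonneg hr0] using hr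
  obtain ⟨C, hC⟩ := (Metric.isBounded_range_of_tendsto _ (tendsto_H hq)).exists_norm_le
  refine summable_of_sum_range_le (c := C) (fun n => by positivity) fun M => ?_
  have h1 : ∀ᶠ N in Filter.atTop, ∀ n ∈ range M, coeff n (part N) = PD n :=
    (Filter.eventually_all_finset _).2 fun n _ => part_eventually n
  obtain ⟨N, hN⟩ := h1.exists
  have hE := Ev_part N hq
  have hs : Summable fun n : ℕ => ((coeff n (part N) : ℕ) : ℝ) * r ^ n := by
    refine hE.1.congr fun n => ?_
    rw [norm_mul, norm_pow, Complex.norm_real, Complex.norm_natCast, Real.norm_of_nonneg hr0]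
  calc ∑ n ∈ range M, (PD n : ℝ) * r ^ n
      = ∑ n ∈ range M, ((coeff n (part N) : ℕ) : ℝ) * r ^ n :=
        sum_congr rfl fun n hn => by rw [hN n hn]
    _ ≤ ∑' n : ℕ, ((coeff n (part N) : ℕ) : ℝ) * r ^ n :=
        hs.sum_le_tsum _ fun n _ => by positivity
    _ ≤ ‖((∑' n : ℕ, ((coeff n (part N) : ℕ) : ℝ) * r ^ n : ℝ) : ℂ)‖ := by
        rw [Complex.norm_real]; exact le_abs_self _
    _ ≤ C := by
        rw [Complex.ofReal_tsum]
        push_cast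
        rw [hE.2]
        exact hC _ ⟨N, rfl⟩

lemma summable_PD {q : ℂ} (hq : ‖q‖ < 1) : Summable fun n : ℕ => (PD n : ℂ) * q ^ n := by
  refine Summable.of_norm ((summable_PD_real (norm_nonneg q) hq).congr fun n => ?_)
  simp

/-- Generating function of `PD`. -/
lemma tsum_PD {q : ℂ} (hq : ‖q‖ < 1) : ∑' n : ℕ, (PD n : ℂ) * q ^ n =
    E (q ^ 6) / (E q * E (q ^ 2) * E (q ^ 3)) := by
  have key : Filter.Tendsto (fun N => ∑' n : ℕ, ((coeff n (part N) : ℕ) : ℂ) * q ^ n) Filter.atTop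
      (nhds (∑' n : ℕ, (PD n : ℂ) * q ^ n)) := by
    refine tendsto_tsum_of_dominated_convergence (summable_PD_real (norm_nonneg q) hq) ?_ ?_
    · intro n
      refine tendsto_const_nhds.congr' ?_
      filter_upwards [part_eventually n] with N hN
      rw [hN]
    · refine Filter.Eventually.of_forall fun N n => ?_
      rw [norm_mul, norm_pow, Complex.norm_natCast]
      have : ((coeff n (part N) : ℕ) : ℝ) ≤ PD n := by exact_mod_cast part_le n N
      gcongr
  exact tendsto_nhds_unique key ((tendsto_H hq).congr fun N => (Ev_part N hq).2.symm)

end genfun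

/-- 3-dissection of `E(t) E(t^2)`. -/
lemma three_dissection {t : ℂ} (ht0 : t ≠ 0) (ht : ‖t‖ < 1) :
    E t * E (t ^ 2) = E (t ^ 6) * E (t ^ 9) ^ 4 / (E (t ^ 3) * E (t ^ 18) ^ 2)
      - t * (E (t ^ 9) * E (t ^ 18))
      - t ^ 2 * (2 * E (t ^ 3) * E (t ^ 18) ^ 4 / (E (t ^ 6) * E (t ^ 9) ^ 2)) := by
  have P : ∀ k : ℕ, k ≠ 0 → E (t ^ k) ≠ 0 := fun k hk => E_ne_zero (pow_lt ht hk)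
  have e1 := E_ne_zero ht
  have e2 := P 2 (by norm_num)
  have e3 := P 3 (by norm_num)
  have e6 := P 6 (by norm_num)
  have e9 := P 9 (by norm_num)
  have e18 := P 18 (by norm_num)
  obtain ⟨s, rfl⟩ : ∃ s : ℂ, s ^ 2 = t := IsAlgClosed.exists_pow_nat_eq t (by norm_num)
  have hs0 : s ≠ 0 := by rintro rfl; simp at ht0
  have hs : ‖s‖ < 1 := by
    by_contra h
    rw [norm_pow] at ht
    nlinarith [not_lt.1 h]
  have a1 := theta_psi3 hs0 hs
  have a2 := theta_phi3 ht0 ht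
  rw [theta_psi hs0 hs, theta_psi (pow_ne_zero 9 hs0) (pow_lt hs (by norm_num)),
    show s ^ 9 = (s ^ 3) ^ 3 by ring,
    theta_A (pow_ne_zero 3 hs0) (pow_lt hs (by norm_num))] at a1
  rw [theta_phi ht0 ht, theta_phi (pow_ne_zero 9 ht0) (pow_lt ht (by norm_num)),
    show (s ^ 2) ^ 9 = ((s ^ 2) ^ 3) ^ 3 by ring, show (s ^ 2) ^ 6 = ((s ^ 2) ^ 3) ^ 2 by ring,
    theta_omega (pow_ne_zero 3 ht0) (pow_lt ht (by norm_num))] at a2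
  simp only [← pow_mul] at *
  norm_num at *
  have h : E (s ^ 2) * E (s ^ 4) =
      (E (s ^ 2) ^ 2 / E (s ^ 4)) * (2 * E (s ^ 4) ^ 2 / E (s ^ 2)) / 2 := by
    field_simp
  rw [h, a1, a2]
  field_simp
  ring

lemma tsum_PD3 {w : ℂ} (hw : w ^ 2 + w + 1 = 0) {t : ℂ} (ht : ‖t‖ < 1) (hw1 : ‖w‖ = 1) :
    3 * ∑' n : ℕ, (PD (3 * n) : ℂ) * (t ^ 3) ^ n = ∑' n : ℕ, (PD n : ℂ) * t ^ n +
      ∑' n : ℕ, (PD n : ℂ) * (w * t) ^ n + ∑' n : ℕ, (PD n : ℂ) * (w ^ 2 * t) ^ n := by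
  have h3 : w ^ 3 = 1 := by linear_combination (w - 1) * hw
  have s1 := summable_PD ht
  have s2 := summable_PD (q := w * t) (by simpa [hw1] using ht)
  have s3 := summable_PD (q := w ^ 2 * t) (by simpa [hw1] using ht)
  rw [← s1.tsum_add s2, ← (s1.add s2).tsum_add s3, ← tsum_mul_left]
  have hinj : Function.Injective fun n : ℕ => 3 * n := fun a b h => by
    simp only at h; omega
  refine Eq.trans ?_ (hinj.tsum_eq (f := fun n : ℕ => (PD n : ℂ) * t ^ n +
    (PD n : ℂ) * (w * t) ^ n + (PD n : ℂ) * (w ^ 2 * t) ^ n) ?_)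
  · refine tsum_congr fun n => ?_
    have hb : (w ^ 2) ^ (3 * n) = 1 := by
      rw [← pow_mul, show 2 * (3 * n) = 3 * (2 * n) by ring, pow_mul, h3, one_pow]
    have ha : w ^ (3 * n) = 1 := by rw [pow_mul, h3, one_pow]
    rw [mul_pow, mul_pow, ha, hb, ← pow_mul]
    ring
  · intro n hn
    rw [Function.mem_support] at hn
    by_contra hc
    apply hn
    have hz : 1 + w ^ n + (w ^ 2) ^ n = 0 := by
      have hm : n % 3 = 1 ∨ n % 3 = 2 := by
        have : n % 3 ≠ 0 := fun h => hc ⟨n / 3, by simp only; omega⟩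
        omega
      rw [← Nat.div_add_mod n 3]
      rcases hm with hm | hm <;> rw [hm, pow_add, pow_add, pow_mul, pow_mul, ← pow_mul w 2 3,
        show 2 * 3 = 3 * 2 by rfl, pow_mul w 3 2, h3] <;> simp
      · linear_combination hw
      · linear_combination hw + w * h3
    rw [mul_pow, mul_pow]
    linear_combination (PD n : ℂ) * t ^ n * hz

lemma exists_omega : ∃ w : ℂ, w ^ 2 + w + 1 = 0 ∧ ‖w‖ = 1 := by
  obtain ⟨d, hd⟩ : ∃ d : ℂ, d ^ 2 = -3 := IsAlgClosed.exists_pow_nat_eq _ (by norm_num)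
  have hw : ((d - 1) / 2) ^ 2 + (d - 1) / 2 + 1 = 0 := by linear_combination hd / 4
  refine ⟨(d - 1) / 2, hw, ?_⟩
  generalize (d - 1) / 2 = w at hw
  have h3 : w ^ 3 = 1 := by linear_combination (w - 1) * hw
  have : ‖w‖ ^ 3 = 1 := by rw [← norm_pow, h3]; simp
  exact (pow_eq_one_iff_of_nonneg (norm_nonneg _) three_ne_zero).1 this

lemma alg_three {w x y z N c : ℂ} (hw : w ^ 2 + w + 1 = 0)
    {a0 a1 a2 : ℂ} (h0 : a0 = x + y + z) (h1 : a1 = x + w * y + w ^ 2 * z)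
    (h2 : a2 = x + w ^ 2 * y + w * z) (hN : a0 * a1 * a2 = N) (hN0 : N ≠ 0) :
    c / a0 + c / a1 + c / a2 = 3 * (c * (x ^ 2 - y * z) / N) := by
  have n0 : a0 ≠ 0 := by rintro rfl; simp at hN; exact hN0 hN.symm
  have n1 : a1 ≠ 0 := by rintro rfl; simp at hN; exact hN0 hN.symm
  have n2 : a2 ≠ 0 := by rintro rfl; simp at hN; exact hN0 hN.symm
  have h3 : w ^ 3 = 1 := by linear_combination (w - 1) * hw
  have key : a1 * a2 + a0 * a2 + a0 * a1 = 3 * (x ^ 2 - y * z) := by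
    subst h0 h1 h2
    have hw2 : w ^ 2 = -w - 1 := by linear_combination hw
    ring_nf
    have hw4 : w ^ 4 = w := by linear_combination w * h3
    simp only [h3, hw2, hw4]
    ring
  rw [← hN]
  field_simp
  linear_combination c * key

/-- Generating function of `PD (3 n)`. -/
lemma PD3_formula {q : ℂ} (hq0 : q ≠ 0) (hq : ‖q‖ < 1) :
    ∑' n : ℕ, (PD (3 * n) : ℂ) * q ^ n =
      E (q ^ 3) ^ 9 / (E q ^ 7 * E (q ^ 2) * E (q ^ 6) ^ 3)
        - 2 * q * E (q ^ 6) ^ 6 / (E q ^ 4 * E (q ^ 2) ^ 4) := by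
  obtain ⟨w, hw, hw1⟩ := exists_omega
  have h3 : w ^ 3 = 1 := by linear_combination (w - 1) * hw
  have hw0 : w ≠ 0 := by rintro rfl; simp at hw1
  obtain ⟨t, rfl⟩ : ∃ t : ℂ, t ^ 3 = q := IsAlgClosed.exists_pow_nat_eq q (by norm_num)
  have ht0 : t ≠ 0 := by rintro rfl; simp at hq0
  have ht : ‖t‖ < 1 := by
    by_contra h
    rw [norm_pow] at hq
    exact absurd (one_le_pow₀ (not_lt.1 h)) (not_le.2 hq)
  have ht1 : ‖w * t‖ < 1 := by simpa [hw1] using ht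
  have ht2 : ‖w ^ 2 * t‖ < 1 := by simpa [hw1] using ht
  have P : ∀ k : ℕ, k ≠ 0 → E (t ^ k) ≠ 0 := fun k hk => E_ne_zero (pow_lt ht hk)
  have e3 := P 3 (by norm_num)
  have e6 := P 6 (by norm_num)
  have e9 := P 9 (by norm_num)
  have e18 := P 18 (by norm_num)
  have hS := tsum_PD3 hw ht hw1
  have d0 := three_dissection ht0 ht
  have d1 := three_dissection (mul_ne_zero hw0 ht0) ht1
  have d2 := three_dissection (mul_ne_zero (pow_ne_zero 2 hw0) ht0) ht2
  rw [tsum_PD ht, tsum_PD ht1, tsum_PD ht2] at hS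
  have o1 := E_omega hw ht
  have o2 := E_omega hw (pow_lt ht two_ne_zero)
  have r1 : ∀ k : ℕ, (w * t) ^ (3 * k) = t ^ (3 * k) := by
    intro k; rw [mul_pow, pow_mul, h3, one_pow, one_mul]
  have r2 : ∀ k : ℕ, (w ^ 2 * t) ^ (3 * k) = t ^ (3 * k) := by
    intro k; rw [mul_pow, ← pow_mul, show 2 * (3 * k) = 3 * (2 * k) by ring, pow_mul, h3, one_pow,
      one_mul]
  have r13 := r1 1
  have r16 := r1 2
  have r19 := r1 3
  have r118 := r1 6
  have r23 := r2 1
  have r26 := r2 2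
  have r29 := r2 3
  have r218 := r2 6
  norm_num at r13 r16 r19 r118 r23 r26 r29 r218
  have u1 : (w * t) ^ 2 = w ^ 2 * t ^ 2 := by ring
  have u2 : (w ^ 2 * t) ^ 2 = w * t ^ 2 := by linear_combination w * t ^ 2 * h3
  rw [r13, r16, r19, r118] at d1
  rw [r23, r26, r29, r218] at d2
  rw [r13, r16, r23, r26] at hS
  rw [u1] at d1 hS
  rw [u2] at d2 hS
  simp only [← pow_mul] at o2 ⊢
  norm_num at o2 ⊢
  set x := E (t ^ 6) * E (t ^ 9) ^ 4 / (E (t ^ 3) * E (t ^ 18) ^ 2) with hx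
  set y' := E (t ^ 9) * E (t ^ 18) with hy
  set z' := 2 * E (t ^ 3) * E (t ^ 18) ^ 4 / (E (t ^ 6) * E (t ^ 9) ^ 2) with hz
  have hN : (E t * E (t ^ 2)) * (E (w * t) * E (w ^ 2 * t ^ 2)) * (E (w ^ 2 * t) * E (w * t ^ 2)) =
      E (t ^ 3) ^ 4 * E (t ^ 6) ^ 4 / (E (t ^ 9) * E (t ^ 18)) := by
    rw [eq_div_iff (mul_ne_zero e9 e18), ← o1, ← o2]; ring
  have hN0 : E (t ^ 3) ^ 4 * E (t ^ 6) ^ 4 / (E (t ^ 9) * E (t ^ 18)) ≠ 0 := by positivity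
  have main := alg_three (c := E (t ^ 6) / E (t ^ 3)) (x := x) (y := -(t * y')) (z := -(t ^ 2 * z'))
    hw (d0.trans (by ring)) (d1.trans (by ring))
    (d2.trans (by ring)) hN hN0
  have hS2 : 3 * ∑' n : ℕ, (PD (3 * n) : ℂ) * (t ^ 3) ^ n =
      3 * (E (t ^ 6) / E (t ^ 3) * (x ^ 2 - -(t * y') * -(t ^ 2 * z')) /
        (E (t ^ 3) ^ 4 * E (t ^ 6) ^ 4 / (E (t ^ 9) * E (t ^ 18)))) := by
    rw [← main, hS]
    simp only [div_div]
    congr 1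
    · congr 1
      · congr 1; ring
      · congr 1; ring
    · congr 1; ring
  have hS3 := mul_left_cancel₀ three_ne_zero hS2
  simp only [← pow_mul] at hS3
  rw [hS3, hx, hy, hz]
  field_simp

/-- Closed form of `G`. -/
lemma G_formula {q : ℂ} (hq0 : q ≠ 0) (hq : ‖q‖ < 1) :
    G q = ((E (q ^ 3) ^ 3 / E q) ^ 2 -
      2 * q * (E (q ^ 6) ^ 9 / E (q ^ 2) ^ 3) / (E (q ^ 3) ^ 3 / E q)) / E (q ^ 2) ^ 6 := by
  have q2 := pow_lt hq two_ne_zero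
  have q3 := pow_lt hq three_ne_zero
  have P : ∀ k : ℕ, k ≠ 0 → E (q ^ k) ≠ 0 := fun k hk => E_ne_zero (pow_lt hq hk)
  have e1 := E_ne_zero hq
  have e2 := P 2 (by norm_num)
  have e3 := P 3 (by norm_num)
  have e6 := P 6 (by norm_num)
  have a1 := odd_E hq
  have a2 := odd_E q3
  have a3 := qPoch_split3 q q2
  rw [show q * q ^ 2 = q ^ 3 by ring, show q * (q ^ 2) ^ 2 = q ^ 5 by ring] at a3
  simp only [← pow_mul] at a2 a3
  norm_num at a2 a3
  rw [a3] at a1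
  have b2 : qPoch (q ^ 3) (q ^ 6) = E (q ^ 3) / E (q ^ 6) := by rw [eq_div_iff e6, a2]
  have b1 : qPoch q (q ^ 6) * qPoch (q ^ 5) (q ^ 6) =
      E q * E (q ^ 6) / (E (q ^ 2) * E (q ^ 3)) := by
    rw [b2] at a1
    field_simp at a1 ⊢
    linear_combination a1
  rw [G, PD3_formula hq0 hq]
  have : qPoch q (q ^ 6) ^ 5 * qPoch (q ^ 3) (q ^ 6) ^ 2 * qPoch (q ^ 5) (q ^ 6) ^ 5 =
      (qPoch q (q ^ 6) * qPoch (q ^ 5) (q ^ 6)) ^ 5 * qPoch (q ^ 3) (q ^ 6) ^ 2 := by ring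
  rw [this, b1, b2]
  field_simp

end GEven

open GEven in
theorem G_even (q : ℂ) (hq : ‖q‖ < 1) : G q = G (-q) := by
  by_cases hq0 : q = 0
  · simp [hq0]
  have hn : ‖-q‖ < 1 := by simpa using hq
  rw [G_formula hq0 hq, G_formula (neg_ne_zero.2 hq0) hn,
    show (-q) ^ 3 = -q ^ 3 by ring, neg_sq, show (-q) ^ 6 = q ^ 6 by ring]
  have h := two_dissection hq0 hq
  have P : ∀ k : ℕ, k ≠ 0 → E (q ^ k) ≠ 0 := fun k hk => E_ne_zero (pow_lt hq hk)
  have e1 := E_ne_zero hq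
  have e2 := P 2 (by norm_num)
  have e3 := P 3 (by norm_num)
  have e4 := P 4 (by norm_num)
  have e6 := P 6 (by norm_num)
  have e12 := P 12 (by norm_num)
  have q3 : ‖q ^ 3‖ < 1 := pow_lt hq three_ne_zero
  have n1 := E_ne_zero hn
  have n3 : E (-q ^ 3) ≠ 0 := E_ne_zero (by simpa using q3)
  have b1 := E_neg hq
  have b2 := E_neg q3
  simp only [← pow_mul] at b2
  norm_num at b2
  have hD : (E (q ^ 3) ^ 3 / E q) * (E (-q ^ 3) ^ 3 / E (-q)) * (E (q ^ 12) ^ 3 / E (q ^ 4)) =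
      E (q ^ 6) ^ 9 / E (q ^ 2) ^ 3 := by
    rw [show E (q ^ 6) ^ 9 = (E (q ^ 6) ^ 3) ^ 3 by ring, ← b1, ← b2]
    field_simp
  have hf : E (q ^ 3) ^ 3 / E q ≠ 0 := div_ne_zero (pow_ne_zero _ e3) e1
  have hg : E (-q ^ 3) ^ 3 / E (-q) ≠ 0 := div_ne_zero (pow_ne_zero _ n3) n1
  rw [mul_div_assoc] at h
  rw [← hD]
  congr 1
  generalize E (q ^ 3) ^ 3 / E q = f at *
  generalize E (-q ^ 3) ^ 3 / E (-q) = g at *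
  generalize E (q ^ 12) ^ 3 / E (q ^ 4) = B at *
  field_simp
  linear_combination (f + g) * h
end

section
/- (Chan's identity) For every complex number q with 0 < |q| < 1, 1/((q; q)_∞ (q^2; q^2)_∞) = (q^9; q^9)_∞^3 (q^{18}; q^{18})_∞^3 / ((q^3; q^3)_∞^4 (q^6; q^6)_∞^4) · { (1/x(q^3)^2 − 2 q^3 x(q^3)) + q (1/x(q^3) + 4 q^3 x(q^3)^2) + 3 q^2 }, where x(q) = (q; q^2)_∞ / (q^3; q^6)_∞^3. -/
/-- `x(q) = (q; q²)_∞ / (q³; q⁶)_∞³`. -/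
noncomputable def x (q : ℂ) : ℂ := qPoch q (q ^ 2) / qPoch (q ^ 3) (q ^ 6) ^ 3

open Filter Topology

/-- Triangular exponent `n(n-1)/2`. -/
def tri (n : ℤ) : ℤ := n * (n - 1) / 2

lemma two_tri (n : ℤ) : 2 * tri n = n * (n - 1) := by
  have h : (2 : ℤ) ∣ n * (n - 1) := by
    have := Int.even_mul_pred_self n
    exact this.two_dvd
  unfold tri
  omega

lemma tri_succ (n : ℤ) : tri (n + 1) = tri n + n := by
  have h1 := two_tri n
  have h2 := two_tri (n + 1)
  have : 2 * tri (n + 1) = 2 * (tri n + n) := by rw [h2, mul_add, h1]; ring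
  omega

lemma tri_neg (n : ℤ) : tri (-n) = tri n + n := by
  have h1 := two_tri n
  have h2 := two_tri (-n)
  have : 2 * tri (-n) = 2 * (tri n + n) := by rw [h2, mul_add, h1]; ring
  omega

/-- The general theta term. -/
noncomputable def thG (p a : ℂ) (n : ℤ) : ℂ := p ^ tri n * a ^ n

lemma thG_ne {p a : ℂ} (hp : p ≠ 0) (ha : a ≠ 0) (n : ℤ) : thG p a n ≠ 0 :=
  mul_ne_zero (zpow_ne_zero _ hp) (zpow_ne_zero _ ha)

lemma thG_succ {p a : ℂ} (hp : p ≠ 0) (ha : a ≠ 0) (n : ℤ) :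
    thG p a (n + 1) = thG p a n * (p ^ n * a) := by
  unfold thG
  rw [tri_succ, zpow_add₀ hp, zpow_add₀ ha, zpow_one]; ring

lemma thG_neg {p a : ℂ} (hp : p ≠ 0) (ha : a ≠ 0) (n : ℤ) :
    thG p a (-n) = thG p (p / a) n := by
  unfold thG
  rw [tri_neg, zpow_add₀ hp, div_zpow, zpow_neg]; field_simp

lemma thG_summable_nat {p a : ℂ} (hp : p ≠ 0) (ha : a ≠ 0) (hp1 : ‖p‖ < 1) :
    Summable (fun n : ℕ => thG p a n) := by
  refine summable_of_ratio_test_tendsto_lt_one (l := 0) one_pos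
    (Eventually.of_forall fun n => thG_ne hp ha _) ?_
  have h : ∀ n : ℕ, ‖thG p a ((n + 1 : ℕ) : ℤ)‖ / ‖thG p a n‖ = ‖p‖ ^ n * ‖a‖ := by
    intro n
    have := norm_ne_zero_iff.mpr (thG_ne hp ha n)
    push_cast
    rw [thG_succ hp ha, norm_mul, norm_mul, zpow_natCast, norm_pow]
    field_simp
  simp_rw [h]
  simpa using (tendsto_pow_atTop_nhds_zero_of_lt_one (norm_nonneg p) hp1).mul_const ‖a‖

lemma thG_summable {p a : ℂ} (hp : p ≠ 0) (ha : a ≠ 0) (hp1 : ‖p‖ < 1) :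
    Summable (thG p a) := by
  refine Summable.of_nat_of_neg (thG_summable_nat hp ha hp1) ?_
  simp_rw [thG_neg hp ha]
  exact thG_summable_nat hp (div_ne_zero hp ha) hp1

lemma qp_summable (a : ℂ) {p : ℂ} (hp1 : ‖p‖ < 1) : Summable fun n : ℕ => ‖-(a * p ^ n)‖ := by
  simp_rw [norm_neg, norm_mul, norm_pow]
  exact (summable_geometric_of_lt_one (norm_nonneg p) hp1).mul_left _

lemma qp_mult (a : ℂ) {p : ℂ} (hp1 : ‖p‖ < 1) : Multipliable fun n : ℕ => (1 - a * p ^ n) := by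
  simpa [sub_eq_add_neg] using multipliable_one_add_of_summable (qp_summable a hp1)

lemma qp_tendsto (a : ℂ) {p : ℂ} (hp1 : ‖p‖ < 1) :
    Tendsto (fun N : ℕ => ∏ n ∈ Finset.range N, (1 - a * p ^ n)) atTop (𝓝 (qPoch a p)) :=
  (qp_mult a hp1).tendsto_prod_tprod_nat

lemma qp_ne {a p : ℂ} (ha : ‖a‖ < 1) (hp1 : ‖p‖ < 1) : qPoch a p ≠ 0 := by
  have := tprod_one_add_ne_zero_of_summable (f := fun n : ℕ => -(a * p ^ n)) ?_
    (qp_summable a hp1)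
  · simpa [qPoch, sub_eq_add_neg] using this
  · intro n h
    have h1 : a * p ^ n = 1 := by linear_combination -h
    have h2 : ‖a * p ^ n‖ < 1 := by
      rw [norm_mul, norm_pow]
      calc ‖a‖ * ‖p‖ ^ n ≤ ‖a‖ * 1 := by
            gcongr
            exact pow_le_one₀ (norm_nonneg _) hp1.le
        _ < 1 := by simpa using ha
    rw [h1] at h2
    simp at h2

/-- partial product `(p;p)_N` -/
noncomputable def pp (p : ℂ) (N : ℕ) : ℂ := ∏ n ∈ Finset.range N, (1 - p * p ^ n)

lemma pp_succ (p : ℂ) (N : ℕ) : pp p (N + 1) = pp p N * (1 - p * p ^ N) :=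
  Finset.prod_range_succ _ _

lemma pp_ne {p : ℂ} (hp1 : ‖p‖ < 1) (N : ℕ) : pp p N ≠ 0 := by
  refine Finset.prod_ne_zero_iff.mpr fun n _ h => ?_
  have h1 : p ^ (n + 1) = 1 := by rw [pow_succ']; linear_combination -h
  have h2 : ‖p ^ (n + 1)‖ < 1 := by
    rw [norm_pow]; exact pow_lt_one₀ (norm_nonneg _) hp1 (by omega)
  rw [h1] at h2
  simp at h2

/-- reciprocal of `(p;p)_k`, zero for negative `k` -/
noncomputable def rr (p : ℂ) (k : ℤ) : ℂ := if 0 ≤ k then (pp p k.toNat)⁻¹ else 0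

lemma rr_nat (p : ℂ) (k : ℕ) : rr p k = (pp p k)⁻¹ := by simp [rr]

lemma rr_pred {p : ℂ} (hp : p ≠ 0) (hp1 : ‖p‖ < 1) (k : ℤ) : rr p k = (1 - p * p ^ k) * rr p (k + 1) := by
  rcases lt_trichotomy k (-1) with h | h | h
  · rw [rr, rr, if_neg (by omega), if_neg (by omega)]; simp
  · subst h
    simp [rr, hp]
  · obtain ⟨m, rfl⟩ := Int.eq_ofNat_of_zero_le (by omega : 0 ≤ k)
    have : ((m : ℤ) + 1) = ((m + 1 : ℕ) : ℤ) := by push_cast; rfl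
    have h1 := pp_ne hp1 m
    have h2 := pp_ne hp1 (m + 1)
    rw [this, rr_nat, rr_nat, zpow_natCast]
    rw [pp_succ] at *
    field_simp
    rw [div_self (right_ne_zero_of_mul h2)]

lemma hasSum_of_eq {f g : ℤ → ℂ} {a b : ℂ} (h : HasSum f a) (e : ∀ n, g n = f n)
    (e2 : b = a) : HasSum g b := by
  rw [e2, show g = f from funext e]; exact h

lemma jtp_finite {p a : ℂ} (hp : p ≠ 0) (ha : a ≠ 0) (hp1 : ‖p‖ < 1) (N : ℕ) :
    HasSum (fun n : ℤ => pp p (2 * N) * rr p (N + n) * rr p (N - n) * thG p a n)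
      ((∏ n ∈ Finset.range N, (1 - (-a) * p ^ n)) *
        (∏ n ∈ Finset.range N, (1 - (-(p / a)) * p ^ n))) := by
  induction N with
  | zero =>
    convert hasSum_single (0 : ℤ) ?_ using 1
    · simp [pp, rr, thG, tri]
    · intro n hn
      rcases lt_or_gt_of_ne hn with h | h
      · simp [rr, if_neg (not_le.mpr h)]
      · simp [rr, h]
  | succ N ih =>
    have h1 := (Equiv.addRight (-1 : ℤ)).hasSum_iff.mpr ih
    have h2 := (Equiv.addRight (1 : ℤ)).hasSum_iff.mpr ih
    have h := ((ih.mul_left (1 + p * p ^ (2 * N))).add (h1.mul_left (a * p ^ N))).add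
      (h2.mul_left (p / a * p ^ N))
    refine hasSum_of_eq h ?_ ?_
    · intro n
      simp only [Function.comp, Equiv.coe_addRight]
      have e1 : thG p a n = thG p a (n + -1) * (p ^ n * p⁻¹ * a) := by
        have := thG_succ hp ha (n + -1)
        rw [neg_add_cancel_right] at this
        rw [this, zpow_add₀ hp, zpow_neg_one]
      have e2 := thG_succ hp ha n
      have e1' : thG p a (n + -1) = thG p a n * (p / a * (p ^ n)⁻¹) := by
        have := zpow_ne_zero n hp
        rw [e1]; field_simp
      rw [e1', e2]
      have r1 := rr_pred hp hp1 ((N : ℤ) + n)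
      have r2 := rr_pred hp hp1 ((N : ℤ) - n)
      have r3 := rr_pred hp hp1 ((N : ℤ) + n - 1)
      have r4 := rr_pred hp hp1 ((N : ℤ) - n - 1)
      rw [sub_add_cancel] at r3 r4
      rw [show ((N : ℤ) + (n + -1)) = N + n - 1 by ring,
        show ((N : ℤ) - (n + -1)) = N - n + 1 by ring,
        show ((N : ℤ) + (n + 1)) = N + n + 1 by ring,
        show ((N : ℤ) - (n + 1)) = N - n - 1 by ring,
        show (((N + 1 : ℕ) : ℤ) + n) = N + n + 1 by push_cast; ring,
        show (((N + 1 : ℕ) : ℤ) - n) = N - n + 1 by push_cast; ring,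
        r3, r4, r1, r2, show 2 * (N + 1) = 2 * N + 1 + 1 by ring, pp_succ, pp_succ]
      have hn := zpow_ne_zero n hp
      simp only [zpow_sub₀ hp, zpow_add₀ hp, zpow_natCast, zpow_one, pow_succ, pow_mul]
      field_simp
      ring
    · rw [Finset.prod_range_succ, Finset.prod_range_succ]
      field_simp
      ring

lemma jtp {p a : ℂ} (hp : p ≠ 0) (ha : a ≠ 0) (hp1 : ‖p‖ < 1) :
    ∑' n : ℤ, thG p a n = qPoch (-a) p * qPoch (-(p / a)) p * qPoch p p := by
  have hE : qPoch p p ≠ 0 := qp_ne hp1 hp1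
  have hpp : Tendsto (pp p) atTop (𝓝 (qPoch p p)) := qp_tendsto p hp1
  have hrN : Tendsto (fun k : ℕ => rr p k) atTop (𝓝 (qPoch p p)⁻¹) := by
    simp_rw [rr_nat]
    exact hpp.inv₀ hE
  have hr : Tendsto (rr p) atTop (𝓝 (qPoch p p)⁻¹) := by
    have : Tendsto (fun k : ℤ => rr p (k.toNat : ℤ)) atTop (𝓝 (qPoch p p)⁻¹) :=
      hrN.comp (tendsto_atTop.mpr fun b => by
        filter_upwards [eventually_ge_atTop (b : ℤ)] with k hk
        omega)
    refine this.congr' ?_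
    filter_upwards [eventually_ge_atTop (0 : ℤ)] with k hk
    rw [Int.toNat_of_nonneg hk]
  obtain ⟨C, hC⟩ := hpp.norm.bddAbove_range
  obtain ⟨D, hD⟩ := hrN.norm.bddAbove_range
  have hC' : ∀ k, ‖pp p k‖ ≤ C := fun k => hC ⟨k, rfl⟩
  have hD0 : 0 ≤ D := (norm_nonneg _).trans (hD ⟨0, rfl⟩)
  have hD' : ∀ k, ‖rr p k‖ ≤ D := fun k => by
    by_cases h : 0 ≤ k
    · obtain ⟨m, rfl⟩ := Int.eq_ofNat_of_zero_le h
      exact hD ⟨m, rfl⟩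
    · simpa [rr, h] using hD0
  have hC0 : 0 ≤ C := (norm_nonneg _).trans (hC' 0)
  have hlim := tendsto_tsum_of_dominated_convergence (𝓕 := atTop)
    (f := fun (N : ℕ) (n : ℤ) => pp p (2 * N) * rr p (N + n) * rr p (N - n) * thG p a n)
    (g := fun n => qPoch p p * (qPoch p p)⁻¹ * (qPoch p p)⁻¹ * thG p a n)
    (bound := fun n => C * D * D * ‖thG p a n‖)
    ((thG_summable hp ha hp1).norm.mul_left _)
    (fun n => by
      refine ((Tendsto.mul (hpp.comp ?_) (hr.comp ?_)).mul (hr.comp ?_)).mul_const _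
      · exact tendsto_atTop_mono (fun n => by simp only [id]; omega) tendsto_id
      · exact tendsto_atTop_add_const_right _ _ tendsto_natCast_atTop_atTop
      · exact tendsto_atTop_add_const_right _ _ tendsto_natCast_atTop_atTop)
    (Eventually.of_forall fun N n => by
      simp only [norm_mul]
      gcongr
      · exact hC' _
      · exact hD' _
      · exact hD' _)
  simp_rw [(jtp_finite hp ha hp1 _).tsum_eq] at hlim
  have := tendsto_nhds_unique hlim ((qp_tendsto (-a) hp1).mul (qp_tendsto (-(p / a)) hp1))
  rw [tsum_mul_left] at this
  rw [← this]
  field_simp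

lemma qp_split2 (a : ℂ) {p : ℂ} (hp1 : ‖p‖ < 1) :
    qPoch a p = qPoch a (p ^ 2) * qPoch (a * p) (p ^ 2) := by
  have hp2 : ‖p ^ 2‖ < 1 := by
    rw [norm_pow]; exact pow_lt_one₀ (norm_nonneg _) hp1 (by omega)
  have h1 := (qp_tendsto a hp1).comp
    (tendsto_atTop_mono (fun n => by simp only [id]; omega) tendsto_id :
      Tendsto (fun N : ℕ => 2 * N) atTop atTop)
  refine tendsto_nhds_unique h1 (((qp_tendsto a hp2).mul (qp_tendsto (a * p) hp2)).congr ?_)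
  intro N
  simp only [Function.comp]
  induction N with
  | zero => simp
  | succ N ih =>
    rw [show 2 * (N + 1) = 2 * N + 1 + 1 by ring]
    simp only [Finset.prod_range_succ]
    rw [← ih]
    ring

lemma qp_split3 (a : ℂ) {p : ℂ} (hp1 : ‖p‖ < 1) :
    qPoch a p = qPoch a (p ^ 3) * qPoch (a * p) (p ^ 3) * qPoch (a * p ^ 2) (p ^ 3) := by
  have hp2 : ‖p ^ 3‖ < 1 := by
    rw [norm_pow]; exact pow_lt_one₀ (norm_nonneg _) hp1 (by omega)
  have h1 := (qp_tendsto a hp1).comp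
    (tendsto_atTop_mono (fun n => by simp only [id]; omega) tendsto_id :
      Tendsto (fun N : ℕ => 3 * N) atTop atTop)
  refine tendsto_nhds_unique h1 ((((qp_tendsto a hp2).mul (qp_tendsto (a * p) hp2)).mul
    (qp_tendsto (a * p ^ 2) hp2)).congr ?_)
  intro N
  simp only [Function.comp]
  induction N with
  | zero => simp
  | succ N ih =>
    rw [show 3 * (N + 1) = 3 * N + 1 + 1 + 1 by ring]
    simp only [Finset.prod_range_succ]
    rw [← ih]
    ring

lemma qp_sq (a : ℂ) {p : ℂ} (hp1 : ‖p‖ < 1) :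
    qPoch a p * qPoch (-a) p = qPoch (a ^ 2) (p ^ 2) := by
  unfold qPoch
  rw [← (qp_mult a hp1).tprod_mul (qp_mult (-a) hp1)]
  exact tprod_congr fun n => by ring

lemma qp_cube (a : ℂ) {p w : ℂ} (hw : w ^ 2 + w + 1 = 0) (hp1 : ‖p‖ < 1) :
    qPoch a p * qPoch (w * a) p * qPoch (w ^ 2 * a) p = qPoch (a ^ 3) (p ^ 3) := by
  unfold qPoch
  rw [← (qp_mult a hp1).tprod_mul (qp_mult (w * a) hp1),
    ← ((qp_mult a hp1).mul (qp_mult (w * a) hp1)).tprod_mul (qp_mult (w ^ 2 * a) hp1)]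
  refine tprod_congr fun n => ?_
  have h2 : w ^ 2 = -w - 1 := by linear_combination hw
  rw [h2, ← pow_mul, mul_comm 3 n, pow_mul]
  generalize p ^ n = y
  linear_combination (a ^ 3 * y ^ 3 - a ^ 2 * y ^ 2) * hw

lemma norm_pow_lt {q : ℂ} (hq : ‖q‖ < 1) {k : ℕ} (hk : k ≠ 0) : ‖q ^ k‖ < 1 := by
  rw [norm_pow]; exact pow_lt_one₀ (norm_nonneg _) hq hk

lemma E_ne {q : ℂ} (hq : ‖q‖ < 1) {k : ℕ} (hk : k ≠ 0) : qPoch (q ^ k) (q ^ k) ≠ 0 :=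
  qp_ne (norm_pow_lt hq hk) (norm_pow_lt hq hk)

lemma E_ne1 {q : ℂ} (hq : ‖q‖ < 1) : qPoch q q ≠ 0 := qp_ne hq hq

/-- `(q;q²) E(q²) = E(q)` -/
lemma odd_mul {q : ℂ} (hq : ‖q‖ < 1) :
    qPoch q (q ^ 2) * qPoch (q ^ 2) (q ^ 2) = qPoch q q := by
  rw [qp_split2 q hq, ← sq]

lemma plus_mul {q : ℂ} (hq : ‖q‖ < 1) :
    qPoch q q * qPoch (-q) q = qPoch (q ^ 2) (q ^ 2) := qp_sq q hq

/-- theta sum -/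
noncomputable def Th (p a : ℂ) : ℂ := ∑' n : ℤ, thG p a n

lemma tsum_split3 {g : ℤ → ℂ} (hg : Summable g) :
    ∑' n, g n = ∑' m, g (3 * m) + ∑' m, g (3 * m + 1) + ∑' m, g (3 * m - 1) := by
  have h3 : ∑' m, g (3 * m - 1) = ∑' m, g (3 * m + 2) := by
    rw [← (Equiv.addRight (1 : ℤ)).tsum_eq]
    refine tsum_congr fun m => ?_
    congr 1
    simp only [Equiv.coe_addRight]; ring
  have hi : ∀ k : ℤ, Function.Injective (fun m : ℤ => 3 * m + k) := fun k a b h => by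
    simp only at h; omega
  have s0 : Summable (fun m => g (3 * m)) := by
    simpa [Function.comp_def] using hg.comp_injective (hi 0)
  have s1 : Summable (fun m => g (3 * m + 1)) := hg.comp_injective (hi 1)
  have s2 : Summable (fun m => g (3 * m + 2)) := hg.comp_injective (hi 2)
  rw [h3, ← s0.tsum_add s1, ← (s0.add s1).tsum_add s2,
    ← (Int.divModEquiv 3).symm.tsum_eq g]
  have hT := ((Int.divModEquiv 3).symm.summable_iff.mpr hg).tsum_prod
  simp only [Function.comp] at hT
  rw [hT]
  refine tsum_congr fun m => ?_
  rw [tsum_fintype, Fin.sum_univ_three]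
  simp [Int.divModEquiv, mul_comm]

lemma tri_3 (m : ℤ) : tri (3 * m) = 9 * tri m + 3 * m := by
  have h1 := two_tri m
  have h2 := two_tri (3 * m)
  have : 2 * tri (3 * m) = 2 * (9 * tri m + 3 * m) := by linear_combination h2 - 9 * h1
  omega

lemma Th_split {p a : ℂ} (hp : p ≠ 0) (ha : a ≠ 0) (hp1 : ‖p‖ < 1) :
    Th p a = Th (p ^ 9) (p ^ 3 * a ^ 3) + a * Th (p ^ 9) (p ^ 6 * a ^ 3)
      + p / a * Th (p ^ 9) (a ^ 3) := by
  have e0 : ∀ m : ℤ, thG p a (3 * m) = thG (p ^ 9) (p ^ 3 * a ^ 3) m := by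
    intro m
    unfold thG
    rw [tri_3, zpow_add₀ hp, mul_zpow, zpow_mul, zpow_mul, zpow_mul, ← zpow_natCast p,
      ← zpow_natCast p, ← zpow_natCast a]
    push_cast
    ring
  have e1 : ∀ m : ℤ, thG p a (3 * m + 1) = a * thG (p ^ 9) (p ^ 6 * a ^ 3) m := by
    intro m
    rw [thG_succ hp ha, e0]
    unfold thG
    rw [show p ^ 6 * a ^ 3 = (p ^ 3 * a ^ 3) * p ^ 3 by ring, mul_zpow _ (p ^ 3), zpow_mul,
      ← zpow_natCast p 3]
    push_cast
    ring
  have e2 : ∀ m : ℤ, thG p a (3 * m - 1) = p / a * thG (p ^ 9) (a ^ 3) m := by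
    intro m
    have h := thG_succ hp ha (3 * m - 1)
    rw [sub_add_cancel, e0] at h
    have hz : p ^ (3 * m - 1) = (p ^ 3) ^ m / p := by
      rw [zpow_sub_one₀ hp, zpow_mul, ← zpow_natCast p 3]; push_cast; rfl
    rw [hz] at h
    unfold thG at h ⊢
    rw [mul_zpow (p ^ 3)] at h
    have h3 : (p ^ 3) ^ m ≠ 0 := zpow_ne_zero _ (pow_ne_zero _ hp)
    field_simp at h ⊢
    linear_combination -h
  unfold Th
  rw [tsum_split3 (thG_summable hp ha hp1)]
  simp_rw [e0, e1, e2, tsum_mul_left]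

lemma Th_jtp {p a b : ℂ} (hp : p ≠ 0) (ha : a ≠ 0) (hp1 : ‖p‖ < 1) (hab : a * b = p) :
    Th p a = qPoch (-a) p * qPoch (-b) p * qPoch p p := by
  rw [Th, jtp hp ha hp1, ← hab, mul_div_cancel_left₀ _ ha]

lemma Th_phi {q : ℂ} (h0 : q ≠ 0) (hq : ‖q‖ < 1) :
    Th (q ^ 2) (-q) = qPoch q q ^ 2 / qPoch (q ^ 2) (q ^ 2) := by
  have := E_ne hq (k := 2) (by omega)
  rw [Th_jtp (b := -q) (pow_ne_zero _ h0) (neg_ne_zero.mpr h0) (norm_pow_lt hq (by omega))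
    (by ring), ← odd_mul hq, neg_neg]
  field_simp

lemma Th_psi {q : ℂ} (h0 : q ≠ 0) (hq : ‖q‖ < 1) :
    Th q 1 = 2 * (qPoch (q ^ 2) (q ^ 2) ^ 2 / qPoch q q) := by
  have := E_ne1 hq
  have h1 : qPoch (-1) q = 2 * qPoch (-q) q := by
    have h := (qp_tendsto (-1) hq).comp (tendsto_add_atTop_nat 1)
    refine tendsto_nhds_unique h (((qp_tendsto (-q) hq).const_mul 2).congr ?_)
    intro N
    simp only [Function.comp]
    rw [Finset.prod_range_succ', mul_comm]
    congr 1
    · exact Finset.prod_congr rfl fun n _ => by ring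
    · norm_num
  rw [Th_jtp (b := q) h0 one_ne_zero hq (by ring), h1, ← plus_mul hq]
  field_simp

lemma Th_om {q : ℂ} (hq : ‖q‖ < 1) :
    qPoch q (q ^ 6) * qPoch (q ^ 5) (q ^ 6) * qPoch (q ^ 6) (q ^ 6) =
      qPoch q q * qPoch (q ^ 6) (q ^ 6) ^ 2 /
        (qPoch (q ^ 2) (q ^ 2) * qPoch (q ^ 3) (q ^ 3)) := by
  have h2 := E_ne hq (k := 2) (by omega)
  have h3 := E_ne hq (k := 3) (by omega)
  have h6 := E_ne hq (k := 6) (by omega)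
  have e1 := odd_mul hq
  have e3 := odd_mul (norm_pow_lt hq (k := 3) (by omega))
  have s := qp_split3 q (norm_pow_lt hq (k := 2) (by omega))
  rw [show (q ^ 2) ^ 3 = q ^ 6 by ring, show q * q ^ 2 = q ^ 3 by ring,
    show q * (q ^ 2) ^ 2 = q ^ 5 by ring] at s
  rw [show (q ^ 3) ^ 2 = q ^ 6 by ring] at e3
  rw [eq_div_iff (mul_ne_zero h2 h3), ← e1, s, ← e3]
  ring

lemma Th_A {q : ℂ} (hq : ‖q‖ < 1) :
    qPoch (-q) (q ^ 3) * qPoch (-q ^ 2) (q ^ 3) * qPoch (q ^ 3) (q ^ 3) =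
      qPoch (q ^ 2) (q ^ 2) * qPoch (q ^ 3) (q ^ 3) ^ 2 /
        (qPoch q q * qPoch (q ^ 6) (q ^ 6)) := by
  have h1 := E_ne1 hq
  have h6 := E_ne hq (k := 6) (by omega)
  have e1 := plus_mul hq
  have e3 := plus_mul (norm_pow_lt hq (k := 3) (by omega))
  have s := qp_split3 (-q) hq
  rw [show -q * q = -q ^ 2 by ring, show -q * q ^ 2 = -q ^ 3 by ring] at s
  rw [show (q ^ 3) ^ 2 = q ^ 6 by ring] at e3
  rw [eq_div_iff (mul_ne_zero h1 h6), ← e1, s, ← e3]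
  ring

lemma phi_split {q : ℂ} (h0 : q ≠ 0) (hq : ‖q‖ < 1) :
    qPoch q q ^ 2 / qPoch (q ^ 2) (q ^ 2) =
      qPoch (q ^ 9) (q ^ 9) ^ 2 / qPoch (q ^ 18) (q ^ 18) -
      2 * q * (qPoch (q ^ 3) (q ^ 3) * qPoch (q ^ 18) (q ^ 18) ^ 2 /
        (qPoch (q ^ 6) (q ^ 6) * qPoch (q ^ 9) (q ^ 9))) := by
  have h9 := Th_phi (pow_ne_zero 9 h0) (norm_pow_lt hq (k := 9) (by omega))
  have ho := Th_om (norm_pow_lt hq (k := 3) (by omega))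
  have hs := Th_split (p := q ^ 2) (a := -q) (pow_ne_zero _ h0) (neg_ne_zero.mpr h0)
    (norm_pow_lt hq (by omega))
  have hd : q ^ 2 / -q = -q := by field_simp
  rw [Th_phi h0 hq, hd] at hs
  simp only [← pow_mul, Nat.reduceMul] at h9 ho hs
  rw [show q ^ 6 * (-q) ^ 3 = -q ^ 9 by ring, show q ^ 12 * (-q) ^ 3 = -q ^ 15 by ring,
    show (-q) ^ 3 = - q ^ 3 by ring, h9,
    Th_jtp (b := -q ^ 3) (pow_ne_zero _ h0) (neg_ne_zero.mpr (pow_ne_zero _ h0))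
      (norm_pow_lt hq (by omega)) (by ring),
    Th_jtp (b := -q ^ 15) (pow_ne_zero _ h0) (neg_ne_zero.mpr (pow_ne_zero _ h0))
      (norm_pow_lt hq (by omega)) (by ring), neg_neg, neg_neg] at hs
  rw [hs, ← ho]
  ring

lemma psi_split {q : ℂ} (h0 : q ≠ 0) (hq : ‖q‖ < 1) :
    qPoch (q ^ 2) (q ^ 2) ^ 2 / qPoch q q =
      qPoch (q ^ 6) (q ^ 6) * qPoch (q ^ 9) (q ^ 9) ^ 2 /
        (qPoch (q ^ 3) (q ^ 3) * qPoch (q ^ 18) (q ^ 18)) +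
      q * (qPoch (q ^ 18) (q ^ 18) ^ 2 / qPoch (q ^ 9) (q ^ 9)) := by
  have h9 := Th_psi (pow_ne_zero 9 h0) (norm_pow_lt hq (k := 9) (by omega))
  have ho := Th_A (norm_pow_lt hq (k := 3) (by omega))
  have hs := Th_split (p := q) (a := 1) h0 one_ne_zero hq
  rw [Th_psi h0 hq] at hs
  simp only [← pow_mul, Nat.reduceMul, one_pow, mul_one, div_one, one_mul] at h9 ho hs
  rw [h9,
    Th_jtp (b := q ^ 3) (a := q ^ 6) (pow_ne_zero _ h0) (pow_ne_zero _ h0)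
      (norm_pow_lt hq (by omega)) (by ring),
    Th_jtp (b := q ^ 6) (a := q ^ 3) (pow_ne_zero _ h0) (pow_ne_zero _ h0)
      (norm_pow_lt hq (by omega)) (by ring)] at hs
  rw [← ho]
  linear_combination hs / 2

lemma x_cube {q : ℂ} (hq : ‖q‖ < 1) :
    x (q ^ 3) = qPoch (q ^ 3) (q ^ 3) * qPoch (q ^ 18) (q ^ 18) ^ 3 /
      (qPoch (q ^ 6) (q ^ 6) * qPoch (q ^ 9) (q ^ 9) ^ 3) := by
  have h6 := E_ne hq (k := 6) (by omega)
  have h9 := E_ne hq (k := 9) (by omega)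
  have h18 := E_ne hq (k := 18) (by omega)
  have e1 := odd_mul (norm_pow_lt hq (k := 3) (by omega))
  have e2 := odd_mul (norm_pow_lt hq (k := 9) (by omega))
  unfold x
  simp only [← pow_mul, Nat.reduceMul] at *
  have h9' := h9
  rw [← e2] at h9'
  have := left_ne_zero_of_mul h9'
  rw [← e1, ← e2]
  field_simp

/-- The 3-dissection of `E₁E₂`. -/
lemma dissect {q : ℂ} (h0 : q ≠ 0) (hq : ‖q‖ < 1) :
    qPoch q q * qPoch (q ^ 2) (q ^ 2) = qPoch (q ^ 9) (q ^ 9) * qPoch (q ^ 18) (q ^ 18) *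
      (1 / x (q ^ 3) - q - 2 * q ^ 2 * x (q ^ 3)) := by
  have h1 := E_ne1 hq
  have h2 := E_ne hq (k := 2) (by omega)
  have h3 := E_ne hq (k := 3) (by omega)
  have h6 := E_ne hq (k := 6) (by omega)
  have h9 := E_ne hq (k := 9) (by omega)
  have h18 := E_ne hq (k := 18) (by omega)
  have e : qPoch q q * qPoch (q ^ 2) (q ^ 2) = (qPoch q q ^ 2 / qPoch (q ^ 2) (q ^ 2)) *
    (qPoch (q ^ 2) (q ^ 2) ^ 2 / qPoch q q) := by field_simp
  rw [e, phi_split h0 hq, psi_split h0 hq, x_cube hq]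
  field_simp
  ring

lemma E_cube {q w : ℂ} (hw : w ^ 2 + w + 1 = 0) (hw1 : ‖w‖ = 1) (hq : ‖q‖ < 1) :
    qPoch q q * qPoch (w * q) (w * q) * qPoch (w ^ 2 * q) (w ^ 2 * q) * qPoch (q ^ 9) (q ^ 9)
      = qPoch (q ^ 3) (q ^ 3) ^ 4 := by
  have w3 : w ^ 3 = 1 := by linear_combination (w - 1) * hw
  have n3 := norm_pow_lt hq (k := 3) (by omega)
  have s0 := qp_split3 q hq
  have s1 := qp_split3 (w * q) (p := w * q) (by simpa [hw1] using hq)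
  have s2 := qp_split3 (w ^ 2 * q) (p := w ^ 2 * q) (by simpa [hw1] using hq)
  have s3 := qp_split3 (q ^ 3) n3
  rw [show q * q = q ^ 2 by ring, show q * q ^ 2 = q ^ 3 by ring] at s0
  rw [show (w * q) ^ 3 = w ^ 3 * q ^ 3 by ring, show w * q * (w * q) = w ^ 2 * q ^ 2 by ring,
    show w * q * (w * q) ^ 2 = w ^ 3 * q ^ 3 by ring, w3, one_mul] at s1
  rw [show (w ^ 2 * q) ^ 3 = (w ^ 3) ^ 2 * q ^ 3 by ring,
    show w ^ 2 * q * (w ^ 2 * q) = w ^ 3 * w * q ^ 2 by ring,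
    show w ^ 2 * q * (w ^ 2 * q) ^ 2 = (w ^ 3) ^ 2 * q ^ 3 by ring, w3, one_pow, one_mul,
    one_mul] at s2
  have c1 := qp_cube q hw n3
  have c2 := qp_cube (q ^ 2) hw n3
  rw [show (q ^ 3) ^ 3 = q ^ 9 by ring] at c1
  rw [show (q ^ 3) ^ 3 = q ^ 9 by ring, show (q ^ 2) ^ 3 = q ^ 6 by ring] at c2
  rw [show (q ^ 3) ^ 3 = q ^ 9 by ring, show q ^ 3 * q ^ 3 = q ^ 6 by ring,
    show q ^ 3 * (q ^ 3) ^ 2 = q ^ 9 by ring] at s3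
  rw [s0, s1, s2]
  have c12 := congrArg₂ (· * ·) c1 c2
  linear_combination qPoch (q ^ 3) (q ^ 3) ^ 3 * qPoch (q ^ 9) (q ^ 9) * c12
    - qPoch (q ^ 3) (q ^ 3) ^ 3 * s3

lemma exists_omega : ∃ w : ℂ, w ^ 2 + w + 1 = 0 ∧ w ^ 3 = 1 ∧ ‖w‖ = 1 := by
  have h3 : ((Real.sqrt 3 : ℝ) : ℂ) ^ 2 = 3 := by
    rw [← Complex.ofReal_pow, Real.sq_sqrt (by norm_num)]; norm_num
  have hw : ((-1 + (Real.sqrt 3 : ℝ) * Complex.I) / 2) ^ 2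
      + ((-1 + (Real.sqrt 3 : ℝ) * Complex.I) / 2) + 1 = 0 := by
    linear_combination (1 / 4 : ℂ) * Complex.I ^ 2 * h3 + 3 / 4 * Complex.I_sq
  have hw3 : ((-1 + (Real.sqrt 3 : ℝ) * Complex.I) / 2) ^ 3 = 1 := by
    linear_combination ((-1 + (Real.sqrt 3 : ℝ) * Complex.I) / 2 - 1) * hw
  exact ⟨_, hw, hw3, Complex.norm_eq_one_of_pow_eq_one hw3 (by norm_num)⟩

lemma key {q : ℂ} (h0 : q ≠ 0) (hq : ‖q‖ < 1) :
    qPoch (q ^ 3) (q ^ 3) ^ 4 * qPoch (q ^ 6) (q ^ 6) ^ 4 =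
      (qPoch (q ^ 9) (q ^ 9) * qPoch (q ^ 18) (q ^ 18)) ^ 4 *
        ((1 / x (q ^ 3)) ^ 3 - 7 * q ^ 3 - 8 * q ^ 6 * x (q ^ 3) ^ 3) := by
  obtain ⟨w, hw, w3, hn⟩ := exists_omega
  have hw0 : w ≠ 0 := by rintro rfl; simp at w3
  have d0 := dissect h0 hq
  have d1 := dissect (q := w * q) (mul_ne_zero hw0 h0) (by simpa [hn] using hq)
  have d2 := dissect (q := w ^ 2 * q) (mul_ne_zero (pow_ne_zero _ hw0) h0)
    (by simpa [hn] using hq)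
  rw [show (w * q) ^ 9 = (w ^ 3) ^ 3 * q ^ 9 by ring,
    show (w * q) ^ 18 = (w ^ 3) ^ 6 * q ^ 18 by ring,
    show (w * q) ^ 3 = (w ^ 3) * q ^ 3 by ring, mul_pow, w3, one_pow, one_pow, one_mul, one_mul,
    one_mul] at d1
  rw [show (w ^ 2 * q) ^ 9 = (w ^ 3) ^ 6 * q ^ 9 by ring,
    show (w ^ 2 * q) ^ 18 = (w ^ 3) ^ 12 * q ^ 18 by ring,
    show (w ^ 2 * q) ^ 3 = (w ^ 3) ^ 2 * q ^ 3 by ring,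
    show (w ^ 2 * q) ^ 2 = w ^ 3 * w * q ^ 2 by ring, w3, one_pow, one_pow, one_pow, one_mul,
    one_mul, one_mul, one_mul] at d2
  have c1 := E_cube hw hn hq
  have c2 := E_cube hw hn (norm_pow_lt hq (k := 2) (by omega))
  simp only [← pow_mul, Nat.reduceMul] at c2
  have hx : x (q ^ 3) ≠ 0 := by
    rw [x_cube hq]
    exact div_ne_zero (mul_ne_zero (E_ne hq (by omega)) (pow_ne_zero _ (E_ne hq (by omega))))
      (mul_ne_zero (E_ne hq (by omega)) (pow_ne_zero _ (E_ne hq (by omega))))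
  rw [← c1, ← c2]
  have hD := congrArg₂ (· * ·) (congrArg₂ (· * ·) d0 d1) d2
  have hP : (1 / x (q ^ 3) - q - 2 * q ^ 2 * x (q ^ 3)) *
      (1 / x (q ^ 3) - w * q - 2 * (w ^ 2 * q ^ 2) * x (q ^ 3)) *
      (1 / x (q ^ 3) - w ^ 2 * q - 2 * (w * q ^ 2) * x (q ^ 3)) =
      (1 / x (q ^ 3)) ^ 3 - 7 * q ^ 3 - 8 * q ^ 6 * x (q ^ 3) ^ 3 := by
    generalize x (q ^ 3) = X at *
    have hw2 : w ^ 2 = -w - 1 := by linear_combination hw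
    field_simp
    rw [hw2]
    ring_nf
    simp only [w3, hw2]
    ring
  linear_combination (qPoch (q ^ 9) (q ^ 9) * qPoch (q ^ 18) (q ^ 18)) * hD
    + (qPoch (q ^ 9) (q ^ 9) * qPoch (q ^ 18) (q ^ 18)) ^ 4 * hP

theorem chan_identity (q : ℂ) (hq0 : 0 < ‖q‖) (hq1 : ‖q‖ < 1) :
    1 / (qPoch q q * qPoch (q ^ 2) (q ^ 2)) =
      qPoch (q ^ 9) (q ^ 9) ^ 3 * qPoch (q ^ 18) (q ^ 18) ^ 3 /
          (qPoch (q ^ 3) (q ^ 3) ^ 4 * qPoch (q ^ 6) (q ^ 6) ^ 4) *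
        ((1 / x (q ^ 3) ^ 2 - 2 * q ^ 3 * x (q ^ 3)) +
          q * (1 / x (q ^ 3) + 4 * q ^ 3 * x (q ^ 3) ^ 2) + 3 * q ^ 2) := by
  have h0 : q ≠ 0 := norm_pos_iff.mp hq0
  have hk := key h0 hq1
  have hd := dissect h0 hq1
  have h1 := E_ne1 hq1
  have h2 := E_ne hq1 (k := 2) (by omega)
  have h3 := E_ne hq1 (k := 3) (by omega)
  have h6 := E_ne hq1 (k := 6) (by omega)
  have h9 := E_ne hq1 (k := 9) (by omega)
  have h18 := E_ne hq1 (k := 18) (by omega)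
  have hx : x (q ^ 3) ≠ 0 := by
    rw [x_cube hq1]
    exact div_ne_zero (mul_ne_zero h3 (pow_ne_zero _ h18)) (mul_ne_zero h6 (pow_ne_zero _ h9))
  rw [div_mul_eq_mul_div, div_eq_div_iff (mul_ne_zero h1 h2)
    (mul_ne_zero (pow_ne_zero _ h3) (pow_ne_zero _ h6)), hk, hd]
  generalize x (q ^ 3) = X at *
  field_simp
  ring
end

section
/- For every complex number q with 0 < |q| < 1, with x(q) = (q; q^2)_∞ / (q^3; q^6)_∞^3, one has 1/x(q)^2 − 2 q x(q) = 3 q^2 (q^2; q^2)_∞^2 (q^{12}; q^{12})_∞^6 / ((q^4; q^4)_∞^2 (q^6; q^6)_∞^6) + (q^4; q^4)_∞^6 / ((q^2; q^2)_∞^2 (q^6; q^6)_∞^2 (q^{12}; q^{12})_∞^2). -/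
open Filter Topology

namespace CCF

/-- two-sided theta series -/
noncomputable def Th (s w : ℂ) : ℂ := ∑' j : ℤ, s ^ (j ^ 2) * w ^ j

lemma summable_nat (s w : ℂ) (hs0 : s ≠ 0) (hs : ‖s‖ < 1) (hw : w ≠ 0) :
    Summable (fun n : ℕ => ‖s ^ (n ^ 2) * w ^ n‖) := by
  refine summable_of_ratio_test_tendsto_lt_one (l := 0) one_pos ?_ ?_
  · exact Eventually.of_forall fun n => norm_ne_zero_iff.mpr
      (mul_ne_zero (pow_ne_zero _ hs0) (pow_ne_zero _ hw))
  · have h : ∀ n : ℕ, ‖‖s ^ ((n + 1) ^ 2) * w ^ (n + 1)‖‖ / ‖‖s ^ (n ^ 2) * w ^ n‖‖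
        = (‖s‖ ^ 2) ^ n * (‖s‖ * ‖w‖) := by
      intro n
      simp only [norm_mul, norm_pow, norm_norm]
      have h1 : ‖s‖ ≠ 0 := by positivity
      have h2 : ‖w‖ ≠ 0 := by positivity
      rw [div_eq_iff (by positivity)]
      ring
    simp only [h]
    have := (tendsto_pow_atTop_nhds_zero_of_lt_one (r := ‖s‖ ^ 2) (by positivity)
      (by nlinarith [norm_nonneg s])).mul_const (‖s‖ * ‖w‖)
    simpa using this

lemma summable_th (s w : ℂ) (hs0 : s ≠ 0) (hs : ‖s‖ < 1) (hw : w ≠ 0) :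
    Summable (fun j : ℤ => ‖s ^ (j ^ 2) * w ^ j‖) := by
  apply Summable.of_nat_of_neg
  · refine (summable_nat s w hs0 hs hw).congr fun n => ?_
    have h1 : s ^ ((n : ℤ) ^ 2) = s ^ (n ^ 2) := by exact_mod_cast zpow_natCast s (n ^ 2)
    rw [h1, zpow_natCast]
  · refine (summable_nat s w⁻¹ hs0 hs (inv_ne_zero hw)).congr fun n => ?_
    have h1 : s ^ ((n : ℤ) ^ 2) = s ^ (n ^ 2) := by exact_mod_cast zpow_natCast s (n ^ 2)
    rw [neg_sq, h1, zpow_neg, zpow_natCast, inv_pow]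

/-- index map for the parity split -/
def idx : (ℤ × ℤ) ⊕ (ℤ × ℤ) → ℤ × ℤ
  | Sum.inl a => (a.1 + a.2, a.1 - a.2)
  | Sum.inr a => (a.1 + a.2 + 1, a.1 - a.2)

lemma idx_bij : Function.Bijective idx := by
  constructor
  · rintro (⟨a, b⟩ | ⟨a, b⟩) (⟨c, d⟩ | ⟨c, d⟩) h <;> simp only [idx, Prod.mk.injEq] at h <;>
      simp only [Sum.inl.injEq, Sum.inr.injEq, Prod.mk.injEq, reduceCtorEq] <;> omega
  · rintro ⟨m, n⟩
    obtain ⟨k, hk | hk⟩ := Int.even_or_odd' (m + n)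
    · exact ⟨Sum.inl (k, m - k), by simp only [idx, Prod.mk.injEq]; omega⟩
    · exact ⟨Sum.inr (k, m - k - 1), by simp only [idx, Prod.mk.injEq]; omega⟩

lemma th_mul (s X Y : ℂ) (hs0 : s ≠ 0) (hs : ‖s‖ < 1) (hX : X ≠ 0) (hY : Y ≠ 0) :
    Th s (X * Y) * Th s (X / Y) = Th (s ^ 2) (X ^ 2) * Th (s ^ 2) (Y ^ 2)
      + s * X * Y * (Th (s ^ 2) (s ^ 2 * X ^ 2) * Th (s ^ 2) (s ^ 2 * Y ^ 2)) := by
  have hs2 : ‖s ^ 2‖ < 1 := by rw [norm_pow]; nlinarith [norm_nonneg s]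
  have hs20 : s ^ 2 ≠ 0 := pow_ne_zero 2 hs0
  have S1 := summable_th s (X * Y) hs0 hs (mul_ne_zero hX hY)
  have S2 := summable_th s (X / Y) hs0 hs (div_ne_zero hX hY)
  have S3 := summable_th (s ^ 2) (X ^ 2) hs20 hs2 (pow_ne_zero 2 hX)
  have S4 := summable_th (s ^ 2) (Y ^ 2) hs20 hs2 (pow_ne_zero 2 hY)
  have S5 := summable_th (s ^ 2) (s ^ 2 * X ^ 2) hs20 hs2 (mul_ne_zero hs20 (pow_ne_zero 2 hX))
  have S6 := summable_th (s ^ 2) (s ^ 2 * Y ^ 2) hs20 hs2 (mul_ne_zero hs20 (pow_ne_zero 2 hY))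
  unfold Th
  rw [tsum_mul_tsum_of_summable_norm S1 S2, tsum_mul_tsum_of_summable_norm S3 S4,
    tsum_mul_tsum_of_summable_norm S5 S6, ← tsum_mul_left]
  have Sm := summable_mul_of_summable_norm S1 S2
  have Sm' := (Equiv.ofBijective idx idx_bij).summable_iff.mpr Sm
  rw [← (Equiv.ofBijective idx idx_bij).tsum_eq, Summable.tsum_sum]
  · congr 1
    · refine tsum_congr fun a => ?_
      obtain ⟨k, l⟩ := a
      simp only [Equiv.ofBijective_apply, idx]
      simp only [div_eq_mul_inv, mul_zpow, ← zpow_natCast, ← zpow_mul, inv_zpow', zpow_sub₀ hX]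
      simp only [← zpow_neg_one, ← zpow_mul]
      have e1 : s ^ ((k + l) ^ 2) * s ^ ((k - l) ^ 2) = s ^ (((2:ℕ):ℤ) * k ^ 2) * s ^ (((2:ℕ):ℤ) * l ^ 2) := by
        rw [← zpow_add₀ hs0, ← zpow_add₀ hs0]; congr 1; push_cast; ring
      have e2 : X ^ (k + l) * (X ^ k * X ^ (l * -1)) = X ^ (((2:ℕ):ℤ) * k) := by
        rw [← zpow_add₀ hX, ← zpow_add₀ hX]; congr 1; push_cast; ring
      have e3 : Y ^ (k + l) * Y ^ (-(k-l)) = Y ^ (((2:ℕ):ℤ) * l) := by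
        rw [← zpow_add₀ hY]; congr 1; push_cast; ring
      linear_combination (X ^ (k + l) * (X ^ k * X ^ (l * -1)) * (Y ^ (k + l) * Y ^ (-(k-l)))) * e1
        + s ^ (((2:ℕ):ℤ) * k ^ 2) * s ^ (((2:ℕ):ℤ) * l ^ 2) * (Y ^ (k + l) * Y ^ (-(k-l))) * e2
        + s ^ (((2:ℕ):ℤ) * k ^ 2) * s ^ (((2:ℕ):ℤ) * l ^ 2) * X ^ (((2:ℕ):ℤ) * k) * e3
    · refine tsum_congr fun a => ?_
      obtain ⟨k, l⟩ := a
      simp only [Equiv.ofBijective_apply, idx]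
      simp only [div_eq_mul_inv, mul_zpow, ← zpow_natCast, ← zpow_mul, inv_zpow', zpow_sub₀ hX]
      simp only [← zpow_neg_one, ← zpow_mul]
      have e1 : s ^ ((k + l + 1) ^ 2) * s ^ ((k - l) ^ 2) = s * s ^ (((2:ℕ):ℤ) * k ^ 2) * s ^ (((2:ℕ):ℤ) * l ^ 2) * s ^ (((2:ℕ):ℤ) * k) * s ^ (((2:ℕ):ℤ) * l) := by
        rw [← zpow_add₀ hs0, ← zpow_one_add₀ hs0, ← zpow_add₀ hs0, ← zpow_add₀ hs0, ← zpow_add₀ hs0]; congr 1; push_cast; ring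
      have e2 : X ^ (k + l + 1) * (X ^ k * X ^ (l * -1)) = X * X ^ (((2:ℕ):ℤ) * k) := by
        rw [← zpow_add₀ hX, ← zpow_add₀ hX, ← zpow_one_add₀ hX]; congr 1; push_cast; ring
      have e3 : Y ^ (k + l + 1) * Y ^ (-(k-l)) = Y * Y ^ (((2:ℕ):ℤ) * l) := by
        rw [← zpow_add₀ hY, ← zpow_one_add₀ hY]; congr 1; push_cast; ring
      linear_combination (X ^ (k + l + 1) * (X ^ k * X ^ (l * -1)) * (Y ^ (k + l + 1) * Y ^ (-(k-l)))) * e1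
        + s * s ^ (((2:ℕ):ℤ) * k ^ 2) * s ^ (((2:ℕ):ℤ) * l ^ 2) * s ^ (((2:ℕ):ℤ) * k) * s ^ (((2:ℕ):ℤ) * l) * (Y ^ (k + l + 1) * Y ^ (-(k-l))) * e2
        + s * s ^ (((2:ℕ):ℤ) * k ^ 2) * s ^ (((2:ℕ):ℤ) * l ^ 2) * s ^ (((2:ℕ):ℤ) * k) * s ^ (((2:ℕ):ℤ) * l) * X * X ^ (((2:ℕ):ℤ) * k) * e3
  · exact Sm'.comp_injective Sum.inl_injective
  · exact Sm'.comp_injective Sum.inr_injective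

/-- quasi-periodicity -/
lemma th_shift (s w : ℂ) (hs0 : s ≠ 0) (hw : w ≠ 0) : Th s (w / s) = w * Th s (s * w) := by
  unfold Th
  rw [← (Equiv.addRight (1 : ℤ)).tsum_eq, ← tsum_mul_left]
  refine tsum_congr fun j => ?_
  simp only [Equiv.coe_addRight, div_zpow, mul_zpow]
  rw [show (j + 1) ^ 2 = j ^ 2 + j + (j + 1) by ring, zpow_add₀ hs0 (j ^ 2 + j), zpow_add₀ hs0 (j ^ 2),
    zpow_add_one₀ hw]
  have := zpow_ne_zero (j + 1) hs0
  field_simp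

/-- normalised theta series -/
noncomputable def T (s z : ℂ) : ℂ := Th s (-z / s)

lemma T_mul (s x y : ℂ) (hs0 : s ≠ 0) (hs : ‖s‖ < 1) (hx : x ≠ 0) (hy : y ≠ 0) :
    T s (x * y) * T s (x / y) = x * (x * Th (s ^ 2) (s ^ 2 * x ^ 2) * Th (s ^ 2) (y ^ 2)
      - Th (s ^ 2) (x ^ 2) * (y * Th (s ^ 2) (s ^ 2 * y ^ 2))) := by
  have h := th_mul s (-x / s) y hs0 hs (div_ne_zero (neg_ne_zero.mpr hx) hs0) hy
  have h2 := th_shift (s ^ 2) (x ^ 2) (pow_ne_zero 2 hs0) (pow_ne_zero 2 hx)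
  unfold T
  rw [show -(x * y) / s = -x / s * y by ring, show -(x / y) / s = -x / s / y by field_simp, h,
    show (-x / s) ^ 2 = x ^ 2 / s ^ 2 by ring, h2, show s ^ 2 * (x ^ 2 / s ^ 2) = x ^ 2 by field_simp]
  field_simp
  ring

lemma T_weier (s x y u v : ℂ) (hs0 : s ≠ 0) (hs : ‖s‖ < 1) (hx : x ≠ 0) (hy : y ≠ 0)
    (hu : u ≠ 0) (hv : v ≠ 0) :
    T s (x * y) * T s (x / y) * (T s (u * v) * T s (u / v))
      - T s (x * v) * T s (x / v) * (T s (u * y) * T s (u / y))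
      = - (u / v) * ((T s (v * y) * T s (v / y)) * (T s (x * u) * T s (x / u))) := by
  rw [T_mul s x y hs0 hs hx hy, T_mul s u v hs0 hs hu hv, T_mul s x v hs0 hs hx hv,
    T_mul s u y hs0 hs hu hy, T_mul s v y hs0 hs hv hy, T_mul s x u hs0 hs hx hu]
  field_simp
  ring

lemma summ (a q : ℂ) (hq : ‖q‖ < 1) : Summable (fun n : ℕ => ‖-(a * q ^ n)‖) := by
  simp only [norm_neg, norm_mul, norm_pow]
  exact (summable_geometric_of_lt_one (norm_nonneg q) hq).mul_left _

lemma mult (a q : ℂ) (hq : ‖q‖ < 1) : Multipliable (fun n : ℕ => 1 - a * q ^ n) := by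
  simpa [sub_eq_add_neg] using multipliable_one_add_of_summable (summ a q hq)

lemma tend (a q : ℂ) (hq : ‖q‖ < 1) :
    Tendsto (fun n => ∏ i ∈ Finset.range n, (1 - a * q ^ i)) atTop (𝓝 (qPoch a q)) :=
  (mult a q hq).tendsto_prod_tprod_nat

lemma fac_ne (a q : ℂ) (ha : ‖a‖ < 1) (hq : ‖q‖ < 1) (n : ℕ) : 1 - a * q ^ n ≠ 0 := by
  intro h
  have h1 : a * q ^ n = 1 := (sub_eq_zero.mp h).symm
  have h2 : ‖a‖ * ‖q‖ ^ n = 1 := by rw [← norm_pow, ← norm_mul, h1, norm_one]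
  have h3 : ‖q‖ ^ n ≤ 1 := pow_le_one₀ (norm_nonneg _) hq.le
  nlinarith [norm_nonneg a, norm_nonneg q]

lemma poch_ne (a q : ℂ) (ha : ‖a‖ < 1) (hq : ‖q‖ < 1) : qPoch a q ≠ 0 := by
  have := tprod_one_add_ne_zero_of_summable (f := fun n : ℕ => -(a * q ^ n))
    (fun n => by simpa [sub_eq_add_neg] using fac_ne a q ha hq n) (summ a q hq)
  simpa [qPoch, sub_eq_add_neg] using this

lemma poch_two (a q : ℂ) (hq : ‖q‖ < 1) :
    qPoch a q = qPoch a (q ^ 2) * qPoch (a * q) (q ^ 2) := by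
  have hq2 : ‖q ^ 2‖ < 1 := by rw [norm_pow]; exact pow_lt_one₀ (norm_nonneg _) hq (by norm_num)
  refine tendsto_nhds_unique ((tend a q hq).comp (tendsto_id.const_mul_atTop' (r := 2) two_pos)) ?_
  refine Tendsto.congr ?_ ((tend a (q ^ 2) hq2).mul (tend (a * q) (q ^ 2) hq2))
  intro n
  simp only [Function.comp, id]
  induction n with
  | zero => simp
  | succ n ih =>
    rw [show 2 * (n + 1) = 2 * n + 1 + 1 by ring]
    simp only [Finset.prod_range_succ, ← ih]
    ring

lemma poch_three (a q : ℂ) (hq : ‖q‖ < 1) :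
    qPoch a q = qPoch a (q ^ 3) * qPoch (a * q) (q ^ 3) * qPoch (a * q ^ 2) (q ^ 3) := by
  have hq2 : ‖q ^ 3‖ < 1 := by rw [norm_pow]; exact pow_lt_one₀ (norm_nonneg _) hq (by norm_num)
  refine tendsto_nhds_unique ((tend a q hq).comp (tendsto_id.const_mul_atTop' (r := 3) three_pos)) ?_
  refine Tendsto.congr ?_ (((tend a (q ^ 3) hq2).mul (tend (a * q) (q ^ 3) hq2)).mul
    (tend (a * q ^ 2) (q ^ 3) hq2))
  intro n
  simp only [Function.comp, id]
  induction n with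
  | zero => simp
  | succ n ih =>
    rw [show 3 * (n + 1) = 3 * n + 1 + 1 + 1 by ring]
    simp only [Finset.prod_range_succ, ← ih]
    ring

lemma poch_neg (a q : ℂ) (hq : ‖q‖ < 1) :
    qPoch a q * qPoch (-a) q = qPoch (a ^ 2) (q ^ 2) := by
  unfold qPoch
  rw [← (mult a q hq).tprod_mul (mult (-a) q hq)]
  refine tprod_congr fun n => ?_
  ring

lemma poch_succ (a q : ℂ) (hq : ‖q‖ < 1) : qPoch a q = (1 - a) * qPoch (a * q) q := by
  unfold qPoch
  rw [tprod_eq_zero_mul']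
  · simp [pow_succ', mul_assoc]
  · simpa [pow_succ', mul_assoc] using mult (a * q) q hq

/-- finite Pochhammer -/
noncomputable def fin (p : ℂ) (n : ℕ) : ℂ := ∏ i ∈ Finset.range n, (1 - p * p ^ i)

/-- reciprocal finite Pochhammer, extended by zero -/
noncomputable def r (p : ℂ) (m : ℤ) : ℂ := if m < 0 then 0 else (fin p m.toNat)⁻¹

lemma fin_ne (p : ℂ) (hp : ‖p‖ < 1) (n : ℕ) : fin p n ≠ 0 :=
  Finset.prod_ne_zero_iff.mpr fun i _ => fac_ne p p hp hp i

lemma r_rec (p : ℂ) (hp : ‖p‖ < 1) (m : ℤ) : r p (m - 1) = (1 - p ^ m) * r p m := by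
  unfold r
  rcases lt_trichotomy m 0 with h | h | h
  · rw [if_pos h, if_pos (by omega)]; simp
  · subst h; simp
  · obtain ⟨n, rfl⟩ : ∃ n : ℕ, m = n + 1 := ⟨(m - 1).toNat, by omega⟩
    rw [if_neg (by omega), if_neg (by omega)]
    have e1 : ((n : ℤ) + 1 - 1).toNat = n := by omega
    have e2 : ((n : ℤ) + 1).toNat = n + 1 := by omega
    rw [e1, e2]
    have h1 := fin_ne p hp n
    have h2 := fac_ne p p hp hp n
    have h3 : fin p (n + 1) = fin p n * (1 - p * p ^ n) := Finset.prod_range_succ _ _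
    have h4 : p ^ ((n : ℤ) + 1) = p * p ^ n := by
      rw [mul_comm, ← pow_succ]; exact_mod_cast zpow_natCast p (n + 1)
    rw [h3, h4]
    field_simp

/-- coefficients of the finite triple product -/
noncomputable def c (s : ℂ) (n : ℕ) (j : ℤ) : ℂ :=
  fin (s ^ 2) (2 * n) * r (s ^ 2) (n - j) * r (s ^ 2) (n + j)

lemma c_rec (s : ℂ) (hs0 : s ≠ 0) (hs : ‖s‖ < 1) (n : ℕ) (j : ℤ) :
    c s (n + 1) j = (1 + (s ^ 2) ^ (2 * n + 1)) * c s n j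
      + (s ^ 2) ^ n * ((s ^ 2) * ((s ^ 2) ^ j)⁻¹) * c s n (j - 1)
      + (s ^ 2) ^ (n + 1) * (s ^ 2) ^ j * c s n (j + 1) := by
  have hp : ‖s ^ 2‖ < 1 := by rw [norm_pow]; exact pow_lt_one₀ (norm_nonneg _) hs (by norm_num)
  have hp0 : s ^ 2 ≠ 0 := pow_ne_zero 2 hs0
  unfold c
  generalize s ^ 2 = p at *
  have hw := zpow_ne_zero j hp0
  have a1 : r p (n - j) = (1 - p * p ^ n * (p ^ j)⁻¹) * r p (n + 1 - j) := by
    rw [show (n : ℤ) - j = n + 1 - j - 1 by ring, r_rec p hp, zpow_sub₀ hp0, zpow_add_one₀ hp0,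
      zpow_natCast]; ring
  have a2 : r p (n - j - 1) = (1 - p ^ n * (p ^ j)⁻¹) * r p (n - j) := by
    rw [r_rec p hp, zpow_sub₀ hp0, zpow_natCast, div_eq_mul_inv]
  have b1 : r p (n + j) = (1 - p * p ^ n * p ^ j) * r p (n + 1 + j) := by
    rw [show (n : ℤ) + j = n + 1 + j - 1 by ring, r_rec p hp, zpow_add₀ hp0, zpow_add_one₀ hp0,
      zpow_natCast]; ring
  have b2 : r p (n + j - 1) = (1 - p ^ n * p ^ j) * r p (n + j) := by
    rw [r_rec p hp, zpow_add₀ hp0, zpow_natCast]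
  have f1 : fin p (2 * (n + 1)) = fin p (2 * n) * (1 - p * p ^ (2 * n)) * (1 - p * p ^ (2 * n + 1)) := by
    rw [show 2 * (n + 1) = 2 * n + 1 + 1 by ring]
    simp only [fin, Finset.prod_range_succ]
  push_cast
  rw [f1, show (n : ℤ) - (j - 1) = n + 1 - j by ring, show (n : ℤ) + (j - 1) = n + j - 1 by ring,
    show (n : ℤ) - (j + 1) = n - j - 1 by ring, show (n : ℤ) + (j + 1) = n + 1 + j by ring,
    a2, b2, a1, b1]
  field_simp
  ring

lemma finite_triple (s z : ℂ) (hs0 : s ≠ 0) (hs : ‖s‖ < 1) (hz : z ≠ 0) (n : ℕ) :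
    HasSum (fun j : ℤ => c s n j * (s ^ (j ^ 2) * (-z / s) ^ j))
      (∏ k ∈ Finset.range n, ((1 - z * (s ^ 2) ^ k) * (1 - s ^ 2 / z * (s ^ 2) ^ k))) := by
  induction n with
  | zero =>
    have : (fun j : ℤ => c s 0 j * (s ^ (j ^ 2) * (-z / s) ^ j)) = fun j => if j = 0 then 1 else 0 := by
      ext j
      rcases lt_trichotomy j 0 with h | h | h
      · rw [if_neg (by omega)]; simp [c, r, h]
      · subst h; simp [c, r, fin]
      · rw [if_neg (by omega)]; simp [c, r, h]
    rw [this]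
    simpa using hasSum_ite_eq (0 : ℤ) (1 : ℂ)
  | succ n ih =>
    have h1 := (Equiv.subRight (1 : ℤ)).hasSum_iff.mpr ih
    have h2 := (Equiv.addRight (1 : ℤ)).hasSum_iff.mpr ih
    have h := ((ih.mul_left (1 + (s ^ 2) ^ (2 * n + 1))).add (h1.mul_left (- z * (s ^ 2) ^ n))).add
      (h2.mul_left (- (s ^ 2) ^ (n + 1) / z))
    rw [Finset.prod_range_succ]
    refine Eq.mpr (congrArg₂ (fun (f : ℤ → ℂ) v => HasSum f v) ?_ ?_) h
    · ext j
      simp only [Function.comp, Equiv.subRight_apply, Equiv.coe_addRight]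
      rw [c_rec s hs0 hs]
      have hw : -z / s ≠ 0 := div_ne_zero (neg_ne_zero.mpr hz) hs0
      have e1 : (j - 1) ^ 2 = j ^ 2 - (2 : ℕ) * j + 1 := by push_cast; ring
      have e2 : (j + 1) ^ 2 = j ^ 2 + (2 : ℕ) * j + 1 := by push_cast; ring
      rw [e1, e2, zpow_add_one₀ hs0, zpow_add_one₀ hs0, zpow_add₀ hs0, zpow_sub₀ hs0, zpow_mul s,
        zpow_natCast, zpow_add_one₀ hw, zpow_sub_one₀ hw]
      have := zpow_ne_zero j (pow_ne_zero 2 hs0)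
      field_simp
    · field_simp
      ring

lemma tend_fin (p : ℂ) (hp : ‖p‖ < 1) : Tendsto (fin p) atTop (𝓝 (qPoch p p)) := tend p p hp

lemma tend_r (p : ℂ) (hp : ‖p‖ < 1) : Tendsto (fun n : ℕ => r p n) atTop (𝓝 (qPoch p p)⁻¹) := by
  refine ((tend_fin p hp).inv₀ (poch_ne p p hp hp)).congr fun n => ?_
  simp [r]

lemma r_bound (p : ℂ) (hp : ‖p‖ < 1) : ∃ C, 0 ≤ C ∧ ∀ m, ‖r p m‖ ≤ C := by
  obtain ⟨C, hC⟩ := (tend_r p hp).norm.bddAbove_range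
  have hC' : ∀ n : ℕ, ‖r p n‖ ≤ C := fun n => hC ⟨n, rfl⟩
  have h0 : 0 ≤ C := (norm_nonneg _).trans (hC' 0)
  refine ⟨C, h0, fun m => ?_⟩
  by_cases h : m < 0
  · simpa [r, h] using h0
  · obtain ⟨n, rfl⟩ := Int.eq_ofNat_of_zero_le (not_lt.mp h)
    exact hC' n

lemma tend_r' (p : ℂ) (hp : ‖p‖ < 1) (j : ℤ) :
    Tendsto (fun n : ℕ => r p (n + j)) atTop (𝓝 (qPoch p p)⁻¹) := by
  have h : Tendsto (fun n : ℕ => ((n : ℤ) + j).toNat) atTop atTop := by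
    refine tendsto_atTop.mpr fun b => ?_
    filter_upwards [eventually_ge_atTop (b + j.natAbs)] with n hn
    omega
  refine ((tend_r p hp).comp h).congr' ?_
  filter_upwards [eventually_ge_atTop j.natAbs] with n hn
  simp only [Function.comp]
  congr 1
  omega

lemma triple (s z : ℂ) (hs0 : s ≠ 0) (hs : ‖s‖ < 1) (hz : z ≠ 0) :
    T s z = qPoch (s ^ 2) (s ^ 2) * (qPoch z (s ^ 2) * qPoch (s ^ 2 / z) (s ^ 2)) := by
  have hp : ‖s ^ 2‖ < 1 := by rw [norm_pow]; exact pow_lt_one₀ (norm_nonneg _) hs (by norm_num)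
  have hE := poch_ne (s ^ 2) (s ^ 2) hp hp
  have hw : -z / s ≠ 0 := div_ne_zero (neg_ne_zero.mpr hz) hs0
  have L1 := (tend z (s ^ 2) hp).mul (tend (s ^ 2 / z) (s ^ 2) hp)
  obtain ⟨C, hC0, hC⟩ := r_bound (s ^ 2) hp
  obtain ⟨D, hD⟩ := (tend_fin (s ^ 2) hp).norm.bddAbove_range
  have hD' : ∀ n : ℕ, ‖fin (s ^ 2) n‖ ≤ D := fun n => hD ⟨n, rfl⟩
  have hD0 : 0 ≤ D := (norm_nonneg _).trans (hD' 0)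
  have L2 := tendsto_tsum_of_dominated_convergence (𝓕 := atTop)
    (f := fun (n : ℕ) (j : ℤ) => c s n j * (s ^ (j ^ 2) * (-z / s) ^ j))
    (g := fun j : ℤ => (qPoch (s ^ 2) (s ^ 2))⁻¹ * (s ^ (j ^ 2) * (-z / s) ^ j))
    (bound := fun j => (D * C * C) * ‖s ^ (j ^ 2) * (-z / s) ^ j‖)
    ((summable_th s _ hs0 hs hw).mul_left _) ?_ ?_
  · rw [tsum_mul_left] at L2
    have L3 := tendsto_nhds_unique (L2.congr fun n => by
      rw [(finite_triple s z hs0 hs hz n).tsum_eq, Finset.prod_mul_distrib]) L1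
    rw [← L3]
    unfold T Th
    field_simp
  · intro j
    refine Tendsto.mul_const _ ?_
    have h1 : Tendsto (fun n : ℕ => fin (s ^ 2) (2 * n)) atTop (𝓝 (qPoch (s ^ 2) (s ^ 2))) :=
      (tend_fin (s ^ 2) hp).comp (tendsto_id.const_mul_atTop' (r := 2) two_pos)
    have h := (h1.mul (tend_r' (s ^ 2) hp (-j))).mul (tend_r' (s ^ 2) hp j)
    rw [mul_inv_cancel₀ hE, one_mul] at h
    exact h
  · refine Eventually.of_forall fun n j => ?_
    rw [norm_mul]
    gcongr
    unfold c
    rw [norm_mul, norm_mul]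
    gcongr
    · exact hD' _
    · exact hC _
    · exact hC _

lemma npow (q : ℂ) (hq : ‖q‖ < 1) (n : ℕ) (hn : n ≠ 0) : ‖q ^ n‖ < 1 := by
  rw [norm_pow]; exact pow_lt_one₀ (norm_nonneg _) hq hn

/-- theta product in base `q ^ 6` -/
noncomputable def th (q z : ℂ) : ℂ := qPoch z (q ^ 6) * qPoch (q ^ 6 / z) (q ^ 6)

lemma th_weier (q x y u v : ℂ) (hq0 : q ≠ 0) (hq : ‖q‖ < 1) (hx : x ≠ 0) (hy : y ≠ 0)
    (hu : u ≠ 0) (hv : v ≠ 0) :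
    th q (x * y) * th q (x / y) * (th q (u * v) * th q (u / v))
      - th q (x * v) * th q (x / v) * (th q (u * y) * th q (u / y))
      = - (u / v) * ((th q (v * y) * th q (v / y)) * (th q (x * u) * th q (x / u))) := by
  have hs0 : q ^ 3 ≠ 0 := pow_ne_zero 3 hq0
  have hs := npow q hq 3 (by norm_num)
  have h6 := npow q hq 6 (by norm_num)
  have hE := poch_ne (q ^ 6) (q ^ 6) h6 h6
  have key : ∀ z : ℂ, z ≠ 0 → T (q ^ 3) z = qPoch (q ^ 6) (q ^ 6) * th q z := by
    intro z hz
    rw [triple (q ^ 3) z hs0 hs hz, show (q ^ 3) ^ 2 = q ^ 6 by ring, th]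
  have h := T_weier (q ^ 3) x y u v hs0 hs hx hy hu hv
  rw [key _ (mul_ne_zero hx hy), key _ (div_ne_zero hx hy), key _ (mul_ne_zero hu hv),
    key _ (div_ne_zero hu hv), key _ (mul_ne_zero hx hv), key _ (div_ne_zero hx hv),
    key _ (mul_ne_zero hu hy), key _ (div_ne_zero hu hy), key _ (mul_ne_zero hv hy),
    key _ (div_ne_zero hv hy), key _ (mul_ne_zero hx hu), key _ (div_ne_zero hx hu)] at h
  have hE4 : qPoch (q ^ 6) (q ^ 6) ^ 4 ≠ 0 := pow_ne_zero 4 hE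
  apply mul_left_cancel₀ hE4
  linear_combination h

lemma th_eq (q z w : ℂ) (hz : z ≠ 0) (h : z * w = q ^ 6) :
    th q z = qPoch z (q ^ 6) * qPoch w (q ^ 6) := by
  rw [th, ← h, mul_div_cancel_left₀ _ hz]

lemma relB (q : ℂ) (hq0 : q ≠ 0) (hq : ‖q‖ < 1) :
    qPoch q (q ^ 6) * qPoch (q ^ 5) (q ^ 6) * qPoch (q ^ 3) (q ^ 6) ^ 6
      + q * (qPoch q (q ^ 6) * qPoch (q ^ 5) (q ^ 6)) ^ 4
      = (qPoch (q ^ 2) (q ^ 6) * qPoch (q ^ 4) (q ^ 6)) ^ 4 := by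
  have n (k : ℕ) : q ^ k ≠ 0 := pow_ne_zero k hq0
  have h := th_weier q (q ^ 3) 1 (q ^ 2) q hq0 hq (n 3) one_ne_zero (n 2) hq0
  rw [show q ^ 2 * q = q ^ 3 by ring, show q ^ 2 / q = q by field_simp,
    show q ^ 3 * q = q ^ 4 by ring, show q ^ 3 / q = q ^ 2 by field_simp,
    show q ^ 3 * q ^ 2 = q ^ 5 by ring, show q ^ 3 / q ^ 2 = q by field_simp] at h
  simp only [mul_one, div_one] at h
  rw [th_eq q q (q ^ 5) hq0 (by ring), th_eq q (q ^ 2) (q ^ 4) (n 2) (by ring),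
    th_eq q (q ^ 3) (q ^ 3) (n 3) (by ring), th_eq q (q ^ 4) (q ^ 2) (n 4) (by ring),
    th_eq q (q ^ 5) q (n 5) (by ring)] at h
  linear_combination h

lemma relA (q : ℂ) (hq0 : q ≠ 0) (hq : ‖q‖ < 1) :
    (qPoch (-q ^ 3) (q ^ 6)) ^ 2 * (qPoch (-q ^ 2) (q ^ 6) * qPoch (-q ^ 4) (q ^ 6))
        * (qPoch q (q ^ 6) * qPoch (q ^ 5) (q ^ 6))
      - (qPoch (-q ^ 2) (q ^ 6) * qPoch (-q ^ 4) (q ^ 6))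
        * (qPoch (-q) (q ^ 6) * qPoch (-q ^ 5) (q ^ 6)) * (qPoch (q ^ 3) (q ^ 6)) ^ 2
      = - q * ((qPoch q (q ^ 6) * qPoch (q ^ 5) (q ^ 6))
        * (qPoch (-q) (q ^ 6) * qPoch (-q ^ 5) (q ^ 6)) * (2 * qPoch (-q ^ 6) (q ^ 6) ^ 2)) := by
  have n (k : ℕ) : q ^ k ≠ 0 := pow_ne_zero k hq0
  have nn (k : ℕ) : -q ^ k ≠ 0 := neg_ne_zero.mpr (n k)
  have h6 := npow q hq 6 (by norm_num)
  obtain ⟨r, hr⟩ : ∃ r : ℂ, r ^ 2 = q := ⟨q ^ ((1 : ℂ) / 2), by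
    rw [← Complex.cpow_nat_mul]; simp⟩
  have hr0 : r ≠ 0 := by rintro rfl; simp at hr; exact hq0 hr.symm
  have m (k : ℕ) : r ^ k ≠ 0 := pow_ne_zero k hr0
  have h := th_weier q (-r ^ 5) r (r ^ 5) (r ^ 3) hq0 hq (neg_ne_zero.mpr (m 5)) hr0 (m 5) (m 3)
  rw [show -r ^ 5 * r = -q ^ 3 by rw [← hr]; ring,
    show -r ^ 5 / r = -q ^ 2 by rw [← hr]; field_simp,
    show r ^ 5 * r ^ 3 = q ^ 4 by rw [← hr]; ring,
    show r ^ 5 / r ^ 3 = q by rw [← hr]; field_simp,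
    show -r ^ 5 * r ^ 3 = -q ^ 4 by rw [← hr]; ring,
    show -r ^ 5 / r ^ 3 = -q by rw [← hr]; field_simp,
    show r ^ 5 * r = q ^ 3 by rw [← hr]; ring,
    show r ^ 5 / r = q ^ 2 by rw [← hr]; field_simp,
    show r ^ 3 * r = q ^ 2 by rw [← hr]; ring,
    show r ^ 3 / r = q by rw [← hr]; field_simp,
    show -r ^ 5 * r ^ 5 = -q ^ 5 by rw [← hr]; ring,
    show -r ^ 5 / r ^ 5 = -1 by field_simp] at h
  have hm1 : qPoch (-1) (q ^ 6) = 2 * qPoch (-q ^ 6) (q ^ 6) := by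
    rw [poch_succ _ _ h6]; norm_num
  rw [th_eq q q (q ^ 5) hq0 (by ring), th_eq q (q ^ 2) (q ^ 4) (n 2) (by ring),
    th_eq q (q ^ 3) (q ^ 3) (n 3) (by ring), th_eq q (q ^ 4) (q ^ 2) (n 4) (by ring),
    th_eq q (-q) (-q ^ 5) (neg_ne_zero.mpr hq0) (by ring),
    th_eq q (-q ^ 2) (-q ^ 4) (nn 2) (by ring),
    th_eq q (-q ^ 3) (-q ^ 3) (nn 3) (by ring), th_eq q (-q ^ 4) (-q ^ 2) (nn 4) (by ring),
    th_eq q (-q ^ 5) (-q) (nn 5) (by ring), th_eq q (-1) (-q ^ 6) (by norm_num) (by ring), hm1] at h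
  have h2 := poch_ne (q ^ 2) (q ^ 6) (npow q hq 2 (by norm_num)) h6
  have h4 := poch_ne (q ^ 4) (q ^ 6) (npow q hq 4 (by norm_num)) h6
  apply mul_left_cancel₀ (mul_ne_zero h2 h4)
  linear_combination h

lemma unit1 (q : ℂ) (hq : ‖q‖ < 1) :
    (qPoch q (q ^ 6) * qPoch (q ^ 5) (q ^ 6)) * (qPoch (-q) (q ^ 6) * qPoch (-q ^ 5) (q ^ 6))
      * (qPoch (-q ^ 2) (q ^ 6) * qPoch (-q ^ 4) (q ^ 6)) = 1 := by
  have h6 := npow q hq 6 (by norm_num)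
  have h2 := poch_ne (q ^ 2) (q ^ 6) (npow q hq 2 (by norm_num)) h6
  have h4 := poch_ne (q ^ 4) (q ^ 6) (npow q hq 4 (by norm_num)) h6
  have e1 := poch_neg q (q ^ 6) h6
  have e5 := poch_neg (q ^ 5) (q ^ 6) h6
  have e2 := poch_neg (q ^ 2) (q ^ 6) h6
  have e4 := poch_neg (q ^ 4) (q ^ 6) h6
  have f2 := poch_two (q ^ 2) (q ^ 6) h6
  have f4 := poch_two (q ^ 4) (q ^ 6) h6
  ring_nf at e1 e5 e2 e4 f2 f4 h2 h4 ⊢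
  apply mul_left_cancel₀ (mul_ne_zero h2 h4)
  calc _ = (qPoch q (q ^ 6) * qPoch (-q) (q ^ 6)) * (qPoch (q ^ 5) (q ^ 6) * qPoch (-q ^ 5) (q ^ 6))
      * (qPoch (q ^ 2) (q ^ 6) * qPoch (-q ^ 2) (q ^ 6))
      * (qPoch (q ^ 4) (q ^ 6) * qPoch (-q ^ 4) (q ^ 6)) := by ring
    _ = _ := by rw [e1, e5, e2, e4, f2, f4]; ring

lemma unit2 (q : ℂ) (hq : ‖q‖ < 1) :
    qPoch (-q ^ 6) (q ^ 6) * qPoch (q ^ 3) (q ^ 6) * qPoch (-q ^ 3) (q ^ 6) = 1 := by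
  have h6 := npow q hq 6 (by norm_num)
  have h := poch_ne (q ^ 6) (q ^ 6) h6 h6
  have e3 := poch_neg (q ^ 3) (q ^ 6) h6
  have e6 := poch_neg (q ^ 6) (q ^ 6) h6
  have f6 := poch_two (q ^ 6) (q ^ 6) h6
  ring_nf at e3 e6 f6 h ⊢
  apply mul_left_cancel₀ h
  calc _ = (qPoch (q ^ 6) (q ^ 6) * qPoch (-q ^ 6) (q ^ 6))
      * (qPoch (q ^ 3) (q ^ 6) * qPoch (-q ^ 3) (q ^ 6)) := by ring
    _ = _ := by rw [e3, e6, f6]; ring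

lemma odd_split (q : ℂ) (hq : ‖q‖ < 1) : qPoch q (q ^ 2)
    = qPoch q (q ^ 6) * qPoch (q ^ 3) (q ^ 6) * qPoch (q ^ 5) (q ^ 6) := by
  have h := poch_three q (q ^ 2) (npow q hq 2 (by norm_num))
  rw [h]; ring_nf

lemma x_eq (q : ℂ) (hq : ‖q‖ < 1) : x q
    = qPoch q (q ^ 6) * qPoch (q ^ 5) (q ^ 6) / qPoch (q ^ 3) (q ^ 6) ^ 2 := by
  have h3 := poch_ne (q ^ 3) (q ^ 6) (npow q hq 3 (by norm_num)) (npow q hq 6 (by norm_num))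
  rw [x, odd_split q hq]
  field_simp

lemma x_neg (q : ℂ) (hq : ‖q‖ < 1) : x (-q)
    = qPoch (-q) (q ^ 6) * qPoch (-q ^ 5) (q ^ 6) / qPoch (-q ^ 3) (q ^ 6) ^ 2 := by
  rw [x_eq (-q) (by simpa using hq), show (-q) ^ 6 = q ^ 6 by ring, show (-q) ^ 5 = -q ^ 5 by ring,
    show (-q) ^ 3 = -q ^ 3 by ring]

lemma x_sq (q : ℂ) (hq : ‖q‖ < 1) : x (q ^ 2) = x q * x (-q) := by
  have e1 := poch_neg q (q ^ 2) (npow q hq 2 (by norm_num))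
  have e3 := poch_neg (q ^ 3) (q ^ 6) (npow q hq 6 (by norm_num))
  unfold x
  rw [show (-q) ^ 2 = q ^ 2 by ring, show (-q) ^ 6 = q ^ 6 by ring,
    show (-q) ^ 3 = -q ^ 3 by ring, ← e1, show (q ^ 2) ^ 3 = (q ^ 3) ^ 2 by ring,
    show (q ^ 2) ^ 6 = (q ^ 6) ^ 2 by ring, ← e3]
  ring

lemma mainA (q : ℂ) (hq0 : q ≠ 0) (hq : ‖q‖ < 1) :
    x q ^ 2 + 2 * q * x q * x (q ^ 2) ^ 2 = x (q ^ 2) := by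
  have h6 := npow q hq 6 (by norm_num)
  have h3 := poch_ne (q ^ 3) (q ^ 6) (npow q hq 3 (by norm_num)) h6
  have h3' := poch_ne (-q ^ 3) (q ^ 6) (by simpa using npow q hq 3 (by norm_num)) h6
  have hA := relA q hq0 hq
  have u1 := unit1 q hq
  have u2 := unit2 q hq
  rw [x_sq q hq, x_neg q hq, x_eq q hq]
  generalize qPoch q (q ^ 6) * qPoch (q ^ 5) (q ^ 6) = t1 at *
  generalize qPoch (-q) (q ^ 6) * qPoch (-q ^ 5) (q ^ 6) = t1' at *
  generalize qPoch (-q ^ 2) (q ^ 6) * qPoch (-q ^ 4) (q ^ 6) = t2' at *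
  generalize qPoch (q ^ 3) (q ^ 6) = a at *
  generalize qPoch (-q ^ 3) (q ^ 6) = b at *
  generalize qPoch (-q ^ 6) (q ^ 6) = d at *
  have k1 : b ^ 2 * t1 - t1' * a ^ 2 = - q * (t1 ^ 2 * t1' ^ 2 * (2 * d ^ 2)) := by
    linear_combination (t1 * t1') * hA + (t1' * a ^ 2 - b ^ 2 * t1) * u1
  have k2 : (b ^ 2 * t1 - t1' * a ^ 2) * (a ^ 2 * b ^ 2) = - 2 * q * (t1 ^ 2 * t1' ^ 2) := by
    linear_combination (a ^ 2 * b ^ 2) * k1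
      - 2 * q * t1 ^ 2 * t1' ^ 2 * (d * a * b + 1) * u2
  field_simp
  linear_combination t1 * k2

lemma mainB (q : ℂ) (hq0 : q ≠ 0) (hq : ‖q‖ < 1) :
    x q = qPoch q q * qPoch (q ^ 6) (q ^ 6) ^ 3 / (qPoch (q ^ 2) (q ^ 2) * qPoch (q ^ 3) (q ^ 3) ^ 3) ∧
    1 + q * x q ^ 3 = qPoch (q ^ 2) (q ^ 2) ^ 5 * qPoch (q ^ 6) (q ^ 6)
      / (qPoch q q * qPoch (q ^ 3) (q ^ 3) ^ 5) := by
  have h6 := npow q hq 6 (by norm_num)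
  have N (k : ℕ) (hk : k ≠ 0) : qPoch (q ^ k) (q ^ 6) ≠ 0 := poch_ne (q ^ k) (q ^ 6) (npow q hq k hk) h6
  have h1 := N 1 one_ne_zero
  rw [pow_one] at h1
  have h2 := N 2 (by norm_num)
  have h3 := N 3 (by norm_num)
  have h4 := N 4 (by norm_num)
  have h5 := N 5 (by norm_num)
  have h6' := N 6 (by norm_num)
  have E2 : qPoch (q ^ 2) (q ^ 2)
      = qPoch (q ^ 2) (q ^ 6) * qPoch (q ^ 4) (q ^ 6) * qPoch (q ^ 6) (q ^ 6) := by
    rw [poch_three _ _ (npow q hq 2 (by norm_num))]; ring_nf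
  have E3 : qPoch (q ^ 3) (q ^ 3) = qPoch (q ^ 3) (q ^ 6) * qPoch (q ^ 6) (q ^ 6) := by
    rw [poch_two _ _ (npow q hq 3 (by norm_num))]; ring_nf
  have E1 : qPoch q q = qPoch q (q ^ 2) * qPoch (q ^ 2) (q ^ 2) := by
    rw [poch_two _ _ hq]; ring_nf
  have hB := relB q hq0 hq
  rw [E1, E3, E2, odd_split q hq, x_eq q hq]
  constructor
  · field_simp
  · field_simp
    linear_combination hB

end CCF

theorem cubic_continued_fraction_identity (q : ℂ) (hq0 : 0 < ‖q‖) (hq1 : ‖q‖ < 1) :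
    1 / x q ^ 2 - 2 * q * x q =
      3 * q ^ 2 * qPoch (q ^ 2) (q ^ 2) ^ 2 * qPoch (q ^ 12) (q ^ 12) ^ 6 /
          (qPoch (q ^ 4) (q ^ 4) ^ 2 * qPoch (q ^ 6) (q ^ 6) ^ 6) +
        qPoch (q ^ 4) (q ^ 4) ^ 6 /
          (qPoch (q ^ 2) (q ^ 2) ^ 2 * qPoch (q ^ 6) (q ^ 6) ^ 2 *
            qPoch (q ^ 12) (q ^ 12) ^ 2) := by
  have hq : q ≠ 0 := norm_pos_iff.mp hq0
  have h2 := CCF.npow q hq1 2 (by norm_num)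
  have hA := CCF.mainA q hq hq1
  obtain ⟨hx, hB⟩ := CCF.mainB (q ^ 2) (pow_ne_zero 2 hq) h2
  have N (k : ℕ) (hk : k ≠ 0) : qPoch (q ^ k) (q ^ k) ≠ 0 :=
    CCF.poch_ne _ _ (CCF.npow q hq1 k hk) (CCF.npow q hq1 k hk)
  have n2 := N 2 (by norm_num)
  have n4 := N 4 (by norm_num)
  have n6 := N 6 (by norm_num)
  have n12 := N 12 (by norm_num)
  have nx : x q ≠ 0 := by
    rw [(CCF.mainB q hq hq1).1]
    have := N 3 (by norm_num)
    have n1 := N 1 one_ne_zero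
    rw [pow_one] at n1
    positivity
  rw [← pow_mul, ← pow_mul, ← pow_mul] at hx hB
  norm_num only at hx hB
  have ny : x (q ^ 2) ≠ 0 := by
    rw [hx]; positivity
  have L : 1 / x q ^ 2 - 2 * q * x q = 1 / x (q ^ 2) + 4 * q ^ 2 * x (q ^ 2) ^ 2 := by
    field_simp
    generalize x (q ^ 2) = Y at *
    generalize x q = X at *
    linear_combination (-1 - 2 * q * X * Y) * hA
  have R : qPoch (q ^ 4) (q ^ 4) ^ 6 /
          (qPoch (q ^ 2) (q ^ 2) ^ 2 * qPoch (q ^ 6) (q ^ 6) ^ 2 *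
            qPoch (q ^ 12) (q ^ 12) ^ 2) = (1 + q ^ 2 * x (q ^ 2) ^ 3) / x (q ^ 2) := by
    rw [hB, hx]
    field_simp
  have R2 : 3 * q ^ 2 * qPoch (q ^ 2) (q ^ 2) ^ 2 * qPoch (q ^ 12) (q ^ 12) ^ 6 /
          (qPoch (q ^ 4) (q ^ 4) ^ 2 * qPoch (q ^ 6) (q ^ 6) ^ 6) = 3 * q ^ 2 * x (q ^ 2) ^ 2 := by
    rw [hx]
    field_simp
  rw [L, R, R2]
  field_simp
  ring
end

section
/- For every complex number q with |q| < 1, the square of the cubic theta function c(q) = 3 (q^3; q^3)_∞^3 / (q; q)_∞ satisfies the 2-dissection c(q)^2 = ( q^2 c(q^4)^2 + 9 (q^4; q^4)_∞^6 (q^6; q^6)_∞^4 / ((q^2; q^2)_∞^4 (q^{12}; q^{12})_∞^2) ) + 6 q c(q^4) (q^4; q^4)_∞^3 (q^6; q^6)_∞^2 / ((q^2; q^2)_∞^2 (q^{12}; q^{12})_∞). -/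
/-- The cubic theta function `c(q) = 3 (q³; q³)_∞³ / (q; q)_∞`. -/
noncomputable def c (q : ℂ) : ℂ := 3 * qPoch (q ^ 3) (q ^ 3) ^ 3 / qPoch q q

open Filter Topology

namespace CSq

lemma hasSum_congr_fun {ι : Type*} {f g : ι → ℂ} {a : ℂ} (h : ∀ i, f i = g i) :
    HasSum f a ↔ HasSum g a := by
  rw [funext h]

lemma tendsto_qPoch (a : ℂ) {q : ℂ} (hq : ‖q‖ < 1) :
    Tendsto (fun N => ∏ n ∈ Finset.range N, (1 - a * q ^ n)) atTop (𝓝 (qPoch a q)) := by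
  have hs : Summable fun n : ℕ => ‖-(a * q ^ n)‖ := by
    simp only [norm_neg, norm_mul, norm_pow]
    exact (summable_geometric_of_lt_one (norm_nonneg _) hq).mul_left _
  have := (multipliable_one_add_of_summable hs).hasProd.tendsto_prod_nat
  simpa [qPoch, sub_eq_add_neg] using this

lemma qPoch_ne_zero {a q : ℂ} (ha : ‖a‖ < 1) (hq : ‖q‖ < 1) : qPoch a q ≠ 0 := by
  have hs : Summable fun n : ℕ => ‖-(a * q ^ n)‖ := by
    simp only [norm_neg, norm_mul, norm_pow]
    exact (summable_geometric_of_lt_one (norm_nonneg _) hq).mul_left _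
  have := tprod_one_add_ne_zero_of_summable (f := fun n : ℕ => -(a * q ^ n)) ?_ hs
  · simpa [qPoch, sub_eq_add_neg] using this
  · intro n h
    have h1 : a * q ^ n = 1 := by linear_combination -h
    have h2 : ‖a * q ^ n‖ < 1 := by
      rw [norm_mul, norm_pow]
      calc ‖a‖ * ‖q‖ ^ n ≤ ‖a‖ * 1 := by
            gcongr
            exact pow_le_one₀ (norm_nonneg _) hq.le
        _ < 1 := by simpa using ha
    rw [h1] at h2
    simp at h2

lemma qPoch_split (a : ℂ) {q : ℂ} (hq : ‖q‖ < 1) (m : ℕ) (hm : 0 < m) :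
    qPoch a q = ∏ i ∈ Finset.range m, qPoch (a * q ^ i) (q ^ m) := by
  have hqm : ‖q ^ m‖ < 1 := by
    rw [norm_pow]; exact pow_lt_one₀ (norm_nonneg _) hq hm.ne'
  have h1 : Tendsto (fun N => ∏ n ∈ Finset.range (m * N), (1 - a * q ^ n)) atTop
      (𝓝 (qPoch a q)) :=
    (tendsto_qPoch a hq).comp (tendsto_id.const_mul_atTop' hm)
  have h2 : Tendsto (fun N => ∏ i ∈ Finset.range m, ∏ n ∈ Finset.range N,
      (1 - a * q ^ i * (q ^ m) ^ n)) atTop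
      (𝓝 (∏ i ∈ Finset.range m, qPoch (a * q ^ i) (q ^ m))) :=
    tendsto_finsetProd _ fun i _ => tendsto_qPoch _ hqm
  refine tendsto_nhds_unique h1 (h2.congr fun N => ?_)
  rw [Finset.prod_comm]
  induction N with
  | zero => simp
  | succ N ih =>
    rw [Finset.prod_range_succ, ih, mul_add, mul_one, Finset.prod_range_add]
    congr 1
    refine Finset.prod_congr rfl fun i _ => ?_
    rw [pow_add, pow_mul]; ring

/-- finite `q`-factorial -/
noncomputable def P (p : ℂ) (n : ℕ) : ℂ := ∏ k ∈ Finset.range n, (1 - p * p ^ k)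

/-- reciprocal `q`-factorial, extended by zero -/
noncomputable def b (p : ℂ) (m : ℤ) : ℂ := if m < 0 then 0 else (P p m.toNat)⁻¹

lemma one_sub_ne {p : ℂ} (hp : ‖p‖ < 1) (k : ℕ) : 1 - p * p ^ k ≠ 0 := by
  intro h
  have h1 : p ^ (k + 1) = 1 := by rw [pow_succ]; linear_combination -h
  have h2 : ‖p ^ (k + 1)‖ < 1 := by
    rw [norm_pow]; exact pow_lt_one₀ (norm_nonneg _) hp (by simp)
  rw [h1] at h2
  simp at h2

lemma P_ne {p : ℂ} (hp : ‖p‖ < 1) (n : ℕ) : P p n ≠ 0 :=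
  Finset.prod_ne_zero_iff.mpr fun k _ => one_sub_ne hp k

lemma b_rec {p : ℂ} (hp : ‖p‖ < 1) (h0 : p ≠ 0) (m : ℤ) : b p m = (1 - p * p ^ m) * b p (m + 1) := by
  rcases lt_trichotomy m (-1) with h | h | h
  · simp [b, show m < 0 by omega, show m + 1 < 0 by omega]
  · subst h
    simp [b, h0]
  · obtain ⟨k, rfl⟩ := Int.eq_ofNat_of_zero_le (show 0 ≤ m by omega)
    have e : ((k : ℤ) + 1) = ((k + 1 : ℕ) : ℤ) := by push_cast; ring
    rw [e]
    simp only [b, Int.toNat_natCast, show ¬ ((k : ℤ) < 0) by omega,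
      show ¬ (((k + 1 : ℕ) : ℤ) < 0) by omega, if_false, zpow_natCast]
    have h1 := P_ne hp k
    have h2 := one_sub_ne hp k
    have h3 : P p (k + 1) = P p k * (1 - p * p ^ k) := Finset.prod_range_succ _ _
    rw [h3]
    field_simp

lemma summable_theta {r w : ℂ} (hr : ‖r‖ < 1) (hr0 : r ≠ 0) (hw : w ≠ 0) :
    Summable fun n : ℤ => ‖r ^ (n ^ 2) * w ^ n‖ := by
  have key : ∀ v : ℂ, v ≠ 0 → Summable fun n : ℕ => ‖r ^ (n ^ 2) * v ^ n‖ := by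
    intro v hv
    refine summable_of_ratio_test_tendsto_lt_one (l := 0) zero_lt_one ?_ ?_
    · exact Eventually.of_forall fun n => by simp [hr0, hv]
    · have : Tendsto (fun n : ℕ => ‖r‖ * ‖v‖ * (‖r‖ ^ 2) ^ n) atTop (𝓝 (‖r‖ * ‖v‖ * 0)) :=
        (tendsto_pow_atTop_nhds_zero_of_lt_one (by positivity)
          (pow_lt_one₀ (norm_nonneg _) hr two_ne_zero)).const_mul _
      rw [mul_zero] at this
      refine this.congr fun n => ?_
      have h1 : ‖r‖ ≠ 0 := by simpa using hr0
      have h2 : ‖v‖ ≠ 0 := by simpa using hv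
      simp only [norm_norm, norm_mul, norm_pow]
      rw [eq_div_iff (by positivity)]
      ring
  refine Summable.of_nat_of_neg ?_ ?_
  · refine (key w hw).congr fun n => ?_
    rw [zpow_natCast, ← Nat.cast_pow, zpow_natCast]
  · refine (key w⁻¹ (inv_ne_zero hw)).congr fun n => ?_
    rw [zpow_neg, zpow_natCast, neg_sq, ← Nat.cast_pow, zpow_natCast, inv_pow]

/-- theta series -/
noncomputable def Th (r w : ℂ) : ℂ := ∑' n : ℤ, r ^ (n ^ 2) * w ^ n

lemma hasSum_Th {r w : ℂ} (hr : ‖r‖ < 1) (hr0 : r ≠ 0) (hw : w ≠ 0) :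
    HasSum (fun n : ℤ => r ^ (n ^ 2) * w ^ n) (Th r w) :=
  (summable_theta hr hr0 hw).of_norm.hasSum

lemma finite_jtp {r w : ℂ} (hr : ‖r‖ < 1) (hr0 : r ≠ 0) (hw : w ≠ 0) (n : ℕ) :
    HasSum (fun j : ℤ => P (r ^ 2) (2 * n) * b (r ^ 2) (n + j) * b (r ^ 2) (n - j) *
        (r ^ (j ^ 2) * w ^ j))
      (∏ k ∈ Finset.range n, ((1 + w * r ^ (2 * k + 1)) * (1 + w⁻¹ * r ^ (2 * k + 1)))) := by
  have hp : ‖r ^ 2‖ < 1 := by rw [norm_pow]; exact pow_lt_one₀ (norm_nonneg _) hr two_ne_zero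
  induction n with
  | zero =>
    have := hasSum_single (f := fun j : ℤ => P (r ^ 2) (2 * 0) * b (r ^ 2) ((0 : ℕ) + j) *
        b (r ^ 2) ((0 : ℕ) - j) * (r ^ (j ^ 2) * w ^ j)) 0 ?_
    · simpa [P, b] using this
    · intro j hj
      rcases lt_or_gt_of_ne hj with h | h
      · simp [b, h]
      · simp [b, h]
  | succ n ih =>
    rw [Finset.prod_range_succ]
    have h0 := ih.mul_right (1 + r ^ (4 * n + 2))
    have h1 := ((Equiv.subRight (1 : ℤ)).hasSum_iff.mpr ih).mul_right (w * r ^ (2 * n + 1))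
    have h2 := ((Equiv.addRight (1 : ℤ)).hasSum_iff.mpr ih).mul_right (w⁻¹ * r ^ (2 * n + 1))
    have h3 := (h0.add h1).add h2
    have hF : ∀ F : ℂ, F * ((1 + w * r ^ (2 * n + 1)) * (1 + w⁻¹ * r ^ (2 * n + 1))) =
        F * (1 + r ^ (4 * n + 2)) + F * (w * r ^ (2 * n + 1)) + F * (w⁻¹ * r ^ (2 * n + 1)) := by
      intro F; field_simp; ring
    rw [hF]
    refine (hasSum_congr_fun fun j => ?_).mpr h3
    have hp0 : r ^ 2 ≠ 0 := pow_ne_zero _ hr0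
    simp only [Function.comp, Equiv.subRight_apply, Equiv.coe_addRight]
    have e1 : r ^ ((j - 1) ^ 2) * r ^ (2 * n + 1) =
        r ^ (j ^ 2) * (r ^ 2 * (r ^ 2) ^ ((n : ℤ) - j)) := by
      rw [← zpow_natCast r (2 * n + 1), ← zpow_natCast r 2, ← zpow_mul, ← zpow_add₀ hr0,
        ← zpow_add₀ hr0, ← zpow_add₀ hr0]
      congr 1; push_cast; ring
    have e2 : r ^ ((j + 1) ^ 2) * r ^ (2 * n + 1) =
        r ^ (j ^ 2) * (r ^ 2 * (r ^ 2) ^ ((n : ℤ) + j)) := by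
      rw [← zpow_natCast r (2 * n + 1), ← zpow_natCast r 2, ← zpow_mul, ← zpow_add₀ hr0,
        ← zpow_add₀ hr0, ← zpow_add₀ hr0]
      congr 1; push_cast; ring
    have e3 : (r ^ 2) ^ (2 * n) = (r ^ 2) ^ ((n : ℤ) + j) * (r ^ 2) ^ ((n : ℤ) - j) := by
      rw [← zpow_natCast (r ^ 2) (2 * n), ← zpow_add₀ hp0]
      congr 1; push_cast; ring
    have e4 : r ^ (4 * n + 2) = (r ^ 2) * (r ^ 2) ^ (2 * n) := by ring
    have w1 : w ^ (j - 1) * w = w ^ j := by rw [← zpow_add_one₀ hw]; congr 1; ring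
    have w2 : w ^ (j + 1) * w⁻¹ = w ^ j := by rw [← zpow_sub_one₀ hw]; congr 1; ring
    have hP : P (r ^ 2) (2 * (n + 1)) = P (r ^ 2) (2 * n) * (1 - r ^ 2 * (r ^ 2) ^ (2 * n)) *
        (1 - (r ^ 2) ^ 2 * (r ^ 2) ^ (2 * n)) := by
      rw [mul_add, mul_one, P, P, Finset.prod_range_succ, Finset.prod_range_succ]; ring
    have bM := b_rec hp hp0 (n + j)
    have bN := b_rec hp hp0 (n - j)
    have bM' := b_rec hp hp0 (n + (j - 1))
    have bN' := b_rec hp hp0 (n - (j + 1))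
    rw [show (n : ℤ) + (j - 1) + 1 = n + j by ring] at bM'
    rw [show (n : ℤ) - (j + 1) + 1 = n - j by ring] at bN'
    rw [show (n : ℤ) + (j - 1) = n + j - 1 by ring, zpow_sub_one₀ hp0] at bM'
    rw [show (n : ℤ) - (j + 1) = n - j - 1 by ring, zpow_sub_one₀ hp0] at bN'
    have bM2 : b (r ^ 2) (n + j - 1) = (1 - (r ^ 2) ^ ((n : ℤ) + j)) * b (r ^ 2) (n + j) := by
      rw [bM']; field_simp
    have bN2 : b (r ^ 2) (n - j - 1) = (1 - (r ^ 2) ^ ((n : ℤ) - j)) * b (r ^ 2) (n - j) := by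
      rw [bN']; field_simp
    rw [show ((n + 1 : ℕ) : ℤ) + j = n + j + 1 by push_cast; ring,
      show ((n + 1 : ℕ) : ℤ) - j = n - j + 1 by push_cast; ring,
      show (n : ℤ) + (j - 1) = n + j - 1 by ring, show (n : ℤ) - (j + 1) = n - j - 1 by ring,
      show (n : ℤ) + (j + 1) = n + j + 1 by ring, show (n : ℤ) - (j - 1) = n - j + 1 by ring]
    rw [bM2, bN2, bM, bN, hP, e4, e3]
    generalize b (r ^ 2) (n + j + 1) = β
    generalize b (r ^ 2) (n - j + 1) = γ
    generalize P (r ^ 2) (2 * n) = π at *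
    generalize (r ^ 2) ^ ((n : ℤ) + j) = s at *
    generalize (r ^ 2) ^ ((n : ℤ) - j) = t at *
    have E1 : r ^ ((j - 1) ^ 2) * w ^ (j - 1) * (w * r ^ (2 * n + 1)) =
        r ^ (j ^ 2) * w ^ j * (r ^ 2 * t) := by
      rw [← w1]; linear_combination (w ^ (j - 1) * w) * e1
    have E2 : r ^ ((j + 1) ^ 2) * w ^ (j + 1) * (w⁻¹ * r ^ (2 * n + 1)) =
        r ^ (j ^ 2) * w ^ j * (r ^ 2 * s) := by
      rw [← w2]; linear_combination (w ^ (j + 1) * w⁻¹) * e2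
    linear_combination (-(π * ((1 - s) * ((1 - r ^ 2 * s) * β)) * γ)) * E1 -
      (π * β * ((1 - t) * ((1 - r ^ 2 * t) * γ))) * E2

lemma tendsto_b {p : ℂ} (hp : ‖p‖ < 1) :
    Tendsto (fun n : ℕ => b p n) atTop (𝓝 (qPoch p p)⁻¹) := by
  have := (tendsto_qPoch p hp).inv₀ (qPoch_ne_zero hp hp)
  refine this.congr fun n => ?_
  simp [b, P]

lemma b_bound {p : ℂ} (hp : ‖p‖ < 1) : ∃ K : ℝ, 0 ≤ K ∧ ∀ m : ℤ, ‖b p m‖ ≤ K := by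
  obtain ⟨K, hK⟩ := (tendsto_b hp).norm.bddAbove_range
  have hK' : ∀ n : ℕ, ‖b p n‖ ≤ K := fun n => hK ⟨n, rfl⟩
  have h0 : 0 ≤ K := (norm_nonneg _).trans (hK' 0)
  refine ⟨K, h0, fun m => ?_⟩
  by_cases h : m < 0
  · simpa [b, h] using h0
  · obtain ⟨k, rfl⟩ := Int.eq_ofNat_of_zero_le (show 0 ≤ m by omega)
    exact hK' k

lemma jtp {r w : ℂ} (hr : ‖r‖ < 1) (hr0 : r ≠ 0) (hw : w ≠ 0) :
    Th r w = qPoch (r ^ 2) (r ^ 2) * qPoch (-(w * r)) (r ^ 2) * qPoch (-(w⁻¹ * r)) (r ^ 2) := by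
  have hp : ‖r ^ 2‖ < 1 := by rw [norm_pow]; exact pow_lt_one₀ (norm_nonneg _) hr two_ne_zero
  have hL := qPoch_ne_zero hp hp
  set L := qPoch (r ^ 2) (r ^ 2) with hLdef
  obtain ⟨K, hK0, hK⟩ := b_bound hp
  have hPt : Tendsto (fun n => P (r ^ 2) (2 * n)) atTop (𝓝 L) :=
    (tendsto_qPoch (r ^ 2) hp).comp (tendsto_id.const_mul_atTop' two_pos)
  obtain ⟨C, hC⟩ := hPt.norm.bddAbove_range
  have hC' : ∀ n : ℕ, ‖P (r ^ 2) (2 * n)‖ ≤ C := fun n => hC ⟨n, rfl⟩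
  have hC0 : 0 ≤ C := (norm_nonneg _).trans (hC' 0)
  have key := tendsto_tsum_of_dominated_convergence (𝓕 := atTop)
    (f := fun (n : ℕ) (j : ℤ) => P (r ^ 2) (2 * n) * b (r ^ 2) (n + j) * b (r ^ 2) (n - j) *
        (r ^ (j ^ 2) * w ^ j))
    (g := fun j : ℤ => L * L⁻¹ * L⁻¹ * (r ^ (j ^ 2) * w ^ j))
    (bound := fun j : ℤ => C * K * K * ‖r ^ (j ^ 2) * w ^ j‖)
    ((summable_theta hr hr0 hw).mul_left _) ?_ ?_
  · rw [tsum_mul_left] at key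
    have h2 : Tendsto (fun n => ∏ k ∈ Finset.range n,
        ((1 + w * r ^ (2 * k + 1)) * (1 + w⁻¹ * r ^ (2 * k + 1)))) atTop
        (𝓝 (qPoch (-(w * r)) (r ^ 2) * qPoch (-(w⁻¹ * r)) (r ^ 2))) := by
      refine ((tendsto_qPoch (-(w * r)) hp).mul (tendsto_qPoch (-(w⁻¹ * r)) hp)).congr fun n => ?_
      rw [← Finset.prod_mul_distrib]
      refine Finset.prod_congr rfl fun k _ => ?_
      rw [pow_succ r (2 * k), pow_mul]; ring
    have h3 := tendsto_nhds_unique (key.congr fun n => (finite_jtp hr hr0 hw n).tsum_eq) h2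
    rw [mul_assoc, ← h3, Th]
    field_simp
  · intro j
    have t1 : Tendsto (fun n : ℕ => b (r ^ 2) (n + j)) atTop (𝓝 L⁻¹) := by
      have := (tendsto_b hp).comp (g := fun n : ℕ => b (r ^ 2) n)
        (f := fun n : ℕ => ((n : ℤ) + j).toNat) (x := atTop) ?_
      · refine this.congr' ?_
        filter_upwards [eventually_ge_atTop j.natAbs] with n hn
        simp only [Function.comp]
        rw [Int.toNat_of_nonneg (by omega)]
      · refine tendsto_atTop.mpr fun m => ?_
        filter_upwards [eventually_ge_atTop (m + j.natAbs)] with n hn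
        omega
    have t2 : Tendsto (fun n : ℕ => b (r ^ 2) (n - j)) atTop (𝓝 L⁻¹) := by
      have := (tendsto_b hp).comp (g := fun n : ℕ => b (r ^ 2) n)
        (f := fun n : ℕ => ((n : ℤ) - j).toNat) (x := atTop) ?_
      · refine this.congr' ?_
        filter_upwards [eventually_ge_atTop j.natAbs] with n hn
        simp only [Function.comp]
        rw [Int.toNat_of_nonneg (by omega)]
      · refine tendsto_atTop.mpr fun m => ?_
        filter_upwards [eventually_ge_atTop (m + j.natAbs)] with n hn
        omega
    exact ((hPt.mul t1).mul t2).mul_const _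
  · refine Eventually.of_forall fun n j => ?_
    rw [norm_mul (_ * _), norm_mul (_ * _), norm_mul (P _ _)]
    gcongr
    · exact hC' n
    · exact hK _
    · exact hK _

lemma Th_shift {r w : ℂ} (hr0 : r ≠ 0) (hw : w ≠ 0) :
    Th r w = r * w * Th r (r ^ 2 * w) := by
  rw [Th, ← (Equiv.addRight (1 : ℤ)).tsum_eq, Th, ← tsum_mul_left]
  refine tsum_congr fun n => ?_
  simp only [Equiv.coe_addRight]
  rw [mul_zpow, zpow_add_one₀ hw, add_sq, zpow_add₀ hr0, zpow_add₀ hr0, ← zpow_natCast r 2,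
    ← zpow_mul]
  simp
  ring

lemma Th_inv (r w : ℂ) : Th r w⁻¹ = Th r w := by
  rw [Th, ← (Equiv.neg ℤ).tsum_eq, Th]
  refine tsum_congr fun n => ?_
  simp

lemma hasSum_parity (f : ℤ × ℤ → ℂ) (A B : ℂ)
    (h1 : HasSum (fun z : ℤ × ℤ => f (z.1 + z.2, z.1 - z.2)) A)
    (h2 : HasSum (fun z : ℤ × ℤ => f (z.1 + z.2 + 1, z.1 - z.2)) B) : HasSum f (A + B) := by
  let g1 : ℤ × ℤ → ℤ × ℤ := fun z => (z.1 + z.2, z.1 - z.2)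
  let g2 : ℤ × ℤ → ℤ × ℤ := fun z => (z.1 + z.2 + 1, z.1 - z.2)
  have i1 : Function.Injective g1 := by
    rintro ⟨a, b⟩ ⟨c, d⟩ h
    simp only [g1, Prod.mk.injEq] at h ⊢
    omega
  have i2 : Function.Injective g2 := by
    rintro ⟨a, b⟩ ⟨c, d⟩ h
    simp only [g2, Prod.mk.injEq] at h ⊢
    omega
  have hc : IsCompl (Set.range g1) (Set.range g2) := by
    refine IsCompl.of_eq ?_ ?_
    · ext ⟨m, n⟩
      simp only [g1, g2, Set.inf_eq_inter, Set.mem_inter_iff, Set.mem_range, Prod.exists,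
        Prod.mk.injEq, Set.bot_eq_empty, Set.mem_empty_iff_false, iff_false]
      rintro ⟨⟨a, b, h1, h2⟩, ⟨c, d, h3, h4⟩⟩
      omega
    · ext ⟨m, n⟩
      simp only [g1, g2, Set.sup_eq_union, Set.mem_union, Set.mem_range, Prod.exists,
        Prod.mk.injEq, Set.top_eq_univ, Set.mem_univ, iff_true]
      rcases Int.emod_two_eq_zero_or_one (m + n) with h | h
      · exact Or.inl ⟨(m + n) / 2, (m - n) / 2, by omega, by omega⟩
      · exact Or.inr ⟨(m + n - 1) / 2, (m - n - 1) / 2, by omega, by omega⟩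
  exact HasSum.add_isCompl hc (i1.hasSum_range_iff.mpr h1) (i2.hasSum_range_iff.mpr h2)

lemma term_even {r x y : ℂ} (hr0 : r ≠ 0) (hx : x ≠ 0) (hy : y ≠ 0) (a b : ℤ) :
    (r ^ ((a + b) ^ 2) * (x * y) ^ (a + b)) * (r ^ ((a - b) ^ 2) * (x / y) ^ (a - b)) =
      ((r ^ 2) ^ (a ^ 2) * (x ^ 2) ^ a) * ((r ^ 2) ^ (b ^ 2) * (y ^ 2) ^ b) := by
  have e1 : r ^ ((a + b) ^ 2) * r ^ ((a - b) ^ 2) = (r ^ 2) ^ (a ^ 2) * (r ^ 2) ^ (b ^ 2) := by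
    rw [← zpow_natCast r 2, ← zpow_mul, ← zpow_mul, ← zpow_add₀ hr0, ← zpow_add₀ hr0]
    congr 1; push_cast; ring
  have e2 : x ^ (a + b) * x ^ (a - b) = (x ^ 2) ^ a := by
    rw [← zpow_natCast x 2, ← zpow_mul, ← zpow_add₀ hx]
    congr 1; push_cast; ring
  have e3 : y ^ (a + b) / y ^ (a - b) = (y ^ 2) ^ b := by
    rw [← zpow_natCast y 2, ← zpow_mul, ← zpow_sub₀ hy]
    congr 1; push_cast; ring
  rw [mul_zpow, div_zpow]
  calc _ = (r ^ ((a + b) ^ 2) * r ^ ((a - b) ^ 2)) * (x ^ (a + b) * x ^ (a - b)) *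
        (y ^ (a + b) / y ^ (a - b)) := by ring
    _ = _ := by rw [e1, e2, e3]; ring

lemma term_odd {r x y : ℂ} (hr0 : r ≠ 0) (hx : x ≠ 0) (hy : y ≠ 0) (a b : ℤ) :
    (r ^ ((a + b + 1) ^ 2) * (x * y) ^ (a + b + 1)) * (r ^ ((a - b) ^ 2) * (x / y) ^ (a - b)) =
      r * x * y * (((r ^ 2) ^ (a ^ 2) * (r ^ 2 * x ^ 2) ^ a) *
        ((r ^ 2) ^ (b ^ 2) * (r ^ 2 * y ^ 2) ^ b)) := by
  have e1 : r ^ ((a + b + 1) ^ 2) * r ^ ((a - b) ^ 2) =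
      r * ((r ^ 2) ^ (a ^ 2) * (r ^ 2) ^ (b ^ 2)) * ((r ^ 2) ^ a * (r ^ 2) ^ b) := by
    nth_rewrite 3 [← zpow_one r]
    rw [← zpow_natCast r 2, ← zpow_mul, ← zpow_mul, ← zpow_mul, ← zpow_mul, ← zpow_add₀ hr0,
      ← zpow_add₀ hr0, ← zpow_add₀ hr0, ← zpow_add₀ hr0, ← zpow_add₀ hr0]
    congr 1; push_cast; ring
  have e2 : x ^ (a + b + 1) * x ^ (a - b) = x * (x ^ 2) ^ a := by
    nth_rewrite 3 [← zpow_one x]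
    rw [← zpow_natCast x 2, ← zpow_mul, ← zpow_add₀ hx, ← zpow_add₀ hx]
    congr 1; push_cast; ring
  have e3 : y ^ (a + b + 1) / y ^ (a - b) = y * (y ^ 2) ^ b := by
    nth_rewrite 3 [← zpow_one y]
    rw [← zpow_natCast y 2, ← zpow_mul, ← zpow_sub₀ hy, ← zpow_add₀ hy]
    congr 1; push_cast; ring
  rw [mul_zpow, div_zpow, mul_zpow (r ^ 2), mul_zpow (r ^ 2)]
  calc _ = (r ^ ((a + b + 1) ^ 2) * r ^ ((a - b) ^ 2)) * (x ^ (a + b + 1) * x ^ (a - b)) *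
        (y ^ (a + b + 1) / y ^ (a - b)) := by ring
    _ = _ := by rw [e1, e2, e3]; ring

lemma Th_prod {s a c : ℂ} (hs : ‖s‖ < 1) (hs0 : s ≠ 0) (ha : a ≠ 0) (hc : c ≠ 0) :
    HasSum (fun z : ℤ × ℤ => (s ^ (z.1 ^ 2) * a ^ z.1) * (s ^ (z.2 ^ 2) * c ^ z.2))
      (Th s a * Th s c) := by
  have h1 := summable_theta hs hs0 ha
  have h2 := summable_theta hs hs0 hc
  have h3 := summable_mul_of_summable_norm h1 h2
  have h4 := tsum_mul_tsum_of_summable_norm h1 h2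
  rw [Th, Th, h4]
  exact h3.hasSum

lemma Th_mul {r x y : ℂ} (hr : ‖r‖ < 1) (hr0 : r ≠ 0) (hx : x ≠ 0) (hy : y ≠ 0) :
    Th r (x * y) * Th r (x / y) = Th (r ^ 2) (x ^ 2) * Th (r ^ 2) (y ^ 2) +
      r * x * y * (Th (r ^ 2) (r ^ 2 * x ^ 2) * Th (r ^ 2) (r ^ 2 * y ^ 2)) := by
  have hp : ‖r ^ 2‖ < 1 := by rw [norm_pow]; exact pow_lt_one₀ (norm_nonneg _) hr two_ne_zero
  have hp0 : r ^ 2 ≠ 0 := pow_ne_zero _ hr0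
  have hx2 : x ^ 2 ≠ 0 := pow_ne_zero 2 hx
  have hy2 : y ^ 2 ≠ 0 := pow_ne_zero 2 hy
  have hL := Th_prod hr hr0 (mul_ne_zero hx hy) (div_ne_zero hx hy)
  have hE := Th_prod hp hp0 hx2 hy2
  have hO := (Th_prod hp hp0 (mul_ne_zero hp0 hx2) (mul_ne_zero hp0 hy2)).mul_left (r * x * y)
  have h1 := (hasSum_congr_fun fun z : ℤ × ℤ => term_even hr0 hx hy z.1 z.2).mpr hE
  have h2 := (hasSum_congr_fun fun z : ℤ × ℤ => term_odd hr0 hx hy z.1 z.2).mpr hO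
  have h3 := hasSum_parity (fun z : ℤ × ℤ => (r ^ (z.1 ^ 2) * (x * y) ^ z.1) *
    (r ^ (z.2 ^ 2) * (x / y) ^ z.2)) _ _ h1 h2
  exact HasSum.unique hL h3

/-- The odd companion of the theta series. -/
noncomputable def Od (r x : ℂ) : ℂ := x * Th (r ^ 2) (r ^ 2 * x ^ 2)

lemma Th_D {r x y : ℂ} (hr : ‖r‖ < 1) (hr0 : r ≠ 0) (hx : x ≠ 0) (hy : y ≠ 0) :
    Th r (-(x * y / r)) * Th r (-(x / y / r)) =
      x * (Od r x * Th (r ^ 2) (y ^ 2) - Th (r ^ 2) (x ^ 2) * Od r y) := by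
  have h := Th_mul hr hr0 (x := -x / r) (div_ne_zero (neg_ne_zero.mpr hx) hr0) hy
  rw [show -(x * y / r) = -x / r * y by ring, show -(x / y / r) = -x / r / y by field_simp, h]
  have h1 : Th (r ^ 2) ((-x / r) ^ 2) = x * Od r x := by
    rw [Th_shift (pow_ne_zero 2 hr0) (pow_ne_zero 2 (div_ne_zero (neg_ne_zero.mpr hx) hr0)), Od,
      show (r ^ 2) ^ 2 * (-x / r) ^ 2 = r ^ 2 * x ^ 2 by field_simp]
    field_simp
  have h2 : r ^ 2 * (-x / r) ^ 2 = x ^ 2 := by field_simp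
  rw [h1, h2, Od, Od]
  field_simp
  ring

lemma weierstrass {r x y u v : ℂ} (hr : ‖r‖ < 1) (hr0 : r ≠ 0) (hx : x ≠ 0) (hy : y ≠ 0)
    (hu : u ≠ 0) (hv : v ≠ 0) :
    (Th r (-(x * y / r)) * Th r (-(x / y / r))) * (Th r (-(u * v / r)) * Th r (-(u / v / r))) =
    (Th r (-(x * v / r)) * Th r (-(x / v / r))) * (Th r (-(u * y / r)) * Th r (-(u / y / r))) +
    u / y * ((Th r (-(y * v / r)) * Th r (-(y / v / r))) *
      (Th r (-(x * u / r)) * Th r (-(x / u / r)))) := by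
  rw [Th_D hr hr0 hx hy, Th_D hr hr0 hu hv, Th_D hr hr0 hx hv, Th_D hr hr0 hu hy,
    Th_D hr hr0 hy hv, Th_D hr hr0 hx hu]
  field_simp
  ring

lemma c_dissection (q : ℂ) (hq : ‖q‖ < 1) (hq0 : q ≠ 0) :
    c q = q * c (q ^ 4) + 3 * qPoch (q ^ 4) (q ^ 4) ^ 3 * qPoch (q ^ 6) (q ^ 6) ^ 2 /
          (qPoch (q ^ 2) (q ^ 2) ^ 2 * qPoch (q ^ 12) (q ^ 12)) := by
  have hn : ∀ k : ℕ, k ≠ 0 → ‖q ^ k‖ < 1 := fun k hk => by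
    rw [norm_pow]; exact pow_lt_one₀ (norm_nonneg _) hq hk
  have hr := hn 6 (by norm_num)
  have hr0 : q ^ 6 ≠ 0 := pow_ne_zero _ hq0
  have T : ∀ k l : ℕ, k + l = 12 → ∀ z : ℂ, z = q ^ k → Th (q ^ 6) (-(z / q ^ 6)) =
      qPoch (q ^ 12) (q ^ 12) * qPoch (q ^ k) (q ^ 12) * qPoch (q ^ l) (q ^ 12) := by
    rintro k l hkl z rfl
    have hk0 : q ^ k ≠ 0 := pow_ne_zero _ hq0
    rw [jtp hr hr0 (neg_ne_zero.mpr (div_ne_zero hk0 hr0))]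
    have e1 : -(-(q ^ k / q ^ 6) * q ^ 6) = q ^ k := by field_simp
    have e2 : -((-(q ^ k / q ^ 6))⁻¹ * q ^ 6) = q ^ l := by
      rw [inv_neg, inv_div]
      field_simp
      rw [← pow_add, hkl]
    rw [e1, e2, ← pow_mul]
  have W := weierstrass hr hr0 (x := q ^ 4) (y := q ^ 2) (u := q ^ 3) (v := 1)
    (pow_ne_zero _ hq0) (pow_ne_zero _ hq0) (pow_ne_zero _ hq0) one_ne_zero
  rw [T 6 6 rfl (q ^ 4 * q ^ 2) (by ring), T 2 10 rfl (q ^ 4 / q ^ 2) (by field_simp),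
    T 3 9 rfl (q ^ 3 * 1) (by ring), T 3 9 rfl (q ^ 3 / 1) (by ring),
    T 4 8 rfl (q ^ 4 * 1) (by ring), T 4 8 rfl (q ^ 4 / 1) (by ring),
    T 5 7 rfl (q ^ 3 * q ^ 2) (by ring), T 1 11 rfl (q ^ 3 / q ^ 2) (by field_simp),
    T 2 10 rfl (q ^ 2 * 1) (by ring), T 2 10 rfl (q ^ 2 / 1) (by ring),
    T 7 5 rfl (q ^ 4 * q ^ 3) (by ring), T 1 11 rfl (q ^ 4 / q ^ 3) (by field_simp),
    show q ^ 3 / q ^ 2 = q by field_simp] at W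
  have S : ∀ d m : ℕ, d ≠ 0 → 0 < m → d * m = 12 → qPoch (q ^ d) (q ^ d) =
      ∏ i ∈ Finset.range m, qPoch (q ^ (d * (i + 1))) (q ^ 12) := by
    intro d m hd hm h
    rw [qPoch_split _ (hn d hd) m hm]
    refine Finset.prod_congr rfl fun i _ => ?_
    rw [← pow_mul, ← pow_mul, ← pow_add, h]
    congr 2; ring
  have S1 := S 1 12 (by norm_num) (by norm_num) rfl
  have S2 := S 2 6 (by norm_num) (by norm_num) rfl
  have S3 := S 3 4 (by norm_num) (by norm_num) rfl
  have S4 := S 4 3 (by norm_num) (by norm_num) rfl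
  have S6 := S 6 2 (by norm_num) (by norm_num) rfl
  rw [pow_one] at S1
  simp only [Finset.prod_range_succ, Finset.prod_range_zero, one_mul] at S1 S2 S3 S4 S6
  norm_num only at S1 S2 S3 S4 S6
  have X : ∀ k : ℕ, k ≠ 0 → qPoch (q ^ k) (q ^ 12) ≠ 0 := fun k hk =>
    qPoch_ne_zero (hn k hk) (hn 12 (by norm_num))
  have x1 := X 1 (by norm_num)
  have x2 := X 2 (by norm_num)
  have x3 := X 3 (by norm_num)
  have x4 := X 4 (by norm_num)
  have x5 := X 5 (by norm_num)
  have x6 := X 6 (by norm_num)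
  have x7 := X 7 (by norm_num)
  have x8 := X 8 (by norm_num)
  have x9 := X 9 (by norm_num)
  have x10 := X 10 (by norm_num)
  have x11 := X 11 (by norm_num)
  have x12 := X 12 (by norm_num)
  have p1 : (q ^ 4) ^ 3 = q ^ 12 := by ring
  rw [c, c, p1, S1, S2, S3, S4, S6]
  generalize qPoch (q ^ 1) (q ^ 12) = y1 at *
  generalize qPoch (q ^ 2) (q ^ 12) = y2 at *
  generalize qPoch (q ^ 3) (q ^ 12) = y3 at *
  generalize qPoch (q ^ 4) (q ^ 12) = y4 at *
  generalize qPoch (q ^ 5) (q ^ 12) = y5 at *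
  generalize qPoch (q ^ 6) (q ^ 12) = y6 at *
  generalize qPoch (q ^ 7) (q ^ 12) = y7 at *
  generalize qPoch (q ^ 8) (q ^ 12) = y8 at *
  generalize qPoch (q ^ 9) (q ^ 12) = y9 at *
  generalize qPoch (q ^ 10) (q ^ 12) = y10 at *
  generalize qPoch (q ^ 11) (q ^ 12) = y11 at *
  generalize qPoch (q ^ 12) (q ^ 12) = y12 at *
  clear S1 S2 S3 S4 S6 S X T hn
  have W' : y6 ^ 2 * y2 * y10 * (y3 * y9) ^ 2 =
      (y4 * y8) ^ 2 * (y5 * y7 * y1 * y11) + q * ((y2 * y10) ^ 2 * (y5 * y7 * y1 * y11)) := by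
    have : y12 ^ 4 ≠ 0 := pow_ne_zero _ x12
    refine mul_left_cancel₀ this ?_
    linear_combination W
  field_simp
  linear_combination W'

end CSq

theorem c_sq_two_dissection (q : ℂ) (hq : ‖q‖ < 1) :
    c q ^ 2 =
      (q ^ 2 * c (q ^ 4) ^ 2 +
          9 * qPoch (q ^ 4) (q ^ 4) ^ 6 * qPoch (q ^ 6) (q ^ 6) ^ 4 /
            (qPoch (q ^ 2) (q ^ 2) ^ 4 * qPoch (q ^ 12) (q ^ 12) ^ 2)) +
        6 * q * c (q ^ 4) * qPoch (q ^ 4) (q ^ 4) ^ 3 * qPoch (q ^ 6) (q ^ 6) ^ 2 /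
          (qPoch (q ^ 2) (q ^ 2) ^ 2 * qPoch (q ^ 12) (q ^ 12)) := by
  by_cases hq0 : q = 0
  · subst hq0
    have h : qPoch 0 0 = 1 := by simp [qPoch]
    norm_num [c, h]
  · rw [CSq.c_dissection q hq hq0]
    ring
end
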